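/- Let G be an internally 4-connected nonplanar graph that is {K5+, K33+, K5h, K33h}-free. Then G is isomorphic to M_n, C²_{2n+1}, DW_n, or AW_{2n} for some n ≥ 3. -/

import Mathlib

open SimpleGraph

/-- `H` is a minor of `G` (branch-set / model definition). -/
def IsMinor {W V : Type*} (H : SimpleGraph W) (G : SimpleGraph V) : Prop :=
  ∃ B : W → Set V,
    (∀ w, (B w).Nonempty) ∧
    (∀ w, (G.induce (B w)).Connected) ∧
    (Pairwise fun w₁ w₂ => Disjoint (B w₁) (B w₂)) ∧
    (∀ ⦃w₁ w₂ : W⦄, H.Adj w₁ w₂ → ∃ v₁ ∈ B w₁, ∃ v₂ ∈ B w₂, G.Adj v₁ v₂)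

def K5 : SimpleGraph (Fin 5) := ⊤

def K33 : SimpleGraph (Fin 3 ⊕ Fin 3) := completeBipartiteGraph (Fin 3) (Fin 3)

/-- A graph is planar iff it has neither a `K₅` nor a `K₃,₃` minor (Wagner's theorem). -/
def Planar {V : Type*} (G : SimpleGraph V) : Prop := ¬ IsMinor K5 G ∧ ¬ IsMinor K33 G

/-- `G / uw`: contract the edge `uw`, merging `w` into `u` (the vertex `w` becomes isolated). -/
def contractEdge {V : Type*} (G : SimpleGraph V) (u w : V) : SimpleGraph V :=
  SimpleGraph.fromRel fun a b =>
    a ≠ w ∧ b ≠ w ∧ (G.Adj a b ∨ (a = u ∧ G.Adj w b) ∨ (b = u ∧ G.Adj a w))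

/-- A nonplanar graph is almost-planar if for every edge, deletion or contraction is planar. -/
def AlmostPlanar {V : Type*} (G : SimpleGraph V) : Prop :=
  ¬ Planar G ∧ ∀ ⦃u v : V⦄, G.Adj u v →
    (Planar (G.deleteEdges {s(u, v)}) ∨ Planar (contractEdge G u v))

/-- `G` is `k`-connected: more than `k` vertices and deleting fewer than `k` vertices
leaves a connected graph. -/
def KConnected {V : Type*} (G : SimpleGraph V) (k : ℕ) : Prop :=
  k < Nat.card V ∧ ∀ s : Set V, s.ncard < k → (G.induce (sᶜ)).Connected

/-- `{G[A], G[B]}` is a `k`-separation of `G`. -/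
def IsSep {V : Type*} (G : SimpleGraph V) (k : ℕ) (A B : Set V) : Prop :=
  A ∪ B = Set.univ ∧ A ≠ Set.univ ∧ B ≠ Set.univ ∧ (A ∩ B).ncard = k ∧
  ∀ ⦃x y : V⦄, G.Adj x y → (x ∈ A ∧ y ∈ A) ∨ (x ∈ B ∧ y ∈ B)

/-- The star `K_{1,3}`, with centre `0`. -/
def K13 : SimpleGraph (Fin 4) := SimpleGraph.fromRel fun a _ => a = 0

def InternallyFourConnected {V : Type*} (G : SimpleGraph V) : Prop :=
  KConnected G 3 ∧ 5 ≤ Nat.card V ∧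
  ∀ A B : Set V, IsSep G 3 A B →
    Xor' (Nonempty (G.induce A ≃g K13)) (Nonempty (G.induce B ≃g K13))

/-- The wheel `W_n`: a cycle of length `n` plus a hub (`none`) joined to all of it. -/
def wheelGraph (n : ℕ) : SimpleGraph (Option (Fin n)) :=
  SimpleGraph.fromRel fun a b =>
    match a, b with
    | some i, some j => j.val = (i.val + 1) % n
    | none, some _ => True
    | _, _ => False

def IsWheel {V : Type*} (G : SimpleGraph V) : Prop :=
  ∃ n, 3 ≤ n ∧ Nonempty (G ≃g wheelGraph n)

/-- The double wheel `DW_n`: a cycle of length `n` plus two adjacent hubs joined to all of it. -/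
def doubleWheel (n : ℕ) : SimpleGraph (Fin n ⊕ Fin 2) :=
  SimpleGraph.fromRel fun a b =>
    match a, b with
    | .inl i, .inl j => j.val = (i.val + 1) % n
    | .inl _, .inr _ => True
    | .inr _, .inr _ => True
    | _, _ => False

/-- The Möbius ladder `M_n`: a cycle of length `2n` plus all "opposite" chords. -/
def mobiusLadder (n : ℕ) : SimpleGraph (Fin (2 * n)) :=
  SimpleGraph.fromRel fun i j =>
    j.val = (i.val + 1) % (2 * n) ∨ j.val = (i.val + n) % (2 * n)

/-- `C²_m`: a cycle of length `m` plus all chords between vertices at distance two. -/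
def squareCycle (m : ℕ) : SimpleGraph (Fin m) :=
  SimpleGraph.fromRel fun i j =>
    j.val = (i.val + 1) % m ∨ j.val = (i.val + 2) % m

/-- The alternating double wheel `AW_{2n}`: a cycle of length `2n` plus two adjacent hubs,
each joined to alternating cycle vertices. -/
def altDoubleWheel (n : ℕ) : SimpleGraph (Fin (2 * n) ⊕ Fin 2) :=
  SimpleGraph.fromRel fun a b =>
    match a, b with
    | .inl i, .inl j => j.val = (i.val + 1) % (2 * n)
    | .inl i, .inr k => i.val % 2 = k.val
    | .inr _, .inr _ => True
    | _, _ => False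

/-- The class `𝒲`: three wheels glued along a common triangle `V₀`, with no other edges. -/
def InClassW {V : Type*} (G : SimpleGraph V) : Prop :=
  ∃ P : V → Fin 4,
    (P ⁻¹' {0}).ncard = 3 ∧
    (∀ x y : V, P x = 0 → P y = 0 → x ≠ y → G.Adj x y) ∧
    (∀ i : Fin 4, i ≠ 0 → IsWheel (G.induce {v | P v = 0 ∨ P v = i})) ∧
    (∀ ⦃x y : V⦄, G.Adj x y → ∃ i : Fin 4, i ≠ 0 ∧ (P x = 0 ∨ P x = i) ∧ (P y = 0 ∨ P y = i))

/-- `EX₁`: `K₃,₃` plus a vertex joined to all of one colour class. -/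
def EX1 : SimpleGraph (Option (Fin 3 ⊕ Fin 3)) :=
  SimpleGraph.fromRel fun a b =>
    match a, b with
    | some (.inl _), some (.inr _) => True
    | none, some (.inl _) => True
    | _, _ => False

/-- `EX₂`: `K₅` plus a vertex joined to three of its vertices. -/
def EX2 : SimpleGraph (Option (Fin 5)) :=
  SimpleGraph.fromRel fun a b =>
    match a, b with
    | some i, some j => i ≠ j
    | none, some j => j.val < 3
    | _, _ => False

/-- `EX₈`: `K₃,₃` plus a vertex joined to two vertices of one class and one of the other. -/
def EX8 : SimpleGraph (Option (Fin 3 ⊕ Fin 3)) :=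
  SimpleGraph.fromRel fun a b =>
    match a, b with
    | some (.inl _), some (.inr _) => True
    | none, some x => x = Sum.inl 0 ∨ x = Sum.inl 1 ∨ x = Sum.inr 0
    | _, _ => False

/-- `K₅ʰ`: subdivide the edges `01` and `02` of `K₅` and join the two subdivision vertices. -/
def K5h : SimpleGraph (Fin 5 ⊕ Fin 2) :=
  SimpleGraph.fromRel fun a b =>
    match a, b with
    | .inl i, .inl j =>
        i ≠ j ∧ ¬(i = 0 ∧ j = 1) ∧ ¬(i = 1 ∧ j = 0) ∧ ¬(i = 0 ∧ j = 2) ∧ ¬(i = 2 ∧ j = 0)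
    | .inl i, .inr k => (k = 0 ∧ (i = 0 ∨ i = 1)) ∨ (k = 1 ∧ (i = 0 ∨ i = 2))
    | .inr _, .inr _ => True
    | _, _ => False

/-- `K₃,₃ʰ`: subdivide two edges of `K₃,₃` at a common endpoint and join
the two subdivision vertices. -/
def K33h : SimpleGraph ((Fin 3 ⊕ Fin 3) ⊕ Fin 2) :=
  SimpleGraph.fromRel fun a b =>
    match a, b with
    | .inl (.inl i), .inl (.inr j) => ¬(i = 0 ∧ (j = 0 ∨ j = 1))
    | .inl (.inr j), .inl (.inl i) => ¬(i = 0 ∧ (j = 0 ∨ j = 1))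
    | .inl x, .inr k =>
        (k = 0 ∧ (x = Sum.inl 0 ∨ x = Sum.inr 0)) ∨ (k = 1 ∧ (x = Sum.inl 0 ∨ x = Sum.inr 1))
    | .inr _, .inr _ => True
    | _, _ => False

/-- `K₅⁺`: `K₅` plus a pendant vertex. -/
def K5plus : SimpleGraph (Option (Fin 5)) :=
  SimpleGraph.fromRel fun a b =>
    match a, b with
    | some i, some j => i ≠ j
    | none, some j => j = 0
    | _, _ => False

/-- `K₃,₃⁺`: `K₃,₃` plus a pendant vertex. -/
def K33plus : SimpleGraph (Option (Fin 3 ⊕ Fin 3)) :=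
  SimpleGraph.fromRel fun a b =>
    match a, b with
    | some (.inl _), some (.inr _) => True
    | none, some x => x = Sum.inl 0
    | _, _ => False

/-- `K₅ ⊕ e`: disjoint union of `K₅` and one edge. -/
def K5oplus : SimpleGraph (Fin 5 ⊕ Fin 2) :=
  SimpleGraph.fromRel fun a b =>
    match a, b with
    | .inl i, .inl j => i ≠ j
    | .inr _, .inr _ => True
    | _, _ => False

/-- `K₃,₃ ⊕ e`: disjoint union of `K₃,₃` and one edge. -/
def K33oplus : SimpleGraph ((Fin 3 ⊕ Fin 3) ⊕ Fin 2) :=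
  SimpleGraph.fromRel fun a b =>
    match a, b with
    | .inl (.inl _), .inl (.inr _) => True
    | .inr _, .inr _ => True
    | _, _ => False

/-- The triad addition of `H` at `x y z`: add a new vertex joined to `x`, `y`, `z`. -/
def triadAddition {U : Type*} (H : SimpleGraph U) (x y z : U) : SimpleGraph (Option U) :=
  SimpleGraph.fromRel fun a b =>
    match a, b with
    | some u, some v => H.Adj u v
    | none, some u => u = x ∨ u = y ∨ u = z
    | _, _ => False

def IsTriadAdditionOf {V U : Type*} (G : SimpleGraph V) (H : SimpleGraph U) : Prop :=
  ∃ x y z : U, x ≠ y ∧ y ≠ z ∧ x ≠ z ∧ Nonempty (G ≃g triadAddition H x y z)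

/-- `G` is obtained from `H` by subdividing (possibly repeatedly) edges of `H`,
all of which lie in `S`. -/
def IsSubdivisionWithin {V W : Type*} (G : SimpleGraph V) (H : SimpleGraph W)
    (S : Set (Sym2 W)) : Prop :=
  ∃ (f : W ↪ V) (p : ∀ ⦃u v : W⦄, H.Adj u v → G.Walk (f u) (f v)),
    (∀ ⦃u v : W⦄ (h : H.Adj u v), (p h).IsPath) ∧
    (∀ ⦃u v : W⦄ (h : H.Adj u v), p h.symm = (p h).reverse) ∧
    (∀ ⦃u v : W⦄ (h : H.Adj u v), s(u, v) ∉ S → (p h).length = 1) ∧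
    (∀ ⦃u v : W⦄ (h : H.Adj u v) (w : W), f w ∈ (p h).support → w = u ∨ w = v) ∧
    (∀ ⦃u v u' v' : W⦄ (h : H.Adj u v) (h' : H.Adj u' v'), s(u, v) ≠ s(u', v') →
      ∀ x : V, x ∈ (p h).support → x ∈ (p h').support → x ∈ Set.range f) ∧
    (∀ x : V, x ∈ Set.range f ∨ ∃ (u v : W) (h : H.Adj u v), x ∈ (p h).support) ∧
    (∀ e ∈ G.edgeSet, ∃ (u v : W) (h : H.Adj u v), e ∈ (p h).edges)

/-- `G` is a subdivision of `H`. -/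
def IsSubdivision {V W : Type*} (G : SimpleGraph V) (H : SimpleGraph W) : Prop :=
  IsSubdivisionWithin G H Set.univ

/-- `D(H)`: the set of edges of `H` whose deletion leaves a planar graph. -/
def Dset {U : Type*} (H : SimpleGraph U) : Set (Sym2 U) :=
  {e | e ∈ H.edgeSet ∧ Planar (H.deleteEdges {e})}

/-- `G[A]` together with all edges between vertices of `T` (`T ⊆ A` intended). -/
def deltaGraph {V : Type*} (G : SimpleGraph V) (A T : Set V) : SimpleGraph A :=
  SimpleGraph.fromRel fun a b => G.Adj a.1 b.1 ∨ (a.1 ∈ T ∧ b.1 ∈ T)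

/-- `G[A]^Y` for the separation `{G[A], G[B]}`: add a new vertex joined to `A ∩ B`. -/
def sepY {V : Type*} (G : SimpleGraph V) (A B : Set V) : SimpleGraph (Option A) :=
  SimpleGraph.fromRel fun x y =>
    match x, y with
    | some a, some b => G.Adj a.1 b.1
    | none, some a => a.1 ∈ A ∩ B
    | _, _ => False

/-- `G₂` is obtained from `G` by adding isolated vertices. -/
def AddIsolated {V₂ V : Type*} (G₂ : SimpleGraph V₂) (G : SimpleGraph V) : Prop :=
  ∃ f : V ↪ V₂, (∀ a b : V, G₂.Adj (f a) (f b) ↔ G.Adj a b) ∧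
    ∀ x : V₂, x ∉ Set.range f → ∀ y : V₂, ¬ G₂.Adj x y

/-- The set of non-isolated vertices of `G` (so `G* = G.induce (core G)`). -/
def core {V : Type*} (G : SimpleGraph V) : Set V := {v | ∃ w, G.Adj v w}

/-- `G` is obtained from `G'` by 3-summing wheels onto distinct triangles of `G'`. -/
def SumWheelsOnto {V U : Type*} (G : SimpleGraph V) (G' : SimpleGraph U) : Prop :=
  ∃ (g : U ↪ V) (k : ℕ) (Wp : Fin k → Set V) (T : Fin k → Set U),
    (∀ i, (T i).ncard = 3) ∧
    (∀ i, ∀ x ∈ T i, ∀ y ∈ T i, x ≠ y → G'.Adj x y) ∧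
    Function.Injective T ∧
    (∀ i, Disjoint (Wp i) (Set.range ⇑g)) ∧
    (Pairwise fun i j => Disjoint (Wp i) (Wp j)) ∧
    (Set.range ⇑g ∪ ⋃ i, Wp i) = Set.univ ∧
    (∀ i, IsWheel (deltaGraph G (Wp i ∪ ⇑g '' T i) (⇑g '' T i))) ∧
    (∀ a b : U, G.Adj (g a) (g b) → G'.Adj a b) ∧
    (∀ a b : U, G'.Adj a b → (G.Adj (g a) (g b) ∨ ∃ i, a ∈ T i ∧ b ∈ T i)) ∧
    (∀ ⦃x y : V⦄, G.Adj x y → (x ∈ Set.range ⇑g ∧ y ∈ Set.range ⇑g) ∨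
      ∃ i, x ∈ Wp i ∪ ⇑g '' T i ∧ y ∈ Wp i ∪ ⇑g '' T i) ∧
    (∀ i, ∀ x ∈ Wp i, ∀ ⦃y : V⦄, G.Adj x y → y ∈ Wp i ∪ ⇑g '' T i)

/-- `H` has an edge whose deletion and contraction are both nonplanar. -/
def HasBadEdge {V : Type*} (H : SimpleGraph V) : Prop :=
  ∃ u v : V, H.Adj u v ∧ ¬ Planar (H.deleteEdges {s(u, v)}) ∧ ¬ Planar (contractEdge H u v)

/-- What we use about `G`. -/
structure Good {V : Type*} (G : SimpleGraph V) : Prop where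
  conn : G.Connected
  card : 5 ≤ Nat.card V
  deg : ∀ v x y, ∃ z, G.Adj v z ∧ z ≠ x ∧ z ≠ y
  tri : ∀ v x y z, G.Adj v x → G.Adj v y → G.Adj x y →
    ∃ w, G.Adj v w ∧ w ≠ x ∧ w ≠ y ∧ w ≠ z
  nK5p : ¬ IsMinor K5plus G
  nK33p : ¬ IsMinor K33plus G
  nK5h : ¬ IsMinor K5h G
  nK33h : ¬ IsMinor K33h G

theorem K13_triangle_free (a b c : Fin 4) (h1 : K13.Adj a b) (h2 : K13.Adj a c)
    (h3 : K13.Adj b c) : False := by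
  simp only [K13, SimpleGraph.fromRel_adj] at h1 h2 h3
  revert a b c
  decide

theorem iso_K13_triangle {V : Type*} (G : SimpleGraph V) (A : Set V)
    (h : Nonempty (G.induce A ≃g K13)) (x y z : V) (hx : x ∈ A) (hy : y ∈ A) (hz : z ∈ A)
    (h1 : G.Adj x y) (h2 : G.Adj x z) (h3 : G.Adj y z) : False := by
  obtain ⟨f⟩ := h
  refine K13_triangle_free (f ⟨x, hx⟩) (f ⟨y, hy⟩) (f ⟨z, hz⟩) ?_ ?_ ?_ <;>
    rw [f.map_adj_iff] <;> simpa

theorem exists_adj_of_connected {V : Type*} (G : SimpleGraph V) (h : G.Preconnected) (v w : V)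
    (hvw : v ≠ w) : ∃ z, G.Adj v z := by
  obtain ⟨p⟩ := h v w
  cases p with
  | nil => exact absurd rfl hvw
  | cons h _ => exact ⟨_, h⟩

theorem exists_not_mem_finset {V : Type*} [Fintype V] (s : Finset V) (h : s.card < Nat.card V) :
    ∃ w, w ∉ s := by
  by_contra hc
  push Not at hc
  have : s = Finset.univ := Finset.eq_univ_iff_forall.2 hc
  rw [this, Nat.card_eq_fintype_card, Finset.card_univ] at h
  omega

theorem i4c_deg {V : Type*} [Fintype V] (G : SimpleGraph V)
    (h4 : InternallyFourConnected G) (v x y : V) : ∃ z, G.Adj v z ∧ z ≠ x ∧ z ≠ y := by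
  classical
  obtain ⟨⟨hc, hk⟩, h5, -⟩ := h4
  let s : Set V := {x, y} \ {v}
  have hs : s.ncard < 3 := by
    calc s.ncard ≤ ({x, y} : Set V).ncard := Set.ncard_le_ncard Set.sdiff_subset (Set.toFinite _)
      _ ≤ 2 := by
        refine (Set.ncard_insert_le _ _).trans ?_
        simp
      _ < 3 := by norm_num
  have hcon := hk s hs
  obtain ⟨w, hw⟩ := exists_not_mem_finset ({v, x, y} : Finset V)
    (lt_of_le_of_lt Finset.card_le_three (by omega))
  simp only [Finset.mem_insert, Finset.mem_singleton, not_or] at hw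
  obtain ⟨⟨z, hz⟩, hadj⟩ := exists_adj_of_connected _ hcon.preconnected
    ⟨v, by simp [s]⟩ ⟨w, by simp [s, hw]⟩ (by simpa using fun h => hw.1 h.symm)
  refine ⟨z, by simpa using hadj, ?_⟩
  have hne : z ≠ v := by rintro rfl; simp at hadj
  simp [s] at hz
  constructor <;> rintro rfl <;> simp_all

theorem i4c_tri {V : Type*} [Fintype V] (G : SimpleGraph V)
    (h4 : InternallyFourConnected G) (v x y z : V) (hvx : G.Adj v x) (hvy : G.Adj v y)
    (hxy : G.Adj x y) : ∃ w, G.Adj v w ∧ w ≠ x ∧ w ≠ y ∧ w ≠ z := by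
  classical
  by_contra hcon
  push Not at hcon
  have hdeg := i4c_deg G h4
  obtain ⟨z', hz', hzx, hzy⟩ := hdeg v x y
  obtain rfl := hcon z' hz' hzx hzy
  obtain ⟨-, h5, hsep⟩ := h4
  have hne : ∀ t, G.Adj v t → t ≠ v := fun t h => h.ne'
  have key := hsep {v, x, y, z'} {v}ᶜ ?_
  · have hA : ¬ Nonempty (G.induce {v, x, y, z'} ≃g K13) := fun h =>
      iso_K13_triangle G _ h v x y (by simp) (by simp) (by simp) hvx hvy hxy
    have hB : ¬ Nonempty (G.induce ({v}ᶜ : Set V) ≃g K13) := by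
      intro h
      have hcardB : Nat.card ({v}ᶜ : Set V) = 4 := by
        obtain ⟨f⟩ := h
        rw [Nat.card_congr f.toEquiv]; simp
      have hcardV : Nat.card V = 5 := by
        have := Set.ncard_add_ncard_compl ({v} : Set V)
        rw [Set.ncard_singleton, ← Nat.card_coe_set_eq, hcardB] at this
        omega
      obtain ⟨w, hw⟩ := exists_not_mem_finset ({v, x, y, z'} : Finset V)
        (lt_of_le_of_lt Finset.card_le_four (by omega))
      simp only [Finset.mem_insert, Finset.mem_singleton, not_or] at hw
      have hvw : ¬ G.Adj w v := fun h => by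
        have := hcon w h.symm hw.2.1 hw.2.2.1
        exact hw.2.2.2 this
      have aux : ∀ a b : V, ({v, w, a, b, z'} : Finset V).card = 5 → G.Adj w a := by
        intro a b hab
        obtain ⟨t, ht, h1, h2⟩ := hdeg w b z'
        have hu : ({v, w, a, b, z'} : Finset V) = Finset.univ := by
          rw [← Finset.card_eq_iff_eq_univ, hab, ← Nat.card_eq_fintype_card, hcardV]
        have := Finset.mem_univ t
        rw [← hu] at this
        simp only [Finset.mem_insert, Finset.mem_singleton] at this
        rcases this with rfl | rfl | rfl | rfl | rfl
        · exact absurd ht hvw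
        · exact absurd ht (G.irrefl)
        · exact ht
        · exact absurd rfl h1
        · exact absurd rfl h2
      have hw' : w ≠ v ∧ w ≠ x ∧ w ≠ y ∧ w ≠ z' := hw
      have hx : G.Adj w x := aux x y (by
        have := hne _ hvx; have := hne _ hvy; have := hne _ hz'; have := hxy.ne
        rw [Finset.card_insert_of_notMem, Finset.card_insert_of_notMem,
          Finset.card_insert_of_notMem, Finset.card_insert_of_notMem,
          Finset.card_singleton] <;> simp only [Finset.mem_insert, Finset.mem_singleton] <;> grind)
      have hy : G.Adj w y := aux y x (by
        have := hne _ hvx; have := hne _ hvy; have := hne _ hz'; have := hxy.ne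
        rw [Finset.card_insert_of_notMem, Finset.card_insert_of_notMem,
          Finset.card_insert_of_notMem, Finset.card_insert_of_notMem,
          Finset.card_singleton] <;> simp only [Finset.mem_insert, Finset.mem_singleton] <;> grind)
      exact iso_K13_triangle G _ h w x y (by simp [hw]) (by simpa using hne _ hvx)
        (by simpa using hne _ hvy) hx hy hxy
    rcases key with h | h
    · exact hA h.1
    · exact hB h.1
  · refine ⟨by ext t; simp; tauto, ?_, ?_, ?_, ?_⟩
    · intro h
      obtain ⟨w, hw⟩ := exists_not_mem_finset ({v, x, y, z'} : Finset V)
        (lt_of_le_of_lt Finset.card_le_four (by omega))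
      have : w ∈ ({v, x, y, z'} : Set V) := h ▸ Set.mem_univ w
      simp only [Finset.mem_insert, Finset.mem_singleton] at hw
      exact hw (by simpa using this)
    · intro h
      have : v ∈ ({v}ᶜ : Set V) := h ▸ Set.mem_univ v
      simp at this
    · have : ({v, x, y, z'} ∩ {v}ᶜ : Set V) = {x, y, z'} := by
        ext t
        simp only [Set.mem_inter_iff, Set.mem_insert_iff, Set.mem_singleton_iff, Set.mem_compl_iff]
        constructor
        · tauto
        · rintro (rfl | rfl | rfl)
          · exact ⟨by tauto, hne _ hvx⟩
          · exact ⟨by tauto, hne _ hvy⟩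
          · exact ⟨by tauto, hne _ hz'⟩
      rw [this, Set.ncard_eq_three]
      exact ⟨x, y, z', hxy.ne, hzx.symm, hzy.symm, rfl⟩
    · have hN : ∀ t, G.Adj v t → t ∈ ({v, x, y, z'} : Set V) := by
        intro t ht
        by_contra h
        simp only [Set.mem_insert_iff, Set.mem_singleton_iff, not_or] at h
        exact h.2.2.2 (hcon t ht h.2.1 h.2.2.1)
      intro a b hab
      by_cases ha : a = v
      · subst ha; exact Or.inl ⟨by simp, hN _ hab⟩
      · by_cases hb : b = v
        · subst hb; exact Or.inl ⟨hN _ hab.symm, by simp⟩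
        · exact Or.inr ⟨ha, hb⟩

theorem good_of_i4c {V : Type*} [Fintype V] (G : SimpleGraph V)
    (h4 : InternallyFourConnected G)
    (hfree : ¬ IsMinor K5plus G ∧ ¬ IsMinor K33plus G ∧ ¬ IsMinor K5h G ∧ ¬ IsMinor K33h G) :
    Good G := by
  refine ⟨?_, h4.2.1, i4c_deg G h4, i4c_tri G h4, hfree.1, hfree.2.1, hfree.2.2.1, hfree.2.2.2⟩
  have := h4.1.2 ∅ (by simp)
  rw [Set.compl_empty] at this
  exact (SimpleGraph.induceUnivIso G).connected_iff.1 this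

section ListsBasic
variable {V : Type*} {G : SimpleGraph V}

/-- `x, l, y` is a walk. -/
def Lk (G : SimpleGraph V) : V → List V → V → Prop
  | x, [], y => G.Adj x y
  | x, m :: r, y => G.Adj x m ∧ Lk G m r y

/-- `x :: l` is a walk ending at `y`. -/
def Rc (G : SimpleGraph V) : V → List V → V → Prop
  | x, [], y => x = y
  | x, m :: r, y => G.Adj x m ∧ Rc G m r y

@[simp] theorem Lk_nil {x y : V} : Lk G x [] y ↔ G.Adj x y := Iff.rfl
@[simp] theorem Lk_cons {x y m : V} {r : List V} : Lk G x (m :: r) y ↔ G.Adj x m ∧ Lk G m r y :=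
  Iff.rfl
@[simp] theorem Rc_nil {x y : V} : Rc G x [] y ↔ x = y := Iff.rfl
@[simp] theorem Rc_cons {x y m : V} {r : List V} : Rc G x (m :: r) y ↔ G.Adj x m ∧ Rc G m r y :=
  Iff.rfl

@[simp] theorem Lk_append {x y m : V} {l r : List V} :
    Lk G x (l ++ m :: r) y ↔ Lk G x l m ∧ Lk G m r y := by
  induction l generalizing x with
  | nil => simp
  | cons a l ih => simp [ih, and_assoc]

@[simp] theorem Lk_reverse {x y : V} {l : List V} : Lk G x l.reverse y ↔ Lk G y l x := by
  induction l generalizing x y with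
  | nil => simp [G.adj_comm]
  | cons a l ih =>
    rw [List.reverse_cons, Lk_append, ih, Lk_cons, Lk_nil, G.adj_comm, and_comm]

theorem Rc.append {c x : V} {T : List V} (h : Rc G c T x) {l : List V} {z : V}
    (h2 : Lk G x l z) : Lk G c (T ++ l) z := by
  induction T generalizing c with
  | nil => rw [Rc_nil] at h; subst h; simpa using h2
  | cons a T ih => exact ⟨h.1, ih h.2⟩

theorem Rc.lk {c x : V} {T : List V} (h : Rc G c T x) {z : V} (h2 : G.Adj x z) : Lk G c T z := by
  simpa using h.append (l := []) h2

theorem Rc.join {c x y d : V} {T U : List V} (h : Rc G c T x) (hxy : G.Adj x y)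
    (h2 : Rc G d U y) : Lk G c (T ++ U.reverse) d :=
  h.append (Lk_reverse.2 (h2.lk hxy.symm))

theorem Rc.split {c x m : V} {A B : List V} (h : Rc G c (A ++ m :: B) x) :
    Lk G c A m ∧ Rc G m B x := by
  induction A generalizing c with
  | nil => simpa using h
  | cons a A ih => exact ⟨⟨h.1, (ih h.2).1⟩, (ih h.2).2⟩

theorem Rc_append_singleton {c m : V} {A : List V} : Rc G c (A ++ [m]) m ↔ Lk G c A m := by
  induction A generalizing c with
  | nil => simp
  | cons a A ih => simp [ih]

/-- the vertex set of the list induces a connected graph -/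
def ConnL (G : SimpleGraph V) (l : List V) : Prop := (G.induce {v | v ∈ l}).Connected

def Contact (G : SimpleGraph V) (l m : List V) : Prop := ∃ v ∈ l, ∃ w ∈ m, G.Adj v w

theorem Contact.symm {l m : List V} (h : Contact G l m) : Contact G m l := by
  obtain ⟨v, hv, w, hw, h⟩ := h
  exact ⟨w, hw, v, hv, h.symm⟩

theorem ConnL.congr {l m : List V} (h : ConnL G l) (hm : ∀ v, v ∈ l ↔ v ∈ m) : ConnL G m := by
  have : {v | v ∈ l} = {v | v ∈ m} := Set.ext hm
  unfold ConnL at h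
  rwa [this] at h

theorem connL_singleton (x : V) : ConnL G [x] := by
  have : {v | v ∈ [x]} = ({x} : Set V) := by ext; simp
  unfold ConnL
  rw [this]
  exact SimpleGraph.Connected.mk (fun a b => by rw [Subsingleton.elim a b])

theorem ConnL.append {l m : List V} (h : ConnL G l) (h' : ConnL G m) (hc : Contact G l m) :
    ConnL G (l ++ m) := by
  obtain ⟨v, hv, w, hw, hvw⟩ := hc
  have := connected_induce_union h.preconnected h'.preconnected hv hw hvw
  have e : {v | v ∈ l ++ m} = {v | v ∈ l} ∪ {v | v ∈ m} := by ext; simp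
  unfold ConnL
  rwa [e]

theorem ConnL.append' {l m : List V} (h : ConnL G l) (h' : ConnL G m) (hc : ∃ x, x ∈ l ∧ x ∈ m) :
    ConnL G (l ++ m) := by
  obtain ⟨v, hv, hw⟩ := hc
  have := induce_union_connected h.preconnected h'.preconnected ⟨v, hv, hw⟩
  have e : {v | v ∈ l ++ m} = {v | v ∈ l} ∪ {v | v ∈ m} := by ext; simp
  unfold ConnL
  rwa [e]

theorem Lk.conn {x y : V} {l : List V} (h : Lk G x l y) : ConnL G (x :: l) := by
  induction l generalizing x with
  | nil => exact connL_singleton x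
  | cons a l ih =>
    exact (connL_singleton x).append (ih h.2) ⟨x, by simp, a, by simp, h.1⟩

theorem Lk.conn_snoc {x y : V} {l : List V} (h : Lk G x l y) : ConnL G (l ++ [y]) :=
  (Lk_reverse.2 h).conn.congr (by simp [or_comm])

theorem Lk.contact {x y : V} {l : List V} (h : Lk G x l y) : Contact G (x :: l) [y] := by
  induction l generalizing x with
  | nil => exact ⟨x, by simp, y, by simp, h⟩
  | cons a l ih =>
    obtain ⟨v, hv, w, hw, hvw⟩ := ih h.2
    exact ⟨v, by simp at hv ⊢; tauto, w, hw, hvw⟩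

theorem Contact.mono {l m l' m' : List V} (h : Contact G l m) (h1 : l ⊆ l') (h2 : m ⊆ m') :
    Contact G l' m' := by
  obtain ⟨v, hv, w, hw, hvw⟩ := h
  exact ⟨v, h1 hv, w, h2 hw, hvw⟩

end ListsBasic

section Counts
variable {V : Type*} [DecidableEq V]

/-- indicator -/
def dl (v x : V) : ℕ := if x = v then 1 else 0

theorem dl_self (v : V) : dl v v = 1 := by simp [dl]
theorem dl_ne {v x : V} (h : x ≠ v) : dl v x = 0 := by simp [dl, h]

theorem count_cons_dl (v x : V) (l : List V) : (x :: l).count v = l.count v + dl v x := by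
  simp [List.count_cons, dl]

theorem count_le_of_total {ι : Type*} [Fintype ι] (f : ι → ℕ) (h : ∑ i, f i ≤ 1) {i j : ι}
    (hij : i ≠ j) (hi : 0 < f i) (hj : 0 < f j) : False := by
  classical
  have : f i + f j ≤ ∑ i, f i := by
    rw [← Finset.sum_pair hij]
    exact Finset.sum_le_sum_of_subset (Finset.subset_univ _)
  omega

theorem minor_of_lists {W : Type*} [Fintype W] {G : SimpleGraph V} {H : SimpleGraph W}
    (L : W → List V) (hc : ∀ w, ConnL G (L w)) (hcnt : ∀ v, ∑ w, (L w).count v ≤ 1)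
    (hadj : ∀ w w', H.Adj w w' → Contact G (L w) (L w')) : IsMinor H G := by
  refine ⟨fun w => {v | v ∈ L w}, ?_, hc, ?_, ?_⟩
  · intro w
    obtain ⟨x⟩ := (hc w).nonempty
    exact ⟨x.1, x.2⟩
  · intro w w' hne
    refine Set.disjoint_left.2 ?_
    intro v hv hv'
    exact count_le_of_total _ (hcnt v) hne (List.count_pos_iff.2 hv) (List.count_pos_iff.2 hv')
  · intro w w' h
    obtain ⟨v, hv, w, hw, h⟩ := hadj w w' h
    exact ⟨v, hv, w, hw, h⟩

theorem minor_fromRel {W : Type*} [Fintype W] {G : SimpleGraph V} {r : W → W → Prop}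
    (L : W → List V) (hc : ∀ w, ConnL G (L w)) (hcnt : ∀ v, ∑ w, (L w).count v ≤ 1)
    (hadj : ∀ w w', w ≠ w' → r w w' → Contact G (L w) (L w')) :
    IsMinor (SimpleGraph.fromRel r) G := by
  refine minor_of_lists L hc hcnt ?_
  intro w w' h
  rw [SimpleGraph.fromRel_adj] at h
  rcases h with ⟨h, h1 | h1⟩
  · exact hadj _ _ h h1
  · exact (hadj _ _ h.symm h1).symm

end Counts

section SubK
variable {V : Type*} [DecidableEq V]

/-- A subdivision of `K33` in `G`. -/
structure KS (G : SimpleGraph V) where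
  a : Fin 3 → V
  b : Fin 3 → V
  P : Fin 3 → Fin 3 → List V
  chain : ∀ i j, Lk G (a i) (P i j) (b j)
  cnt : ∀ v, ∑ i, dl v (a i) + ∑ j, dl v (b j) + ∑ i, ∑ j, (P i j).count v ≤ 1

variable {G : SimpleGraph V}

def KS.perm (S : KS G) (σ τ : Equiv.Perm (Fin 3)) : KS G where
  a i := S.a (σ i)
  b j := S.b (τ j)
  P i j := S.P (σ i) (τ j)
  chain i j := S.chain _ _
  cnt v := by
    have := S.cnt v
    rw [Equiv.sum_comp σ (fun i => dl v (S.a i)), Equiv.sum_comp τ (fun i => dl v (S.b i)),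
      Equiv.sum_comp σ (fun i => ∑ j, (S.P i (τ j)).count v)]
    have e : ∀ i, ∑ j, (S.P i (τ j)).count v = ∑ j, (S.P i j).count v :=
      fun i => Equiv.sum_comp τ (fun j => (S.P i j).count v)
    simp only [e]
    exact this

def KS.tr (S : KS G) : KS G where
  a := S.b
  b := S.a
  P i j := (S.P j i).reverse
  chain i j := Lk_reverse.2 (S.chain _ _)
  cnt v := by
    have := S.cnt v
    simp only [List.count_reverse]
    rw [Finset.sum_comm]
    omega

theorem exists_perm {i j k : Fin 3} (hij : i ≠ j) (hik : i ≠ k) (hjk : j ≠ k) :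
    ∃ σ : Equiv.Perm (Fin 3), σ 0 = i ∧ σ 1 = j ∧ σ 2 = k := by
  revert i j k
  decide

theorem KS.pendant (S : KS G) (hG : Good G) (x y : V) (hxy : G.Adj x y)
    (hy : ∑ i, dl y (S.a i) + ∑ j, dl y (S.b j) + ∑ i, ∑ j, (S.P i j).count y = 0)
    (hx : x ∈ S.a 0 :: (S.P 0 0 ++ S.P 0 1 ++ S.P 0 2)) : False := by
  apply hG.nK33p
  let L : Option (Fin 3 ⊕ Fin 3) → List V := fun w => match w with
    | none => [y]
    | some (.inl i) => S.a i :: (S.P i 0 ++ S.P i 1 ++ S.P i 2)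
    | some (.inr j) => [S.b j]
  have hcon : ∀ i, ConnL G (S.a i :: (S.P i 0 ++ S.P i 1 ++ S.P i 2)) := by
    intro i
    refine ((((S.chain i 0).conn.append' (S.chain i 1).conn ⟨S.a i, by simp, by simp⟩)).append'
      (S.chain i 2).conn ⟨S.a i, by simp, by simp⟩).congr ?_
    intro v; simp; tauto
  refine minor_fromRel L ?_ ?_ ?_
  · rintro (_ | i | j)
    · exact connL_singleton _
    · exact hcon i
    · exact connL_singleton _
  · intro v
    have := S.cnt v
    simp only [Fintype.sum_option, Fintype.sum_sum_type, Fin.sum_univ_three, L, count_cons_dl,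
      List.count_append, List.count_nil] at *
    by_cases hv : y = v
    · subst hv
      rw [dl_self]; omega
    · rw [dl_ne hv]; omega
  · rintro (_ | i | j) (_ | i' | j') hne hr <;> simp only [] at hr
    · simp only [Sum.inl.injEq] at hr
      subst hr
      exact ⟨y, by simp [L], x, hx, hxy.symm⟩
    · simp at hr
    · refine (S.chain i j').contact.mono ?_ (by simp [L])
      intro v hv
      fin_cases j' <;> simp [L] at hv ⊢ <;> tauto

theorem KS.span (S : KS G) (hG : Good G) (v : V) :
    ∑ i, dl v (S.a i) + ∑ j, dl v (S.b j) + ∑ i, ∑ j, (S.P i j).count v = 1 := by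
  by_contra hcon
  have h0 : ∑ i, dl v (S.a i) + ∑ j, dl v (S.b j) + ∑ i, ∑ j, (S.P i j).count v = 0 := by
    have := S.cnt v; omega
  set C : Set V := {v | ∑ i, dl v (S.a i) + ∑ j, dl v (S.b j) + ∑ i, ∑ j, (S.P i j).count v ≠ 0}
    with hC
  obtain ⟨w⟩ := hG.conn.preconnected (S.a 0) v
  obtain ⟨d, -, hd1, hd2⟩ := w.exists_boundary_dart C (by
    simp only [hC, Set.mem_ofPred_eq, Fin.sum_univ_three, dl_self]; omega) (fun h => h h0)
  have hadj := d.adj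
  set x := d.fst
  set y := d.snd
  have hy : ∑ i, dl y (S.a i) + ∑ j, dl y (S.b j) + ∑ i, ∑ j, (S.P i j).count y = 0 := by
    by_contra h; exact hd2 h
  -- rows
  have hrow : ∀ (T : KS G), (∑ i, dl y (T.a i) + ∑ j, dl y (T.b j)
      + ∑ i, ∑ j, (T.P i j).count y = 0) → ∀ i, x ∉ T.a i :: (T.P i 0 ++ T.P i 1 ++ T.P i 2) := by
    intro T hT i hx
    refine (T.perm (Equiv.swap 0 i) 1).pendant hG x y hadj ?_ (by simpa [KS.perm] using hx)
    simp only [KS.perm, Equiv.Perm.coe_one, id]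
    rw [Equiv.sum_comp (Equiv.swap 0 i) (fun i => dl y (T.a i)),
      Equiv.sum_comp (Equiv.swap 0 i) (fun i => ∑ j, (T.P i j).count y)]
    exact hT
  apply hd1
  have h1 := hrow S hy
  have h2 := hrow S.tr (by
    simp only [KS.tr, List.count_reverse]
    rw [Finset.sum_comm]; omega)
  simp only [KS.tr, List.mem_cons, List.mem_append, List.mem_reverse, not_or] at h1 h2
  have e1 : ∀ i, dl x (S.a i) = 0 := fun i => dl_ne (Ne.symm (h1 i).1)
  have e2 : ∀ i, dl x (S.b i) = 0 := fun i => dl_ne (Ne.symm (h2 i).1)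
  have e3 : ∀ i j, (S.P i j).count x = 0 := by
    intro i j
    rw [List.count_eq_zero]
    fin_cases j
    · exact (h1 i).2.1.1
    · exact (h1 i).2.1.2
    · exact (h1 i).2.2
  simp [e1, e2, e3]

end SubK

section Exist
variable {V : Type*} {G : SimpleGraph V}

theorem Rc_of_walk {x y : V} (p : G.Walk x y) : Rc G x p.support.tail y := by
  induction p with
  | nil => simp
  | cons h p ih =>
    rw [Walk.support_cons, List.tail_cons, ← Walk.cons_tail_support]
    exact ⟨h, ih⟩

theorem exists_Rc_of_connected {B : Set V} (hB : (G.induce B).Connected) {x y : V} (hx : x ∈ B)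
    (hy : y ∈ B) : ∃ T, Rc G x T y ∧ (x :: T).Nodup ∧ ∀ v ∈ T, v ∈ B := by
  classical
  obtain ⟨p, hp⟩ := hB.exists_isPath ⟨x, hx⟩ ⟨y, hy⟩
  let q := p.map (Embedding.induce (G := G) B).toHom
  have hq : q.IsPath := hp.map (Embedding.induce (G := G) B).injective
  refine ⟨q.support.tail, Rc_of_walk q, ?_, ?_⟩
  · have := hq.support_nodup
    rwa [← Walk.cons_tail_support] at this
  · intro v hv
    have : v ∈ q.support := List.mem_of_mem_tail hv
    rw [Walk.support_map, List.mem_map] at this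
    obtain ⟨u, -, rfl⟩ := this
    exact u.2

theorem Rc_last_hit (M : V → Prop) (x : V) : ∀ (n : ℕ) (U : List V) (z : V), U.length ≤ n → M z →
    Rc G z U x → (z :: U).Nodup → ∃ c U', M c ∧ Rc G c U' x ∧ (c :: U').Nodup ∧ U' ⊆ U ∧
      ∀ v ∈ U', ¬ M v := by
  intro n
  induction n with
  | zero =>
    intro U z hU hz hR hnd
    have : U = [] := List.length_eq_zero_iff.1 (by omega)
    subst this
    exact ⟨z, [], hz, hR, hnd, by simp, by simp⟩
  | succ n ih =>
    intro U z hU hz hR hnd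
    by_cases h : ∃ m ∈ U, M m
    · obtain ⟨m, hm, hM⟩ := h
      obtain ⟨A, r, rfl⟩ := List.append_of_mem hm
      obtain ⟨c, U', h1, h2, h3, h4, h5⟩ := ih r m (by simp at hU; omega) hM hR.split.2
        ((List.nodup_append.1 (List.nodup_cons.1 hnd).2).2.1)
      exact ⟨c, U', h1, h2, h3, fun v hv => by simp [h4 hv], h5⟩
    · push Not at h
      exact ⟨z, U, hz, hR, hnd, fun v hv => hv, h⟩

theorem tripod [DecidableEq V] {B : Set V} (hB : (G.induce B).Connected) (x : Fin 3 → V)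
    (hx : ∀ j, x j ∈ B) : ∃ (c : V) (T : Fin 3 → List V), c ∈ B ∧ (∀ j, ∀ v ∈ T j, v ∈ B) ∧
      (∀ j, Rc G c (T j) (x j)) ∧ ∀ v, dl v c + ∑ j, (T j).count v ≤ 1 := by
  obtain ⟨T, hT, hTn, hTB⟩ := exists_Rc_of_connected hB (hx 0) (hx 1)
  obtain ⟨U, hU, hUn, hUB⟩ := exists_Rc_of_connected hB (hx 0) (hx 2)
  obtain ⟨c, U', hc, hR, hnd, hsub, hdis⟩ := Rc_last_hit (G := G) (fun v => v ∈ x 0 :: T) (x 2)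
    U.length U (x 0) le_rfl (by simp) hU hUn
  obtain ⟨A, A', hA⟩ := List.append_of_mem hc
  have hcB : c ∈ B := by
    rcases List.mem_cons.1 hc with rfl | h
    · exact hx 0
    · exact hTB _ h
  have hAB : ∀ v ∈ A ++ c :: A', v ∈ B := by
    rw [← hA]
    intro v hv
    rcases List.mem_cons.1 hv with rfl | h
    · exact hx 0
    · exact hTB _ h
  refine ⟨c, ![A.reverse, A', U'], hcB, ?_, ?_, ?_⟩
  · intro j v hv
    fin_cases j
    · exact hAB v (by simp at hv ⊢; tauto)
    · exact hAB v (by simp at hv ⊢; tauto)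
    · exact hUB v (hsub hv)
  · intro j
    fin_cases j
    · show Rc G c A.reverse (x 0)
      cases A with
      | nil => simp at hA ⊢; exact hA.1.symm
      | cons a A =>
        simp only [List.cons_append, List.cons.injEq] at hA
        obtain ⟨rfl, rfl⟩ := hA
        rw [List.reverse_cons, Rc_append_singleton, Lk_reverse]
        exact hT.split.1
    · show Rc G c A' (x 1)
      cases A with
      | nil =>
        simp at hA
        obtain ⟨rfl, rfl⟩ := hA
        exact hT
      | cons a A =>
        simp only [List.cons_append, List.cons.injEq] at hA
        obtain ⟨rfl, rfl⟩ := hA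
        exact hT.split.2
    · exact hR
  · intro v
    rw [hA] at hTn
    have h1 := List.nodup_iff_count_le_one.1 hTn v
    have h2 := List.nodup_iff_count_le_one.1 hnd v
    have h3 : v ∈ U' → (A ++ c :: A').count v = 0 := by
      intro hv
      rw [← hA]
      exact List.count_eq_zero.2 (hdis v hv)
    have h4 : v ∉ U' → U'.count v = 0 := fun h => List.count_eq_zero.2 h
    simp only [Fin.sum_univ_three, Matrix.cons_val, List.count_reverse, count_cons_dl,
      List.count_append] at *
    by_cases hv : v ∈ U'
    · have := h3 hv; omega
    · have := h4 hv; omega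

theorem exists_KS [DecidableEq V] (h : IsMinor K33 G) : Nonempty (KS G) := by
  obtain ⟨B, -, hcon, hdis, hadj⟩ := h
  have h1 : ∀ i j : Fin 3, ∃ p : V × V, p.1 ∈ B (.inl i) ∧ p.2 ∈ B (.inr j) ∧ G.Adj p.1 p.2 := by
    intro i j
    obtain ⟨v, hv, w, hw, h⟩ := hadj (w₁ := .inl i) (w₂ := .inr j) (by simp [K33])
    exact ⟨(v, w), hv, hw, h⟩
  choose p hp1 hp2 hp3 using h1
  have ha : ∀ i : Fin 3, ∃ q : V × (Fin 3 → List V), q.1 ∈ B (.inl i) ∧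
      (∀ j, ∀ v ∈ q.2 j, v ∈ B (.inl i)) ∧
      (∀ j, Rc G q.1 (q.2 j) (p i j).1) ∧ ∀ v, dl v q.1 + ∑ j, (q.2 j).count v ≤ 1 := by
    intro i
    obtain ⟨c, T, h⟩ := tripod (hcon (.inl i)) (fun j => (p i j).1) (fun j => hp1 i j)
    exact ⟨(c, T), h⟩
  have hb : ∀ j : Fin 3, ∃ q : V × (Fin 3 → List V), q.1 ∈ B (.inr j) ∧
      (∀ i, ∀ v ∈ q.2 i, v ∈ B (.inr j)) ∧
      (∀ i, Rc G q.1 (q.2 i) (p i j).2) ∧ ∀ v, dl v q.1 + ∑ i, (q.2 i).count v ≤ 1 := by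
    intro j
    obtain ⟨c, T, h⟩ := tripod (hcon (.inr j)) (fun i => (p i j).2) (fun i => hp2 i j)
    exact ⟨(c, T), h⟩
  choose qa ha1 ha2 ha3 ha4 using ha
  choose qb hb1 hb2 hb3 hb4 using hb
  refine ⟨⟨fun i => (qa i).1, fun j => (qb j).1, fun i j => (qa i).2 j ++ ((qb j).2 i).reverse,
    fun i j => (ha3 i j).join (hp3 i j) (hb3 j i), ?_⟩⟩
  intro v
  have key : ∑ w : Fin 3 ⊕ Fin 3, (Sum.elim (fun i => dl v (qa i).1 + ∑ j, ((qa i).2 j).count v)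
      (fun j => dl v (qb j).1 + ∑ i, ((qb j).2 i).count v) w) ≤ 1 := by
    have za : ∀ i, v ∉ B (.inl i) → dl v (qa i).1 + ∑ j, ((qa i).2 j).count v = 0 := by
      intro i hv
      have e1 : dl v (qa i).1 = 0 := dl_ne (fun h => by have := ha1 i; rw [h] at this; exact hv this)
      have e2 : ∀ j, ((qa i).2 j).count v = 0 :=
        fun j => List.count_eq_zero.2 (fun h => hv (ha2 i j v h))
      simp [e1, e2]
    have zb : ∀ j, v ∉ B (.inr j) → dl v (qb j).1 + ∑ i, ((qb j).2 i).count v = 0 := by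
      intro j hv
      have e1 : dl v (qb j).1 = 0 := dl_ne (fun h => by have := hb1 j; rw [h] at this; exact hv this)
      have e2 : ∀ i, ((qb j).2 i).count v = 0 :=
        fun i => List.count_eq_zero.2 (fun h => hv (hb2 j i v h))
      simp [e1, e2]
    by_cases hv : ∃ w, v ∈ B w
    · obtain ⟨w, hw⟩ := hv
      rw [Finset.sum_eq_single w]
      · rcases w with i | j
        · exact ha4 i v
        · exact hb4 j v
      · intro w' _ hne
        have hv' : v ∉ B w' := fun h => Set.disjoint_left.1 (hdis hne) h hw
        rcases w' with i | j
        · exact za i hv'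
        · exact zb j hv'
      · simp
    · push Not at hv
      rw [Finset.sum_eq_zero]
      · simp
      · rintro (i | j) -
        · exact za i (hv _)
        · exact zb j (hv _)
  simp only [Fintype.sum_sum_type, Sum.elim_inl, Sum.elim_inr, Fin.sum_univ_three,
    List.count_append, List.count_reverse] at *
  omega

end Exist

section Facts
variable {V : Type*} [DecidableEq V] {G : SimpleGraph V}

def mk9 {G : SimpleGraph V} (a0 a1 a2 b0 b1 b2 : V) (p00 p01 p02 p10 p11 p12 p20 p21 p22 : List V)
    (h00 : Lk G a0 p00 b0) (h01 : Lk G a0 p01 b1) (h02 : Lk G a0 p02 b2)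
    (h10 : Lk G a1 p10 b0) (h11 : Lk G a1 p11 b1) (h12 : Lk G a1 p12 b2)
    (h20 : Lk G a2 p20 b0) (h21 : Lk G a2 p21 b1) (h22 : Lk G a2 p22 b2)
    (hc : ∀ v, dl v a0 + dl v a1 + dl v a2 + (dl v b0 + dl v b1 + dl v b2) +
      (p00.count v + p01.count v + p02.count v + (p10.count v + p11.count v + p12.count v) +
       (p20.count v + p21.count v + p22.count v)) ≤ 1) : KS G where
  a := ![a0, a1, a2]
  b := ![b0, b1, b2]
  P := ![![p00, p01, p02], ![p10, p11, p12], ![p20, p21, p22]]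
  chain i j := by fin_cases i <;> fin_cases j <;> assumption
  cnt v := by
    have := hc v
    simpa only [Fin.sum_univ_three, Matrix.cons_val] using this

theorem KS.cnt9 (S : KS G) (v : V) : dl v (S.a 0) + dl v (S.a 1) + dl v (S.a 2) +
    (dl v (S.b 0) + dl v (S.b 1) + dl v (S.b 2)) +
    ((S.P 0 0).count v + (S.P 0 1).count v + (S.P 0 2).count v +
     ((S.P 1 0).count v + (S.P 1 1).count v + (S.P 1 2).count v) +
     ((S.P 2 0).count v + (S.P 2 1).count v + (S.P 2 2).count v)) ≤ 1 := by
  have := S.cnt v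
  simpa only [Fin.sum_univ_three] using this

theorem KS.span9 (S : KS G) (hG : Good G) (v : V) : dl v (S.a 0) + dl v (S.a 1) + dl v (S.a 2) +
    (dl v (S.b 0) + dl v (S.b 1) + dl v (S.b 2)) +
    ((S.P 0 0).count v + (S.P 0 1).count v + (S.P 0 2).count v +
     ((S.P 1 0).count v + (S.P 1 1).count v + (S.P 1 2).count v) +
     ((S.P 2 0).count v + (S.P 2 1).count v + (S.P 2 2).count v)) = 1 := by
  have := S.span hG v
  simpa only [Fin.sum_univ_three] using this

theorem span_flat (hG : Good G)
    {a0 a1 a2 b0 b1 b2 : V} {p00 p01 p02 p10 p11 p12 p20 p21 p22 : List V}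
    (h00 : Lk G a0 p00 b0) (h01 : Lk G a0 p01 b1) (h02 : Lk G a0 p02 b2)
    (h10 : Lk G a1 p10 b0) (h11 : Lk G a1 p11 b1) (h12 : Lk G a1 p12 b2)
    (h20 : Lk G a2 p20 b0) (h21 : Lk G a2 p21 b1) (h22 : Lk G a2 p22 b2)
    (hc : ∀ v, dl v a0 + dl v a1 + dl v a2 + (dl v b0 + dl v b1 + dl v b2) +
      (p00.count v + p01.count v + p02.count v + (p10.count v + p11.count v + p12.count v) +
       (p20.count v + p21.count v + p22.count v)) ≤ 1) (v : V) :
    dl v a0 + dl v a1 + dl v a2 + (dl v b0 + dl v b1 + dl v b2) +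
      (p00.count v + p01.count v + p02.count v + (p10.count v + p11.count v + p12.count v) +
       (p20.count v + p21.count v + p22.count v)) = 1 := by
  have := (mk9 a0 a1 a2 b0 b1 b2 p00 p01 p02 p10 p11 p12 p20 p21 p22 h00 h01 h02 h10 h11 h12
    h20 h21 h22 hc).span9 hG v
  simpa only [mk9, Matrix.cons_val] using this

theorem nil_of_count {l : List V} (h : ∀ v, l.count v = 0) : l = [] :=
  List.eq_nil_iff_forall_not_mem.2 fun v hv => by
    have := List.count_pos_iff.2 hv
    have := h v
    omega

theorem KS.reroute0 (S : KS G) (hG : Good G) (Q : List V) (hQ : Lk G (S.a 0) Q (S.b 0))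
    (hc : ∀ v, Q.count v ≤ (S.P 0 0).count v) (v : V) : Q.count v = (S.P 0 0).count v := by
  have h := span_flat hG hQ (S.chain 0 1) (S.chain 0 2) (S.chain 1 0) (S.chain 1 1) (S.chain 1 2)
    (S.chain 2 0) (S.chain 2 1) (S.chain 2 2) (fun v => by
      have := S.cnt9 v; have := hc v; omega) v
  have := S.span9 hG v
  omega

theorem KS.reroute (S : KS G) (hG : Good G) (i j : Fin 3) (Q : List V)
    (hQ : Lk G (S.a i) Q (S.b j))
    (hc : ∀ v, Q.count v ≤ (S.P i j).count v) (v : V) : Q.count v = (S.P i j).count v := by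
  have := (S.perm (Equiv.swap 0 i) (Equiv.swap 0 j)).reroute0 hG Q (by simpa [KS.perm] using hQ)
    (by simpa [KS.perm] using hc) v
  simpa [KS.perm] using this

theorem KS.F1ab (S : KS G) (hG : Good G) (i j : Fin 3) (h : G.Adj (S.a i) (S.b j)) :
    S.P i j = [] :=
  nil_of_count fun v => (S.reroute hG i j [] h (by simp) v).symm.trans (by simp)

theorem KS.F1a (S : KS G) (hG : Good G) (i j : Fin 3) {A B : List V} {p : V}
    (hP : S.P i j = A ++ p :: B) (h : G.Adj (S.a i) p) : A = [] := by
  have hc := S.chain i j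
  rw [hP, Lk_append] at hc
  refine nil_of_count fun v => ?_
  have := S.reroute hG i j (p :: B) ⟨h, hc.2⟩ (by intro v; rw [hP]; simp) v
  rw [hP, List.count_append] at this
  omega

theorem KS.F1b (S : KS G) (hG : Good G) (i j : Fin 3) {A B : List V} {p : V}
    (hP : S.P i j = A ++ p :: B) (h : G.Adj p (S.b j)) : B = [] := by
  have := S.tr.F1a hG j i (A := B.reverse) (p := p) (B := A.reverse) (by simp [KS.tr, hP]) h.symm
  simpa using this

theorem KS.F1m (S : KS G) (hG : Good G) (i j : Fin 3) {A M B : List V} {p q : V}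
    (hP : S.P i j = A ++ p :: (M ++ q :: B)) (h : G.Adj p q) : M = [] := by
  have hc := S.chain i j
  rw [hP, Lk_append, Lk_append] at hc
  refine nil_of_count fun v => ?_
  have := S.reroute hG i j (A ++ p :: q :: B) (by simp [hc.1, h, hc.2.2]) (by
    intro v; rw [hP]; simp only [List.count_append, count_cons_dl]; omega) v
  rw [hP] at this
  simp only [List.count_append, count_cons_dl] at this
  omega

theorem KS.F2_0 (S : KS G) (hG : Good G) {p q : V} (hp : p ∈ S.P 0 0) (hq : q ∈ S.P 0 1)
    (h : G.Adj p q) : False := by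
  apply hG.nK33h
  obtain ⟨A, B, hP⟩ := List.append_of_mem hp
  obtain ⟨A', B', hQ⟩ := List.append_of_mem hq
  have c0 := S.chain 0 0
  have c1 := S.chain 0 1
  rw [hP, Lk_append] at c0
  rw [hQ, Lk_append] at c1
  let R : Fin 3 → List V := fun i => S.a i :: (S.P i 0 ++ S.P i 1 ++ S.P i 2)
  let L : (Fin 3 ⊕ Fin 3) ⊕ Fin 2 → List V := fun w => match w with
    | .inl (.inl i) => if i = 0 then S.a 0 :: (A ++ A' ++ S.P 0 2) else R i
    | .inl (.inr j) => [S.b j]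
    | .inr k => if k = 0 then p :: B else q :: B'
  have hcon : ∀ i, ConnL G (R i) := by
    intro i
    refine ((((S.chain i 0).conn.append' (S.chain i 1).conn ⟨S.a i, by simp, by simp⟩)).append'
      (S.chain i 2).conn ⟨S.a i, by simp, by simp⟩).congr ?_
    intro v; simp [R]; tauto
  have hcon0 : ConnL G (S.a 0 :: (A ++ A' ++ S.P 0 2)) := by
    refine ((c0.1.conn.append' c1.1.conn ⟨S.a 0, by simp, by simp⟩).append'
      (S.chain 0 2).conn ⟨S.a 0, by simp, by simp⟩).congr ?_
    intro v; simp; tauto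
  refine minor_fromRel L ?_ ?_ ?_
  · rintro ((i | j) | k)
    · by_cases hi : i = 0 <;> simp only [L, hi, if_true, if_false, hcon, hcon0]
    · exact connL_singleton _
    · by_cases hk : k = 0 <;> simp only [L, hk, if_true, if_false]
      · exact c0.2.conn
      · exact c1.2.conn
  · intro v
    have := S.cnt9 v
    rw [hP, hQ] at this
    simp [Fin.sum_univ_three, Fin.sum_univ_two, L, R, count_cons_dl] at this ⊢
    omega
  · have hR : ∀ i j, Contact G (R i) [S.b j] := by
      intro i j
      refine (S.chain i j).contact.mono ?_ (by simp)
      intro v hv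
      fin_cases j <;> simp [R] at hv ⊢ <;> tauto
    have h1 : Contact G (S.a 0 :: (A ++ A' ++ S.P 0 2)) (p :: B) :=
      c0.1.contact.mono (by intro v; simp; tauto) (by simp)
    have h2 : Contact G (S.a 0 :: (A ++ A' ++ S.P 0 2)) (q :: B') :=
      c1.1.contact.mono (by intro v; simp; tauto) (by simp)
    have h3 : Contact G (S.a 0 :: (A ++ A' ++ S.P 0 2)) [S.b 2] :=
      (S.chain 0 2).contact.mono (by intro v; simp; tauto) (by simp)
    have h4 : Contact G (p :: B) (q :: B') := ⟨p, by simp, q, by simp, h⟩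
    have h5 := c0.2.contact
    have h6 := c1.2.contact
    have hL0 : L (.inl (.inl 0)) = S.a 0 :: (A ++ A' ++ S.P 0 2) := rfl
    have hLi : ∀ i, i ≠ 0 → L (.inl (.inl i)) = R i := fun i hi => by simp [L, hi]
    have hLj : ∀ j, L (.inl (.inr j)) = [S.b j] := fun i => rfl
    have hLk0 : L (.inr 0) = p :: B := rfl
    have hLk1 : L (.inr 1) = q :: B' := rfl
    have hij : ∀ i j, ¬(i = 0 ∧ (j = 0 ∨ j = 1)) →
        Contact G (L (.inl (.inl i))) (L (.inl (.inr j))) := by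
      intro i j hij
      by_cases hi : i = 0
      · have : j = 2 := by
          fin_cases j <;> simp_all
        rw [hi, this]
        exact h3
      · rw [hLi i hi]; exact hR i j
    rintro ((i | j) | k) ((i' | j') | k') hne hr <;> simp only [] at hr
    · exact hij _ _ hr
    · rcases hr with ⟨rfl, h | h⟩ | ⟨rfl, h | h⟩ <;> simp at h
      · subst h; exact h1
      · subst h; exact h2
    · exact (hij _ _ hr).symm
    · rcases hr with ⟨rfl, h | h⟩ | ⟨rfl, h | h⟩ <;> simp at h
      · subst h; exact h5.symm
      · subst h; exact h6.symm
    · have : (k = 0 ∧ k' = 1) ∨ (k = 1 ∧ k' = 0) := by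
        have : k ≠ k' := fun h => hne (by rw [h])
        omega
      rcases this with ⟨rfl, rfl⟩ | ⟨rfl, rfl⟩
      · exact h4
      · exact h4.symm

theorem third (i j : Fin 3) : ∃ k, i ≠ k ∧ j ≠ k := by
  revert i j; decide

theorem exists_perm2 {i j : Fin 3} (h : i ≠ j) : ∃ σ : Equiv.Perm (Fin 3), σ 0 = i ∧ σ 1 = j := by
  obtain ⟨k, h1, h2⟩ := third i j
  obtain ⟨σ, h3, h4, -⟩ := exists_perm h h1 h2
  exact ⟨σ, h3, h4⟩

theorem KS.F2 (S : KS G) (hG : Good G) {i j j' : Fin 3} (hj : j ≠ j') {p q : V}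
    (hp : p ∈ S.P i j) (hq : q ∈ S.P i j') : ¬ G.Adj p q := by
  obtain ⟨τ, h1, h2⟩ := exists_perm2 hj
  intro h
  exact (S.perm (Equiv.swap 0 i) τ).F2_0 hG (p := p) (q := q) (by simpa [KS.perm, h1] using hp)
    (by simpa [KS.perm, h2] using hq) h

theorem KS.F2' (S : KS G) (hG : Good G) {i i' j : Fin 3} (hi : i ≠ i') {p q : V}
    (hp : p ∈ S.P i j) (hq : q ∈ S.P i' j) : ¬ G.Adj p q :=
  S.tr.F2 hG hi (by simpa [KS.tr] using hp) (by simpa [KS.tr] using hq)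

/-- The shift operation. -/
def KS.shift0 (S : KS G) {A B : List V} {p : V} (hP : S.P 0 0 = A ++ p :: B)
    (h : G.Adj p (S.a 1)) : KS G :=
  mk9 (S.a 0) (S.a 1) (S.a 2) p (S.b 1) (S.b 2) A (S.P 0 1) (S.P 0 2) [] (S.P 1 1) (S.P 1 2)
    (S.P 2 0 ++ S.b 0 :: B.reverse) (S.P 2 1) (S.P 2 2)
    (by have := S.chain 0 0; rw [hP, Lk_append] at this; exact this.1) (S.chain _ _) (S.chain _ _)
    h.symm (S.chain _ _) (S.chain _ _)
    (by have := S.chain 0 0; rw [hP, Lk_append] at this; simp [this.2, S.chain 2 0])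
    (S.chain _ _) (S.chain _ _)
    (fun v => by
      have := S.cnt9 v; rw [hP] at this
      simp only [List.count_append, List.count_reverse, count_cons_dl, List.count_nil] at *
      omega)

theorem KS.F3_0 (S : KS G) (hG : Good G) {p : V} (hp : p ∈ S.P 0 0) (h : G.Adj p (S.a 1)) :
    S.P 1 0 = [] := by
  obtain ⟨A, B, hP⟩ := List.append_of_mem hp
  refine nil_of_count fun v => ?_
  have h1 := (S.shift0 hP h).span9 hG v
  have h2 := S.span9 hG v
  rw [hP] at h2
  simp only [KS.shift0, mk9, Matrix.cons_val, List.count_append, List.count_reverse, count_cons_dl,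
    List.count_nil] at h1 h2
  omega

theorem KS.F3 (S : KS G) (hG : Good G) {i i' j : Fin 3} (hi : i ≠ i') {p : V} (hp : p ∈ S.P i j)
    (h : G.Adj p (S.a i')) : S.P i' j = [] := by
  obtain ⟨σ, h1, h2⟩ := exists_perm2 hi
  have := (S.perm σ (Equiv.swap 0 j)).F3_0 hG (p := p) (by simpa [KS.perm, h1] using hp)
    (by simpa [KS.perm, h2] using h)
  simpa [KS.perm, h2] using this

theorem KS.F3' (S : KS G) (hG : Good G) {i j j' : Fin 3} (hj : j ≠ j') {p : V} (hp : p ∈ S.P i j)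
    (h : G.Adj p (S.b j')) : S.P i j' = [] := by
  have := S.tr.F3 hG (i := j) (i' := j') (j := i) hj (p := p) (by simpa [KS.tr] using hp) h
  simpa [KS.tr] using this

theorem KS.F4_0 (S : KS G) (hG : Good G) {p q : V} (hp : p ∈ S.P 0 0) (hq : q ∈ S.P 1 1)
    (h : G.Adj p q) : S.P 1 0 = [] ∧ S.P 2 2 = [] := by
  obtain ⟨A, B, hP⟩ := List.append_of_mem hp
  obtain ⟨C, D, hQ⟩ := List.append_of_mem hq
  have c0 := S.chain 0 0
  have c1 := S.chain 1 1
  rw [hP, Lk_append] at c0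
  rw [hQ, Lk_append] at c1
  have hr : ∀ i j, Lk G (S.b j) (S.P i j).reverse (S.a i) := fun i j => Lk_reverse.2 (S.chain i j)
  constructor
  · refine nil_of_count fun v => ?_
    have := span_flat hG (a0 := p) (a1 := S.b 1) (a2 := S.b 2) (b0 := S.a 2) (b1 := q)
      (b2 := S.a 0) (p00 := B ++ S.b 0 :: (S.P 2 0).reverse) (p01 := []) (p02 := A.reverse)
      (p10 := (S.P 2 1).reverse) (p11 := D.reverse) (p12 := (S.P 0 1).reverse)
      (p20 := (S.P 2 2).reverse) (p21 := (S.P 1 2).reverse ++ S.a 1 :: C)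
      (p22 := (S.P 0 2).reverse) (by simp [c0, S.chain]) (by simp [h]) (by simp [c0])
      (hr _ _) (by simp [c1]) (hr _ _) (hr _ _) (by simp [c1, S.chain]) (hr _ _)
      (fun v => by
        have := S.cnt9 v; rw [hP, hQ] at this
        simp only [List.count_append, List.count_reverse, count_cons_dl, List.count_nil] at *
        omega) v
    have h2 := S.span9 hG v
    rw [hP, hQ] at h2
    simp only [List.count_append, List.count_reverse, count_cons_dl, List.count_nil] at *
    omega
  · refine nil_of_count fun v => ?_
    have := span_flat hG (a0 := p) (a1 := S.a 1) (a2 := S.b 1) (b0 := q) (b1 := S.a 0)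
      (b2 := S.b 0) (p00 := []) (p01 := A.reverse) (p02 := B)
      (p10 := C) (p11 := S.P 1 2 ++ S.b 2 :: (S.P 0 2).reverse) (p12 := S.P 1 0)
      (p20 := D.reverse) (p21 := (S.P 0 1).reverse)
      (p22 := (S.P 2 1).reverse ++ S.a 2 :: S.P 2 0) (by simp [h]) (by simp [c0]) (by simp [c0])
      (by simp [c1]) (by simp [S.chain]) (S.chain _ _) (by simp [c1]) (hr _ _)
      (by simp [S.chain])
      (fun v => by
        have := S.cnt9 v; rw [hP, hQ] at this
        simp only [List.count_append, List.count_reverse, count_cons_dl, List.count_nil] at *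
        omega) v
    have h2 := S.span9 hG v
    rw [hP, hQ] at h2
    simp only [List.count_append, List.count_reverse, count_cons_dl, List.count_nil] at *
    omega

theorem KS.F4 (S : KS G) (hG : Good G) {i i' j j' : Fin 3} (hi : i ≠ i') (hj : j ≠ j') {p q : V}
    (hp : p ∈ S.P i j) (hq : q ∈ S.P i' j') (h : G.Adj p q) :
    S.P i' j = [] ∧ S.P i j' = [] ∧ ∀ k l, i ≠ k → i' ≠ k → j ≠ l → j' ≠ l → S.P k l = [] := by
  refine ⟨?_, ?_, ?_⟩
  · obtain ⟨σ, h1, h2⟩ := exists_perm2 hi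
    obtain ⟨τ, h3, h4⟩ := exists_perm2 hj
    have := ((S.perm σ τ).F4_0 hG (p := p) (q := q) (by simpa [KS.perm, h1, h3] using hp)
      (by simpa [KS.perm, h2, h4] using hq) h).1
    simpa [KS.perm, h2, h3] using this
  · obtain ⟨σ, h1, h2⟩ := exists_perm2 hi.symm
    obtain ⟨τ, h3, h4⟩ := exists_perm2 hj.symm
    have := ((S.perm σ τ).F4_0 hG (p := q) (q := p) (by simpa [KS.perm, h1, h3] using hq)
      (by simpa [KS.perm, h2, h4] using hp) h.symm).1
    simpa [KS.perm, h2, h3] using this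
  · intro k l h1 h2 h3 h4
    obtain ⟨σ, e1, e2, e3⟩ := exists_perm hi h1 h2
    obtain ⟨τ, e4, e5, e6⟩ := exists_perm hj h3 h4
    have := ((S.perm σ τ).F4_0 hG (p := p) (q := q) (by simpa [KS.perm, e1, e4] using hp)
      (by simpa [KS.perm, e2, e5] using hq) h).2
    simpa [KS.perm, e3, e6] using this

theorem KS.F5_0 (S : KS G) (hG : Good G) {p p' : V} (hp : p ∈ S.P 0 0) (hp' : p' ∈ S.P 0 0)
    (h1 : G.Adj p (S.a 1)) (h2 : G.Adj p' (S.a 2)) : False := by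
  obtain ⟨A, B, hP⟩ := List.append_of_mem hp
  let S' := S.shift0 hP h1
  have e20 : S'.P 2 0 = S.P 2 0 ++ S.b 0 :: B.reverse := rfl
  have e00 : S'.P 0 0 = A := rfl
  have ea2 : S'.a 2 = S.a 2 := rfl
  have eb0 : S'.b 0 = p := rfl
  rw [hP] at hp'
  rcases List.mem_append.1 hp' with h | h
  · have := S'.F3 hG (i := 0) (i' := 2) (j := 0) (by decide) (p := p') (by rw [e00]; exact h) h2
    rw [e20] at this
    simp at this
  · rcases List.mem_cons.1 h with rfl | h
    · have := S'.F1ab hG 2 0 h2.symm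
      rw [e20] at this
      simp at this
    · obtain ⟨C, D, hC⟩ := List.append_of_mem (List.mem_reverse.2 h)
      have := S'.F1a hG 2 0 (A := S.P 2 0 ++ S.b 0 :: C) (p := p') (B := D)
        (by rw [e20, hC]; simp) h2.symm
      simp at this

theorem KS.F5 (S : KS G) (hG : Good G) {i i' i'' j : Fin 3} (h12 : i ≠ i') (h13 : i ≠ i'')
    (h23 : i' ≠ i'') {p p' : V} (hp : p ∈ S.P i j) (hp' : p' ∈ S.P i j)
    (h1 : G.Adj p (S.a i')) (h2 : G.Adj p' (S.a i'')) : False := by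
  obtain ⟨σ, e1, e2, e3⟩ := exists_perm h12 h13 h23
  refine (S.perm σ (Equiv.swap 0 j)).F5_0 hG (p := p) (p' := p') ?_ ?_ ?_ ?_ <;>
    simpa [KS.perm, e1, e2, e3]

theorem KS.F5' (S : KS G) (hG : Good G) {i j j' j'' : Fin 3} (h12 : j ≠ j') (h13 : j ≠ j'')
    (h23 : j' ≠ j'') {p p' : V} (hp : p ∈ S.P i j) (hp' : p' ∈ S.P i j)
    (h1 : G.Adj p (S.b j')) (h2 : G.Adj p' (S.b j'')) : False :=
  S.tr.F5 hG h12 h13 h23 (j := i) (p := p) (p' := p') (by simpa [KS.tr]) (by simpa [KS.tr]) h1 h2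

end Facts

section SplitSec
variable {V : Type*} {G : SimpleGraph V}

theorem connected_of_closed {B Y : Set V} (hB : (G.induce B).Connected) {u : V} (hu : u ∈ B)
    (huY : u ∉ Y)
    (hcl : ∀ w ∈ B, w ≠ u → ∀ w' ∈ Y, G.Adj w w' → w ∈ Y) : (G.induce (B \ Y)).Connected := by
  have key : ∀ (x y : B) (p : (G.induce B).Walk x y) (hy : y.1 = u) (hx : x.1 ∉ Y),
      (G.induce (B \ Y)).Reachable ⟨u, hu, huY⟩ ⟨x.1, x.2, hx⟩ := by
    intro x y p
    induction p with
    | nil =>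
      intro hy hx
      have : (⟨u, hu, huY⟩ : ↥(B \ Y)) = ⟨_, Subtype.coe_prop _, hx⟩ := Subtype.ext hy.symm
      rw [this]
    | @cons x x' y h p ih =>
      intro hy hx
      have hadj : G.Adj x.1 x'.1 := h
      by_cases hxu : x.1 = u
      · have : (⟨u, hu, huY⟩ : ↥(B \ Y)) = ⟨x.1, x.2, hx⟩ := Subtype.ext hxu.symm
        rw [this]
      · by_cases hx' : x'.1 ∈ Y
        · exact absurd (hcl x.1 x.2 hxu x'.1 hx' hadj) hx
        · refine (ih hy hx').trans (SimpleGraph.Adj.reachable ?_)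
          exact hadj.symm
  rw [connected_iff_exists_forall_reachable]
  refine ⟨⟨u, hu, huY⟩, ?_⟩
  rintro ⟨x, hx, hxY⟩
  obtain ⟨p⟩ := hB.preconnected ⟨x, hx⟩ ⟨u, hu⟩
  exact key _ _ p rfl hxY

theorem split_set {B : Set V} (hB : (G.induce B).Connected) {u v : V} (hu : u ∈ B) (hv : v ∈ B)
    (huv : u ≠ v) : ∃ Y ⊆ B, u ∉ Y ∧ v ∈ Y ∧ (G.induce Y).Connected ∧
      (G.induce (B \ Y)).Connected ∧ ∃ x ∈ B \ Y, ∃ y ∈ Y, G.Adj x y := by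
  set Fm : Set (Set V) := {C | v ∈ C ∧ C ⊆ B \ {u} ∧ (G.induce C).Connected} with hFm
  have hsing : ({v} : Set V) ∈ Fm := by
    refine ⟨rfl, ?_, ?_⟩
    · rintro _ rfl; exact ⟨hv, huv.symm⟩
    · exact SimpleGraph.Connected.mk (fun a b => by rw [Subsingleton.elim a b])
  set Y := ⋃₀ Fm with hY
  have hYB : Y ⊆ B := Set.sUnion_subset fun C hC x hx => (hC.2.1 hx).1
  have huY : u ∉ Y := by
    rintro ⟨C, hC, hx⟩
    exact (hC.2.1 hx).2 rfl
  have hvY : v ∈ Y := ⟨{v}, hsing, rfl⟩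
  have hYc : (G.induce Y).Connected := by
    refine induce_sUnion_connected_of_pairwise_not_disjoint ⟨_, hsing⟩ ?_ ?_
    · intro C D hC hD
      exact ⟨v, hC.1, hD.1⟩
    · intro C hC
      exact hC.2.2
  refine ⟨Y, hYB, huY, hvY, hYc, connected_of_closed hB hu huY ?_, ?_⟩
  · rintro w hw hwu w' ⟨C, hC, hw'⟩ hadj
    refine ⟨C ∪ {w}, ⟨Or.inl hC.1, ?_, ?_⟩, Or.inr rfl⟩
    · rintro x (hx | rfl)
      · exact hC.2.1 hx
      · exact ⟨hw, hwu⟩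
    · refine connected_induce_union hC.2.2.preconnected ?_ hw' (Set.mem_singleton w) hadj.symm
      intro a b
      rw [Subsingleton.elim a b]
  · obtain ⟨p⟩ := hB.preconnected ⟨u, hu⟩ ⟨v, hv⟩
    obtain ⟨d, -, h1, h2⟩ := p.exists_boundary_dart {x | x.1 ∉ Y} huY (fun h => h hvY)
    exact ⟨d.fst.1, ⟨d.fst.2, h1⟩, d.snd.1, not_not.1 h2, d.adj⟩

/-- connectedness of a union of label classes -/
def cn (G : SimpleGraph V) (f : V → ℕ) (s : Finset ℕ) : Prop := (G.induce {v | f v ∈ s}).Connected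

def cts (G : SimpleGraph V) (f : V → ℕ) (s t : Finset ℕ) : Prop :=
  ∃ v w, f v ∈ s ∧ f w ∈ t ∧ G.Adj v w

theorem cts.symm {f : V → ℕ} {s t : Finset ℕ} (h : cts G f s t) : cts G f t s := by
  obtain ⟨v, w, h1, h2, h3⟩ := h
  exact ⟨w, v, h2, h1, h3.symm⟩

theorem cts.mono {f : V → ℕ} {s t s' t' : Finset ℕ} (h : cts G f s t) (h1 : s ⊆ s') (h2 : t ⊆ t') :
    cts G f s' t' := by
  obtain ⟨v, w, h3, h4, h5⟩ := h
  exact ⟨v, w, h1 h3, h2 h4, h5⟩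

theorem cn.union {f : V → ℕ} {s t : Finset ℕ} (h1 : cn G f s) (h2 : cn G f t) (h : cts G f s t) :
    cn G f (s ∪ t) := by
  obtain ⟨v, w, h3, h4, h5⟩ := h
  have := connected_induce_union h1.preconnected h2.preconnected h3 h4 h5
  have e : {v | f v ∈ s ∪ t} = {v | f v ∈ s} ∪ {v | f v ∈ t} := by ext; simp
  unfold cn
  rwa [e]

theorem minor_labels {W : Type*} {H : SimpleGraph W} (f : V → ℕ) (s : W → Finset ℕ)
    (hc : ∀ w, cn G f (s w)) (hd : Pairwise fun w w' => Disjoint (s w) (s w'))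
    (ha : ∀ w w', H.Adj w w' → cts G f (s w) (s w')) : IsMinor H G := by
  refine ⟨fun w => {v | f v ∈ s w}, ?_, hc, ?_, ?_⟩
  · intro w
    obtain ⟨x⟩ := (hc w).nonempty
    exact ⟨x.1, x.2⟩
  · intro w w' hne
    refine Set.disjoint_left.2 fun v hv hv' => ?_
    exact Finset.disjoint_left.1 (hd hne) hv hv'
  · intro w w' h
    obtain ⟨v, w, h3, h4, h5⟩ := ha w w' h
    exact ⟨v, h3, w, h4, h5⟩

theorem k33_labels (f : V → ℕ) (s t : Fin 3 → Finset ℕ) (hs : ∀ i, cn G f (s i))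
    (ht : ∀ i, cn G f (t i)) (hd : ∀ i j, i ≠ j → Disjoint (s i) (s j))
    (hd' : ∀ i j, i ≠ j → Disjoint (t i) (t j)) (hst : ∀ i j, Disjoint (s i) (t j))
    (h : ∀ i j, cts G f (s i) (t j)) : IsMinor K33 G := by
  refine minor_labels f (Sum.elim s t) ?_ ?_ ?_
  · rintro (i | j)
    · exact hs i
    · exact ht j
  · rintro (i | i) (j | j) hne
    · exact hd i j (fun h => hne (by rw [h]))
    · exact hst i j
    · exact (hst j i).symm
    · exact hd' i j (fun h => hne (by rw [h]))
  · rintro (i | i) (j | j) hne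
    · simp [K33] at hne
    · exact h i j
    · exact (h j i).symm
    · simp [K33] at hne

structure K5m (G : SimpleGraph V) (f : V → ℕ) (s : Fin 5 → Finset ℕ) : Prop where
  cn : ∀ i, cn G f (s i)
  dj : ∀ i j, i ≠ j → Disjoint (s i) (s j)
  ct : ∀ i j, i ≠ j → cts G f (s i) (s j)

theorem K5m.pendant (hG : Good G) {f : V → ℕ} {s : Fin 5 → Finset ℕ} (h : K5m G f s)
    (p : Finset ℕ) (hp : _root_.cn G f p) (hd : ∀ i, Disjoint (s i) p) (i : Fin 5)
    (hi : cts G f (s i) p) : False := by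
  apply hG.nK5p
  refine minor_labels f (fun w => match w with
    | none => p
    | some j => s (Equiv.swap 0 i j)) ?_ ?_ ?_
  · rintro (_ | j)
    · exact hp
    · exact h.cn _
  · rintro (_ | j) (_ | j') hne
    · exact absurd rfl hne
    · exact (hd _).symm
    · exact hd _
    · refine h.dj _ _ fun h => hne ?_
      rw [(Equiv.injective _) h]
  · have main : ∀ (w w' : Option (Fin 5)), (match w, w' with
        | some i, some j => i ≠ j
        | none, some j => j = 0
        | _, _ => False) → cts G f ((fun w => match w with
    | none => p
    | some j => s (Equiv.swap 0 i j)) w) ((fun w => match w with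
    | none => p
    | some j => s (Equiv.swap 0 i j)) w') := by
      rintro (_ | j) (_ | j') hr
      · exact hr.elim
      · simp only at hr
        subst hr
        simpa using hi.symm
      · exact hr.elim
      · exact h.ct _ _ fun h => hr ((Equiv.injective _) h)
    rintro w w' hne
    rw [K5plus, SimpleGraph.fromRel_adj] at hne
    rcases hne.2 with h | h
    · exact main _ _ h
    · exact (main _ _ h).symm

theorem K5m.span (hG : Good G) [Fintype V] {f : V → ℕ} {s : Fin 5 → Finset ℕ} (h : K5m G f s)
    (t : V) : ∃ i, f t ∈ s i := by
  classical
  by_contra hcon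
  push Not at hcon
  obtain ⟨⟨x, hx⟩⟩ := (h.cn 0).nonempty
  obtain ⟨p⟩ := hG.conn.preconnected x t
  obtain ⟨d, -, h1, h2⟩ := p.exists_boundary_dart {v | ∃ i, f v ∈ s i} ⟨0, hx⟩ (by simpa using hcon)
  obtain ⟨i, hi⟩ := h1
  have hadj := d.adj
  set y := d.snd
  have hy : ∀ i, f y ∉ s i := by simpa using h2
  obtain ⟨w, hw⟩ := Infinite.exists_notMem_finset
    ((Finset.univ.image f) ∪ (Finset.univ : Finset (Fin 5)).biUnion s)
  simp only [Finset.mem_union, Finset.mem_image, Finset.mem_univ, true_and, Finset.mem_biUnion,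
    not_or, not_exists] at hw
  have hset : ∀ i v, Function.update f y w v ∈ s i ↔ f v ∈ s i := by
    intro i v
    by_cases hv : v = y
    · subst hv; simp [hw.2, hy]
    · simp [hv]
  have hm : K5m G (Function.update f y w) s := by
    refine ⟨fun i => ?_, h.dj, fun i j hij => ?_⟩
    · have := h.cn i
      unfold _root_.cn at this ⊢
      have e : {v | Function.update f y w v ∈ s i} = {v | f v ∈ s i} := Set.ext (hset i)
      rw [e]; exact this
    · obtain ⟨a, b, h1, h2, h3⟩ := h.ct i j hij
      exact ⟨a, b, (hset _ _).2 h1, (hset _ _).2 h2, h3⟩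
  refine hm.pendant hG {w} ?_ ?_ i ⟨d.fst, y, (hset _ _).2 hi, by simp, hadj⟩
  · have : {v | Function.update f y w v ∈ ({w} : Finset ℕ)} = {y} := by
      ext v
      by_cases hv : v = y
      · subst hv; simp
      · simp [hv, hw.1]
    unfold _root_.cn
    rw [this]
    exact SimpleGraph.Connected.mk (fun a b => by rw [Subsingleton.elim a b])
  · intro i
    simpa using hw.2 i

/-- splitting a label class -/
theorem split_label [Fintype V] (f : V → ℕ) (x : ℕ) (hx : cn G f {x}) {u v : V} (hu : f u = x)
    (hv : f v = x) (huv : u ≠ v) : ∃ (w : ℕ) (f' : V → ℕ), w ≠ x ∧ (∀ t, f t ≠ w) ∧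
      f' u = x ∧ f' v = w ∧
      cn G f' {x} ∧ cn G f' {w} ∧ cts G f' {x} {w} ∧ (∀ t, f t ≠ x → f' t = f t) ∧
      (∀ t, f t = x → f' t = x ∨ f' t = w) := by
  classical
  obtain ⟨w, hw⟩ := Infinite.exists_notMem_finset (Finset.univ.image f)
  simp only [Finset.mem_image, Finset.mem_univ, true_and, not_exists] at hw
  have hwx : w ≠ x := fun h => hw u (by rw [hu, h])
  have hx' : (G.induce {v | f v = x}).Connected := by
    unfold cn at hx
    have e : {v | f v ∈ ({x} : Finset ℕ)} = {v | f v = x} := by ext; simp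
    rwa [e] at hx
  obtain ⟨Y, hYB, huY, hvY, hYc, hXc, a, ha, b, hb, hab⟩ := split_set hx' hu hv huv
  let f' : V → ℕ := fun t => if t ∈ Y then w else f t
  have e1 : ∀ t, f' t = x ↔ t ∈ {v | f v = x} \ Y := by
    intro t
    by_cases ht : t ∈ Y <;> simp [f', ht, hwx]
  have e2 : ∀ t, f' t = w ↔ t ∈ Y := by
    intro t
    by_cases ht : t ∈ Y <;> simp [f', ht, hw]
  refine ⟨w, f', hwx, hw, (e1 _).2 ⟨hu, huY⟩, (e2 _).2 hvY, ?_, ?_, ⟨a, b, ?_, ?_, hab⟩, ?_, ?_⟩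
  · unfold cn
    have : {v | f' v ∈ ({x} : Finset ℕ)} = {v | f v = x} \ Y := by
      ext t; rw [← e1]; simp
    rwa [this]
  · unfold cn
    have : {v | f' v ∈ ({w} : Finset ℕ)} = Y := by
      ext t; rw [← e2]; simp
    rwa [this]
  · simpa using (e1 a).2 ha
  · simpa using (e2 b).2 hb
  · intro t ht
    have : t ∉ Y := fun h => ht (hYB h)
    simp [f', this]
  · intro t ht
    by_cases h : t ∈ Y
    · exact Or.inr ((e2 t).2 h)
    · exact Or.inl ((e1 t).2 ⟨ht, h⟩)

end SplitSec

section K5Case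
set_option linter.all false
variable {V : Type*} [Fintype V] {G : SimpleGraph V}

theorem k5m_of5 {f : V → ℕ} {s0 s1 s2 s3 s4 : Finset ℕ} (h0 : cn G f s0) (h1 : cn G f s1)
    (h2 : cn G f s2) (h3 : cn G f s3) (h4 : cn G f s4)
    (hd : List.Pairwise (fun s t => Disjoint s t) [s0, s1, s2, s3, s4])
    (hc : List.Pairwise (cts G f) [s0, s1, s2, s3, s4]) : K5m G f ![s0, s1, s2, s3, s4] := by
  simp only [List.pairwise_cons, List.mem_cons, List.not_mem_nil, or_false, forall_eq_or_imp,
    forall_eq, false_imp_iff, implies_true, and_true, List.Pairwise.nil] at hd hc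
  obtain ⟨⟨_, _, _, _⟩, ⟨_, _, _⟩, ⟨_, _⟩, _⟩ := hd
  have h01 := hc.1.1
  have h02 := hc.1.2.1
  have h03 := hc.1.2.2.1
  have h04 := hc.1.2.2.2
  have h12 := hc.2.1.1
  have h13 := hc.2.1.2.1
  have h14 := hc.2.1.2.2
  have h23 := hc.2.2.1.1
  have h24 := hc.2.2.1.2
  have h34 := hc.2.2.2
  refine ⟨?_, ?_, ?_⟩
  · intro i; fin_cases i <;> assumption
  · intro i j hij
    fin_cases i <;> fin_cases j <;> first | exact absurd rfl hij | skip
    all_goals simp only [Fin.zero_eta, Fin.mk_one, Fin.reduceFinMk, Matrix.cons_val]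
    all_goals first | assumption | (apply Disjoint.symm; assumption)
  · intro i j hij
    fin_cases i <;> fin_cases j <;> first | exact absurd rfl hij | skip
    all_goals simp only [Fin.zero_eta, Fin.mk_one, Fin.reduceFinMk, Matrix.cons_val]
    all_goals first | assumption | (apply cts.symm; assumption)

theorem k33_of6 {f : V → ℕ} {s0 s1 s2 t0 t1 t2 : Finset ℕ} (h0 : cn G f s0) (h1 : cn G f s1)
    (h2 : cn G f s2) (h3 : cn G f t0) (h4 : cn G f t1) (h5 : cn G f t2)
    (hd : List.Pairwise (fun s t => Disjoint s t) [s0, s1, s2, t0, t1, t2])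
    (h00 : cts G f s0 t0) (h01 : cts G f s0 t1) (h02 : cts G f s0 t2)
    (h10 : cts G f s1 t0) (h11 : cts G f s1 t1) (h12 : cts G f s1 t2)
    (h20 : cts G f s2 t0) (h21 : cts G f s2 t1) (h22 : cts G f s2 t2) : IsMinor K33 G := by
  simp only [List.pairwise_cons, List.mem_cons, List.not_mem_nil, or_false, forall_eq_or_imp,
    forall_eq, false_imp_iff, implies_true, and_true, List.Pairwise.nil] at hd
  obtain ⟨⟨_, _, _, _, _⟩, ⟨_, _, _, _⟩, ⟨_, _, _⟩, ⟨_, _⟩, _⟩ := hd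
  refine k33_labels f ![s0, s1, s2] ![t0, t1, t2] ?_ ?_ ?_ ?_ ?_ ?_
  · intro i; fin_cases i <;> assumption
  · intro i; fin_cases i <;> assumption
  · intro i j hij
    fin_cases i <;> fin_cases j <;> first | exact absurd rfl hij | skip
    all_goals simp only [Fin.zero_eta, Fin.mk_one, Fin.reduceFinMk, Matrix.cons_val]
    all_goals first | assumption | (apply Disjoint.symm; assumption)
  · intro i j hij
    fin_cases i <;> fin_cases j <;> first | exact absurd rfl hij | skip
    all_goals simp only [Fin.zero_eta, Fin.mk_one, Fin.reduceFinMk, Matrix.cons_val]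
    all_goals first | assumption | (apply Disjoint.symm; assumption)
  · intro i j
    fin_cases i <;> fin_cases j
    all_goals simp only [Fin.zero_eta, Fin.mk_one, Fin.reduceFinMk, Matrix.cons_val]
    all_goals assumption
  · intro i j
    fin_cases i <;> fin_cases j <;> assumption

structure Cfg (G : SimpleGraph V) (f : V → ℕ) (x y z c d e : ℕ) : Prop where
  nd : [x, y, z, c, d, e].Nodup
  cx : cn G f {x}
  cy : cn G f {y}
  cz : cn G f {z}
  cc : cn G f {c}
  cd : cn G f {d}
  ce : cn G f {e}
  xy : cts G f {x} {y}
  yz : cts G f {y} {z}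
  xc : cts G f {x} {c}
  xd : cts G f {x} {d}
  xe : cts G f {x} {e}
  zc : cts G f {z} {c}
  zd : cts G f {z} {d}
  ze : cts G f {z} {e}
  cd' : cts G f {c} {d}
  ce' : cts G f {c} {e}
  de' : cts G f {d} {e}

variable {f : V → ℕ} {x y z c d e : ℕ}

theorem Cfg.swap (h : Cfg G f x y z c d e) : Cfg G f z y x c d e :=
  { h with
    nd := by have := h.nd; simp only [List.nodup_cons, List.mem_cons, List.not_mem_nil] at this ⊢; grind
    cx := h.cz, cz := h.cx, xy := h.yz.symm, yz := h.xy.symm, xc := h.zc, zc := h.xc,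
    xd := h.zd, zd := h.xd, xe := h.ze, ze := h.xe }

theorem Cfg.cd_swap (h : Cfg G f x y z c d e) : Cfg G f x y z d c e :=
  { h with
    nd := by have := h.nd; simp only [List.nodup_cons, List.mem_cons, List.not_mem_nil] at this ⊢; grind
    cc := h.cd, cd := h.cc, xc := h.xd, xd := h.xc, zc := h.zd, zd := h.zc, cd' := h.cd'.symm,
    ce' := h.de', de' := h.ce' }

theorem Cfg.de_swap (h : Cfg G f x y z c d e) : Cfg G f x y z c e d :=
  { h with
    nd := by have := h.nd; simp only [List.nodup_cons, List.mem_cons, List.not_mem_nil] at this ⊢; grind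
    cd := h.ce, ce := h.cd, xd := h.xe, xe := h.xd, zd := h.ze, ze := h.zd, cd' := h.ce',
    ce' := h.cd', de' := h.de'.symm }

theorem Cfg.not_yc (hK : ¬ IsMinor K33 G) (h : Cfg G f x y z c d e) : ¬ cts G f {y} {c} := by
  intro hyc
  refine hK (k33_of6 h.cx h.cz h.cc h.cy h.cd h.ce ?_ h.xy h.xd h.xe h.yz.symm h.zd h.ze
    hyc.symm h.cd' h.ce')
  have := h.nd
  simp only [List.nodup_cons, List.mem_cons, List.not_mem_nil, List.pairwise_cons, or_false, forall_eq_or_imp,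
    forall_eq, false_imp_iff, implies_true, and_true, List.Pairwise.nil,
    Finset.disjoint_singleton] at this ⊢
  grind

theorem split_label2 {f : V → ℕ} {x : ℕ} (hx : cn G f {x}) {u v : V} (hu : f u = x)
    (hv : f v = x) (huv : u ≠ v) : ∃ (w : ℕ) (f' : V → ℕ), f' u = x ∧ f' v = w ∧
      cn G f' {x} ∧ cn G f' {w} ∧ cts G f' {x} {w} ∧
      (∀ j, cn G f {j} → w ≠ j) ∧
      (∀ j, cn G f {j} → j ≠ x → cn G f' {j}) ∧
      (∀ i j, cn G f {i} → cn G f {j} → i ≠ x → j ≠ x → cts G f {i} {j} → cts G f' {i} {j}) ∧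
      (∀ j, j ≠ x → cts G f {x} {j} → cts G f' {x} {j} ∨ cts G f' {w} {j}) ∧
      (∀ t, f t ≠ x → f' t = f t) ∧ (∀ t, f t = x → f' t = x ∨ f' t = w) ∧
      (∀ t, f t ≠ w) := by
  obtain ⟨w, f', h1, h2, h3, h4, h5, h6, h7, h8, h9⟩ := split_label f x hx hu hv huv
  have hw : ∀ j, cn G f {j} → w ≠ j := by
    rintro j hj rfl
    obtain ⟨⟨t, ht⟩⟩ := hj.nonempty
    exact h2 t (by simpa using ht)
  have iff1 : ∀ j, cn G f {j} → j ≠ x → ∀ t, f' t = j ↔ f t = j := by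
    intro j hj hjx t
    by_cases ht : f t = x
    · have := hw j hj
      rcases h9 t ht with h | h <;> rw [h, ht] <;> grind
    · rw [h8 t ht]
  refine ⟨w, f', h3, h4, h5, h6, h7, hw, ?_, ?_, ?_, h8, h9, h2⟩
  · intro j hj hjx
    have e : {v | f' v ∈ ({j} : Finset ℕ)} = {v | f v ∈ ({j} : Finset ℕ)} := by
      ext t; simp [iff1 j hj hjx]
    unfold cn
    rw [e]; exact hj
  · rintro i j hi hj hix hjx ⟨a, b, ha, hb, hab⟩
    refine ⟨a, b, ?_, ?_, hab⟩
    · simp only [Finset.mem_singleton] at *; exact (iff1 i hi hix _).2 ha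
    · simp only [Finset.mem_singleton] at *; exact (iff1 j hj hjx _).2 hb
  · rintro j hjx ⟨a, b, ha, hb, hab⟩
    simp only [Finset.mem_singleton] at ha hb
    have hb' : f' b = j := by rw [h8 b (by rw [hb]; exact hjx), hb]
    rcases h9 a ha with h | h
    · exact Or.inl ⟨a, b, by simp [h], by simp [hb'], hab⟩
    · exact Or.inr ⟨a, b, by simp [h], by simp [hb'], hab⟩

theorem union_pair (x y : ℕ) : ({x} ∪ {y} : Finset ℕ) = {x, y} := rfl

/-- auxiliary: the core contradiction for a split set -/
theorem Cfg.lemD_aux (hK : ¬ IsMinor K33 G) {f : V → ℕ} {p q y z l m k : ℕ}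
    (nd : [p, q, y, z, l, m, k].Nodup) (cp : cn G f {p}) (cq : cn G f {q}) (cy : cn G f {y})
    (cz : cn G f {z}) (cl : cn G f {l}) (cm : cn G f {m}) (ck : cn G f {k})
    (hpy : cts G f {p} {y}) (hyz : cts G f {y} {z}) (hpq : cts G f {p} {q})
    (zm : cts G f {z} {m}) (zk : cts G f {z} {k}) (lm : cts G f {l} {m})
    (lk : cts G f {l} {k}) (pl : cts G f {p} {l}) (qm : cts G f {q} {m}) (qk : cts G f {q} {k}) :
    False := by
  refine hK (k33_of6 (s0 := {p, y}) (cp.union cy hpy) cm ck cq cz cl ?_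
    (hpq.mono (by simp) (by simp)) (hyz.mono (by simp) (by simp)) (pl.mono (by simp) (by simp))
    qm.symm zm.symm lm.symm qk.symm zk.symm lk.symm)
  simp only [List.nodup_cons, List.mem_cons, List.not_mem_nil, List.pairwise_cons, or_false, forall_eq_or_imp,
    forall_eq, false_imp_iff, implies_true, and_true, List.Pairwise.nil,
    Finset.disjoint_left, Finset.mem_insert, Finset.mem_singleton] at nd ⊢
  grind

set_option maxHeartbeats 1600000 in
theorem Cfg.lemD (hG : Good G) (hK : ¬ IsMinor K33 G) (h : Cfg G f x y z c d e) {a t y0 : V}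
    (ha : f a = x) (ht : f t = x) (hat : a ≠ t) (hy0 : f y0 = y) (h1 : G.Adj y0 a)
    (h2 : G.Adj y0 t) : False := by
  obtain ⟨w, f', ea, et, cx, cw, xw, hw, hcn, hct, hcx, hne, -, -⟩ := split_label2 h.cx ha ht hat
  have nd := h.nd
  simp only [List.nodup_cons, List.mem_cons, List.not_mem_nil] at nd
  have wx := hw _ h.cx
  have wy := hw _ h.cy
  have wz := hw _ h.cz
  have wc := hw _ h.cc
  have wd := hw _ h.cd
  have we := hw _ h.ce
  have cy := hcn _ h.cy (by grind)
  have cz := hcn _ h.cz (by grind)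
  have cc := hcn _ h.cc (by grind)
  have cd := hcn _ h.cd (by grind)
  have ce := hcn _ h.ce (by grind)
  have ey : f' y0 = y := by rw [hne y0 (by grind), hy0]
  have yz := hct _ _ h.cy h.cz (by grind) (by grind) h.yz
  have zc := hct _ _ h.cz h.cc (by grind) (by grind) h.zc
  have zd := hct _ _ h.cz h.cd (by grind) (by grind) h.zd
  have ze := hct _ _ h.cz h.ce (by grind) (by grind) h.ze
  have cd' := hct _ _ h.cc h.cd (by grind) (by grind) h.cd'
  have ce' := hct _ _ h.cc h.ce (by grind) (by grind) h.ce'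
  have de' := hct _ _ h.cd h.ce (by grind) (by grind) h.de'
  have xy : cts G f' {x} {y} := ⟨a, y0, by simp [ea], by simp [ey], h1.symm⟩
  have wy' : cts G f' {w} {y} := ⟨t, y0, by simp [et], by simp [ey], h2.symm⟩
  have full1 : ∀ p q, (p = x ∧ q = w ∨ p = w ∧ q = x) → cts G f' {p} {c} → cts G f' {p} {d} →
      cts G f' {p} {e} → False := by
    intro p q hpq pc pd pe
    have cp : cn G f' {p} := by rcases hpq with ⟨rfl, rfl⟩ | ⟨rfl, rfl⟩ <;> assumption
    have cq : cn G f' {q} := by rcases hpq with ⟨rfl, rfl⟩ | ⟨rfl, rfl⟩ <;> assumption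
    have py : cts G f' {p} {y} := by rcases hpq with ⟨rfl, rfl⟩ | ⟨rfl, rfl⟩ <;> assumption
    have pq : cts G f' {p} {q} := by
      rcases hpq with ⟨rfl, rfl⟩ | ⟨rfl, rfl⟩
      · assumption
      · exact xw.symm
    have hm : K5m G f' ![{p, y}, {z}, {c}, {d}, {e}] := by
      refine k5m_of5 (cp.union cy py) cz cc cd ce ?_ ?_
      · simp only [List.mem_cons, List.not_mem_nil, List.pairwise_cons, or_false, forall_eq_or_imp,
          forall_eq, false_imp_iff, implies_true, and_true, List.Pairwise.nil,
          Finset.disjoint_left, Finset.mem_insert, Finset.mem_singleton]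
        grind
      · have i1 : cts G f' {p, y} {z} := yz.mono (by simp) (by simp)
        have i2 : cts G f' {p, y} {c} := pc.mono (by simp) (by simp)
        have i3 : cts G f' {p, y} {d} := pd.mono (by simp) (by simp)
        have i4 : cts G f' {p, y} {e} := pe.mono (by simp) (by simp)
        simp [i1, i2, i3, i4, zc, zd, ze, cd', ce', de']
    refine hm.pendant hG {q} cq ?_ 0 (pq.mono (by simp) (by simp))
    intro i
    simp only [Finset.disjoint_singleton_right]
    fin_cases i <;> simp <;> grind
  have f1 := full1 x w (Or.inl ⟨rfl, rfl⟩)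
  have f2 := full1 w x (Or.inr ⟨rfl, rfl⟩)
  have o1 := hcx c (by grind) h.xc
  have o2 := hcx d (by grind) h.xd
  have o3 := hcx e (by grind) h.xe
  have D1 : ∀ l m k, [x, w, y, z, l, m, k].Nodup → cn G f' {l} → cn G f' {m} → cn G f' {k} →
      cts G f' {z} {l} → cts G f' {z} {m} → cts G f' {z} {k} →
      cts G f' {l} {m} → cts G f' {l} {k} → cts G f' {x} {l} → cts G f' {w} {m} →
      cts G f' {w} {k} → False := fun l m k nd a1 a2 a3 a4 a5 a6 a7 a8 a9 a10 a11 =>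
    Cfg.lemD_aux hK nd cx cw cy cz a1 a2 a3 xy yz xw a5 a6 a7 a8 a9 a10 a11
  have D2 : ∀ l m k, [w, x, y, z, l, m, k].Nodup → cn G f' {l} → cn G f' {m} → cn G f' {k} →
      cts G f' {z} {l} → cts G f' {z} {m} → cts G f' {z} {k} →
      cts G f' {l} {m} → cts G f' {l} {k} → cts G f' {w} {l} → cts G f' {x} {m} →
      cts G f' {x} {k} → False := fun l m k nd a1 a2 a3 a4 a5 a6 a7 a8 a9 a10 a11 =>
    Cfg.lemD_aux hK nd cw cx cy cz a1 a2 a3 wy' yz xw.symm a5 a6 a7 a8 a9 a10 a11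
  have n1 : [x, w, y, z, c, d, e].Nodup := by
    simp only [List.nodup_cons, List.mem_cons, List.not_mem_nil]; grind
  have n2 : [x, w, y, z, d, c, e].Nodup := by
    simp only [List.nodup_cons, List.mem_cons, List.not_mem_nil]; grind
  have n3 : [x, w, y, z, e, c, d].Nodup := by
    simp only [List.nodup_cons, List.mem_cons, List.not_mem_nil]; grind
  have n4 : [w, x, y, z, c, d, e].Nodup := by
    simp only [List.nodup_cons, List.mem_cons, List.not_mem_nil]; grind
  have n5 : [w, x, y, z, d, c, e].Nodup := by
    simp only [List.nodup_cons, List.mem_cons, List.not_mem_nil]; grind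
  have n6 : [w, x, y, z, e, c, d].Nodup := by
    simp only [List.nodup_cons, List.mem_cons, List.not_mem_nil]; grind
  have g1 := D1 c d e n1 cc cd ce zc zd ze cd' ce'
  have g2 := D1 d c e n2 cd cc ce zd zc ze cd'.symm de'
  have g3 := D1 e c d n3 ce cc cd ze zc zd ce'.symm de'.symm
  have g4 := D2 c d e n4 cc cd ce zc zd ze cd' ce'
  have g5 := D2 d c e n5 cd cc ce zd zc ze cd'.symm de'
  have g6 := D2 e c d n6 ce cc cd ze zc zd ce'.symm de'.symm
  clear D1 D2 full1
  rcases o1 with o1 | o1 <;> rcases o2 with o2 | o2 <;> rcases o3 with o3 | o3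
  all_goals first | exact f1 o1 o2 o3 | exact f2 o1 o2 o3 | exact g1 o1 o2 o3 | exact g2 o2 o1 o3 | exact g3 o3 o1 o2 | exact g4 o1 o2 o3 | exact g5 o2 o1 o3 | exact g6 o3 o1 o2

end K5Case

section K5Case2
set_option linter.all false
variable {V : Type*} [Fintype V] {G : SimpleGraph V}
variable {f : V → ℕ} {x y z c d e : ℕ}

theorem merge_cn {g : V → ℕ} {x p : ℕ} (hx : cn G g {x}) (hp : cn G g {p})
    (hxp : cts G g {x} {p}) (hne : p ≠ x) : cn G (fun t => if g t = p then x else g t) {x} := by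
  have h := hx.union hp hxp
  have e : {v | (if g v = p then x else g v) ∈ ({x} : Finset ℕ)} = {v | g v ∈ ({x} ∪ {p} : Finset ℕ)} := by
    ext t
    simp only [Finset.mem_singleton, Set.mem_setOf_eq, Finset.mem_union]
    split_ifs with h <;> simp [h]
  unfold cn at *
  rw [e]; exact h

theorem merge_cn' {g : V → ℕ} {x p j : ℕ} (hj : cn G g {j}) (h1 : j ≠ x) (h2 : j ≠ p) :
    cn G (fun t => if g t = p then x else g t) {j} := by
  have e : {v | (if g v = p then x else g v) ∈ ({j} : Finset ℕ)} = {v | g v ∈ ({j} : Finset ℕ)} := by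
    ext t
    simp only [Finset.mem_singleton, Set.mem_setOf_eq]
    split_ifs with h 
    · rw [h]; simp [h1.symm, h2.symm]
    · rfl
  unfold cn at *
  rw [e]; exact hj

theorem merge_cts {g : V → ℕ} {x p i j : ℕ} (h : cts G g {i} {j}) (hi : i ≠ p) (hj : j ≠ p) :
    cts G (fun t => if g t = p then x else g t) {i} {j} := by
  obtain ⟨v, w, h1, h2, h3⟩ := h
  simp only [Finset.mem_singleton] at h1 h2
  exact ⟨v, w, by simp [h1, hi], by simp [h2, hj], h3⟩

theorem merge_cts' {g : V → ℕ} {x p j : ℕ} (h : cts G g {p} {j}) (hj : j ≠ p) :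
    cts G (fun t => if g t = p then x else g t) {x} {j} := by
  obtain ⟨v, w, h1, h2, h3⟩ := h
  simp only [Finset.mem_singleton] at h1 h2
  exact ⟨v, w, by simp [h1], by simp [h2, hj], h3⟩

theorem Cfg.lt_fiber {f f' : V → ℕ} {y w : ℕ} {n : ℕ} [DecidableEq V] {u : V} (hu : f u = y) (hu' : f' u ≠ w)
    (hf : ∀ t, f' t = w → f t = y) (hn : (Finset.univ.filter (f · = y)).card ≤ n + 1) :
    (Finset.univ.filter (f' · = w)).card ≤ n := by
  have : (Finset.univ.filter (f' · = w)) ⊂ (Finset.univ.filter (f · = y)) := by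
    rw [Finset.ssubset_iff_of_subset]
    · exact ⟨u, by simp [hu], by simp [hu']⟩
    · intro t; simp; exact hf t
  have := Finset.card_lt_card this
  omega

theorem Cfg.base (hG : Good G) (hK : ¬ IsMinor K33 G) (h : Cfg G f x y z c d e)
    (huniq : ∀ u v, f u = y → f v = y → u = v) : False := by
  obtain ⟨a, y0, ha, hy0, hab⟩ := h.xy
  obtain ⟨y1, b, hy1, hb, hab'⟩ := h.yz
  simp only [Finset.mem_singleton] at ha hy0 hy1 hb
  obtain rfl := huniq _ _ hy0 hy1
  obtain ⟨t, ht, hta, htb⟩ := hG.deg y0 a b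
  have nd := h.nd
  simp only [List.nodup_cons, List.mem_cons, List.not_mem_nil] at nd
  have hm : K5m G f ![{x, y}, {z}, {c}, {d}, {e}] := by
    refine k5m_of5 (h.cx.union h.cy h.xy) h.cz h.cc h.cd h.ce ?_ ?_
    · simp only [List.mem_cons, List.not_mem_nil, List.pairwise_cons, or_false, forall_eq_or_imp,
          forall_eq, false_imp_iff, implies_true, and_true, List.Pairwise.nil,
          Finset.disjoint_left, Finset.mem_insert, Finset.mem_singleton]
      grind
    · have i1 : cts G f {x, y} {z} := h.yz.mono (by simp) (by simp)
      have i2 : cts G f {x, y} {c} := h.xc.mono (by simp) (by simp)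
      have i3 : cts G f {x, y} {d} := h.xd.mono (by simp) (by simp)
      have i4 : cts G f {x, y} {e} := h.xe.mono (by simp) (by simp)
      simp [i1, i2, i3, i4, h.zc, h.zd, h.ze, h.cd', h.ce', h.de']
  have hnc : ∀ j, ¬ cts G f {y} {j} → f t ≠ j := by
    rintro j hj rfl
    exact hj ⟨y0, t, by simp [hy0], by simp, ht⟩
  obtain ⟨i, hi⟩ := hm.span hG t
  fin_cases i
  · simp at hi
    rcases hi with hi | hi
    · exact h.lemD hG hK ha hi (Ne.symm hta) hy0 hab.symm ht
    · exact ht.ne (huniq _ _ hy0 hi)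
  · simp at hi
    exact h.swap.lemD hG hK hb hi (Ne.symm htb) hy0 hab' ht
  · simp at hi
    exact hnc _ (h.not_yc hK) hi
  · simp at hi
    exact hnc _ (h.cd_swap.not_yc hK) hi
  · simp at hi
    exact hnc _ (h.de_swap.cd_swap.not_yc hK) hi

theorem Cfg.false (hG : Good G) (hK : ¬ IsMinor K33 G) [DecidableEq V] (n : ℕ) : ∀ (f : V → ℕ) (x y z c d e : ℕ),
    Cfg G f x y z c d e → (Finset.univ.filter (f · = y)).card ≤ n → False := by
  induction n with
  | zero =>
    intro f x y z c d e h hn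
    refine h.base hG hK ?_
    intro u v hu hv
    have : u ∈ (Finset.univ.filter (f · = y)) := by simp [hu]
    rw [Finset.card_eq_zero.1 (Nat.le_zero.1 hn)] at this
    simp at this
  | succ n ih =>
    intro f x y z c d e h hn
    by_contra -
    refine h.base hG hK ?_
    intro u v hu hv
    by_contra huv
    obtain ⟨w, f', eu, ev, cy, cw, yw, hw, hcn, hct, hcx, hne, hor, hnw⟩ := split_label2 h.cy hu hv huv
    have nd := h.nd
    simp only [List.nodup_cons, List.mem_cons, List.not_mem_nil, or_false, not_or, not_false_eq_true, and_true, List.nodup_nil] at nd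
    obtain ⟨⟨n1, n2, n3, n4, n5⟩, ⟨n6, n7, n8, n9⟩, ⟨n10, n11, n12⟩, ⟨n13, n14⟩, n15⟩ := nd
    have wx := hw _ h.cx
    have wy := hw _ h.cy
    have wz := hw _ h.cz
    have wc := hw _ h.cc
    have wd := hw _ h.cd
    have we := hw _ h.ce
    have cx := hcn _ h.cx n1
    have cz := hcn _ h.cz (Ne.symm n6)
    have cc := hcn _ h.cc (Ne.symm n7)
    have cd := hcn _ h.cd (Ne.symm n8)
    have ce := hcn _ h.ce (Ne.symm n9)
    have xc := hct _ _ h.cx h.cc n1 (Ne.symm n7) h.xc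
    have xd := hct _ _ h.cx h.cd n1 (Ne.symm n8) h.xd
    have xe := hct _ _ h.cx h.ce n1 (Ne.symm n9) h.xe
    have zc := hct _ _ h.cz h.cc (Ne.symm n6) (Ne.symm n7) h.zc
    have zd := hct _ _ h.cz h.cd (Ne.symm n6) (Ne.symm n8) h.zd
    have ze := hct _ _ h.cz h.ce (Ne.symm n6) (Ne.symm n9) h.ze
    have cd' := hct _ _ h.cc h.cd (Ne.symm n7) (Ne.symm n8) h.cd'
    have ce' := hct _ _ h.cc h.ce (Ne.symm n7) (Ne.symm n9) h.ce'
    have de' := hct _ _ h.cd h.ce (Ne.symm n8) (Ne.symm n9) h.de'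
    have fy : ∀ t, f' t = y → f t = y := by
      intro t ht; by_contra hh; exact hh ((hne t hh) ▸ ht)
    have fw : ∀ t, f' t = w → f t = y := by
      intro t ht; by_contra hh; exact hnw t ((hne t hh) ▸ ht)
    have sy : (Finset.univ.filter (f' · = y)).card ≤ n :=
      Cfg.lt_fiber hv (by rw [ev]; exact wy) fy hn
    have sw : (Finset.univ.filter (f' · = w)).card ≤ n :=
      Cfg.lt_fiber hu (by rw [eu]; exact wy.symm) fw hn
    have ndw : [x, w, z, c, d, e].Nodup := by
      simp only [List.nodup_cons, List.mem_cons, List.not_mem_nil, or_false, not_or, not_false_eq_true, and_true, List.nodup_nil]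
      exact ⟨⟨Ne.symm wx, n2, n3, n4, n5⟩, ⟨wz, wc, wd, we⟩, ⟨n10, n11, n12⟩, ⟨n13, n14⟩, n15⟩
    rcases hcx x n1 h.xy.symm with ox | ox <;> rcases hcx z (Ne.symm n6) h.yz with oz | oz
    · exact ih f' x y z c d e ⟨h.nd, cx, cy, cz, cc, cd, ce, ox.symm, oz, xc, xd, xe, zc, zd, ze, cd', ce', de'⟩ sy
    · refine ih (fun t => if f' t = y then x else f' t) x w z c d e ⟨ndw, merge_cn cx cy ox.symm (Ne.symm n1),
        merge_cn' cw wx wy, merge_cn' cz (Ne.symm n2) (Ne.symm n6), merge_cn' cc (Ne.symm n3) (Ne.symm n7),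
        merge_cn' cd (Ne.symm n4) (Ne.symm n8), merge_cn' ce (Ne.symm n5) (Ne.symm n9),
        merge_cts' yw wy, merge_cts oz wy (Ne.symm n6), ?_, ?_, ?_, ?_, ?_, ?_, ?_, ?_, ?_⟩ ?_
      on_goal 10 =>
        refine le_trans (Finset.card_le_card ?_) sw
        intro t; simp only [Finset.mem_filter, Finset.mem_univ, true_and]; split_ifs
        · intro hh; exact absurd hh.symm wx
        · exact id
      all_goals
        apply merge_cts
        first | assumption | (apply cts.symm; assumption)
        all_goals first | assumption | (apply Ne.symm; assumption)
    · refine ih (fun t => if f' t = w then x else f' t) x y z c d e ⟨h.nd, merge_cn cx cw ox.symm wx,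
        merge_cn' cy (Ne.symm n1) (Ne.symm wy), merge_cn' cz (Ne.symm n2) (Ne.symm wz), merge_cn' cc (Ne.symm n3) (Ne.symm wc),
        merge_cn' cd (Ne.symm n4) (Ne.symm wd), merge_cn' ce (Ne.symm n5) (Ne.symm we),
        merge_cts' yw.symm (Ne.symm wy), merge_cts oz (Ne.symm wy) (Ne.symm wz), ?_, ?_, ?_, ?_, ?_, ?_, ?_, ?_, ?_⟩ ?_
      on_goal 10 =>
        refine le_trans (Finset.card_le_card ?_) sy
        intro t; simp only [Finset.mem_filter, Finset.mem_univ, true_and]; split_ifs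
        · intro hh; exact absurd hh n1
        · exact id
      all_goals
        apply merge_cts
        first | assumption | (apply cts.symm; assumption)
        all_goals first | assumption | (apply Ne.symm; assumption)
    · exact ih f' x w z c d e ⟨ndw, cx, cw, cz, cc, cd, ce, ox.symm, oz, xc, xd, xe, zc, zd, ze, cd', ce', de'⟩ sw

theorem Cfg.false' (hG : Good G) (hK : ¬ IsMinor K33 G) (h : Cfg G f x y z c d e) : False := by
  classical
  exact Cfg.false hG hK _ f x y z c d e h le_rfl

end K5Case2

section K5Case3
set_option linter.all false
variable {V : Type*} [Fintype V] {G : SimpleGraph V}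

structure K4c (G : SimpleGraph V) (f : V → ℕ) (k l m n : ℕ) : Prop where
  ck : cn G f {k}
  cl : cn G f {l}
  cm : cn G f {m}
  cn' : cn G f {n}
  kl : cts G f {k} {l}
  km : cts G f {k} {m}
  kn : cts G f {k} {n}
  lm : cts G f {l} {m}
  ln : cts G f {l} {n}
  mn : cts G f {m} {n}

variable {f : V → ℕ} {x w k l m n : ℕ}

theorem K4c.s12 (h : K4c G f k l m n) : K4c G f l k m n :=
  ⟨h.cl, h.ck, h.cm, h.cn', h.kl.symm, h.lm, h.ln, h.km, h.kn, h.mn⟩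
theorem K4c.s23 (h : K4c G f k l m n) : K4c G f k m l n :=
  ⟨h.ck, h.cm, h.cl, h.cn', h.km, h.kl, h.kn, h.lm.symm, h.mn, h.ln⟩
theorem K4c.s34 (h : K4c G f k l m n) : K4c G f k l n m :=
  ⟨h.ck, h.cl, h.cn', h.cm, h.kl, h.kn, h.km, h.ln, h.lm, h.mn.symm⟩

theorem K4c.all (hG : Good G) (h : K4c G f k l m n) (nd : [x, w, k, l, m, n].Nodup)
    (cx : cn G f {x}) (cw : cn G f {w}) (xw : cts G f {x} {w})
    (xk : cts G f {x} {k}) (xl : cts G f {x} {l}) (xm : cts G f {x} {m}) (xn : cts G f {x} {n}) :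
    False := by
  simp only [List.nodup_cons, List.mem_cons, List.not_mem_nil] at nd
  have hm : K5m G f ![{x}, {k}, {l}, {m}, {n}] := by
    refine k5m_of5 cx h.ck h.cl h.cm h.cn' ?_ ?_
    · simp only [List.mem_cons, List.not_mem_nil, List.pairwise_cons, or_false, forall_eq_or_imp,
          forall_eq, false_imp_iff, implies_true, and_true, List.Pairwise.nil,
          Finset.disjoint_left, Finset.mem_insert, Finset.mem_singleton]
      grind
    · simp [xk, xl, xm, xn, h.kl, h.km, h.kn, h.lm, h.ln, h.mn]
  refine hm.pendant hG {w} cw ?_ 0 xw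
  intro i
  simp only [Finset.disjoint_singleton_right]
  fin_cases i <;> simp <;> grind

theorem K4c.three (hG : Good G) (hK : ¬ IsMinor K33 G) (h : K4c G f k l m n) (nd : [x, w, k, l, m, n].Nodup)
    (cx : cn G f {x}) (cw : cn G f {w}) (xw : cts G f {x} {w})
    (wk : cts G f {w} {k}) (xl : cts G f {x} {l}) (xm : cts G f {x} {m}) (xn : cts G f {x} {n}) :
    False := 
  Cfg.false' hG hK (⟨nd, cx, cw, h.ck, h.cl, h.cm, h.cn', xw, wk, xl, xm, xn, h.kl, h.km, h.kn, h.lm,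
    h.ln, h.mn⟩ : Cfg G f x w k l m n)

theorem K4c.two (hK : ¬ IsMinor K33 G) (h : K4c G f k l m n) (nd : [x, w, k, l, m, n].Nodup)
    (cx : cn G f {x}) (cw : cn G f {w}) (xw : cts G f {x} {w})
    (wk : cts G f {w} {k}) (wl : cts G f {w} {l}) (xm : cts G f {x} {m}) (xn : cts G f {x} {n}) :
    False := by
  refine hK (k33_of6 cx h.ck h.cl cw h.cm h.cn' ?_ xw xm xn wk.symm h.km h.kn wl.symm h.lm h.ln)
  simp only [List.nodup_cons, List.mem_cons, List.not_mem_nil, List.pairwise_cons, or_false, forall_eq_or_imp,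
    forall_eq, false_imp_iff, implies_true, and_true, List.Pairwise.nil,
    Finset.disjoint_singleton] at nd ⊢
  grind

theorem k5_split (hG : Good G) (hK : ¬ IsMinor K33 G) (h : K4c G f k l m n) (nd : [x, k, l, m, n].Nodup)
    (cx : cn G f {x}) (xk : cts G f {x} {k}) (xl : cts G f {x} {l}) (xm : cts G f {x} {m})
    (xn : cts G f {x} {n}) {u v : V} (hu : f u = x) (hv : f v = x) : u = v := by
  by_contra huv
  obtain ⟨w, f', -, -, cy, cw, yw, hw, hcn, hct, hcx, -, -, -⟩ := split_label2 cx hu hv huv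
  simp only [List.nodup_cons, List.mem_cons, List.not_mem_nil, or_false, not_or, not_false_eq_true, and_true, List.nodup_nil] at nd
  obtain ⟨⟨n1, n2, n3, n4⟩, ⟨n6, n7, n8⟩, ⟨n10, n11⟩, n13⟩ := nd
  have wx := hw _ cx
  have wk := hw _ h.ck
  have wl := hw _ h.cl
  have wm := hw _ h.cm
  have wn := hw _ h.cn'
  have hh : K4c G f' k l m n := ⟨hcn _ h.ck (Ne.symm n1), hcn _ h.cl (Ne.symm n2), hcn _ h.cm (Ne.symm n3),
    hcn _ h.cn' (Ne.symm n4), hct _ _ h.ck h.cl (Ne.symm n1) (Ne.symm n2) h.kl,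
    hct _ _ h.ck h.cm (Ne.symm n1) (Ne.symm n3) h.km,
    hct _ _ h.ck h.cn' (Ne.symm n1) (Ne.symm n4) h.kn,
    hct _ _ h.cl h.cm (Ne.symm n2) (Ne.symm n3) h.lm,
    hct _ _ h.cl h.cn' (Ne.symm n2) (Ne.symm n4) h.ln,
    hct _ _ h.cm h.cn' (Ne.symm n3) (Ne.symm n4) h.mn⟩
  have N : ∀ p q, (p = x ∧ q = w ∨ p = w ∧ q = x) → ∀ a b c d, [a, b, c, d].Perm [k, l, m, n] → [p, q, a, b, c, d].Nodup := by
    intro p q hpq a b c d hp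
    have h1 : [p, q, a, b, c, d].Perm [p, q, k, l, m, n] := (hp.cons q).cons p
    rw [h1.nodup_iff]
    simp only [List.nodup_cons, List.mem_cons, List.not_mem_nil, or_false, not_or, not_false_eq_true, and_true, List.nodup_nil]
    rcases hpq with ⟨rfl, rfl⟩ | ⟨rfl, rfl⟩
    · exact ⟨⟨Ne.symm wx, n1, n2, n3, n4⟩, ⟨wk, wl, wm, wn⟩, ⟨n6, n7, n8⟩, ⟨n10, n11⟩, n13⟩
    · exact ⟨⟨wx, wk, wl, wm, wn⟩, ⟨n1, n2, n3, n4⟩, ⟨n6, n7, n8⟩, ⟨n10, n11⟩, n13⟩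
  have main : ∀ p q, (p = x ∧ q = w ∨ p = w ∧ q = x) → cn G f' {p} → cn G f' {q} → cts G f' {p} {q} →
      ∀ a b c d, [a, b, c, d].Perm [k, l, m, n] → K4c G f' a b c d →
      ((cts G f' {p} {a} ∨ cts G f' {q} {a}) ∧ cts G f' {p} {b} ∧ cts G f' {p} {c} ∧ cts G f' {p} {d}) ∨
      (cts G f' {q} {a} ∧ cts G f' {q} {b} ∧ cts G f' {p} {c} ∧ cts G f' {p} {d}) → False := by
    intro p q hpq cp cq pq a b c d hp hq hcase
    have nd := N p q hpq a b c d hp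
    rcases hcase with ⟨h1 | h1, h2, h3, h4⟩ | ⟨h1, h2, h3, h4⟩
    · exact hq.all hG nd cp cq pq h1 h2 h3 h4
    · exact hq.three hG hK nd cp cq pq h1 h2 h3 h4
    · exact hq.two hK nd cp cq pq h1 h2 h3 h4
  have M1 := main x w (Or.inl ⟨rfl, rfl⟩) cy cw yw
  have M2 := main w x (Or.inr ⟨rfl, rfl⟩) cw cy yw.symm
  clear main N
  have p1 : [k, l, m, n].Perm [k, l, m, n] := List.Perm.refl _
  have p2 : [l, k, m, n].Perm [k, l, m, n] := List.Perm.swap _ _ _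
  have p3 : [m, k, l, n].Perm [k, l, m, n] := 
    (List.Perm.swap k m [l, n]).trans ((List.Perm.swap l m [n]).cons k)
  have p4 : [n, k, l, m].Perm [k, l, m, n] := 
    (List.Perm.swap k n [l, m]).trans (((List.Perm.swap l n [m]).cons k).trans (((List.Perm.swap m n []).cons l).cons k))
  have p5 : [k, m, l, n].Perm [k, l, m, n] := (List.Perm.swap l m [n]).cons k
  have p6 : [k, n, l, m].Perm [k, l, m, n] := 
    ((List.Perm.swap l n [m]).cons k).trans (((List.Perm.swap m n []).cons l).cons k)
  have a1 := M1 _ _ _ _ p1 hh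
  have a2 := M1 _ _ _ _ p2 hh.s12
  have a3 := M1 _ _ _ _ p3 hh.s23.s12
  have a4 := M1 _ _ _ _ p4 hh.s34.s23.s12
  have a5 := M1 _ _ _ _ p5 hh.s23
  have a6 := M1 _ _ _ _ p6 hh.s34.s23
  have b1 := M2 _ _ _ _ p1 hh
  have b2 := M2 _ _ _ _ p2 hh.s12
  have b3 := M2 _ _ _ _ p3 hh.s23.s12
  have b4 := M2 _ _ _ _ p4 hh.s34.s23.s12
  have b5 := M2 _ _ _ _ p5 hh.s23
  have b6 := M2 _ _ _ _ p6 hh.s34.s23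
  have o1 := hcx k (Ne.symm n1) xk
  have o2 := hcx l (Ne.symm n2) xl
  have o3 := hcx m (Ne.symm n3) xm
  have o4 := hcx n (Ne.symm n4) xn
  clear M1 M2 p1 p2 p3 p4 p5 p6
  rcases o1 with o1 | o1 <;> rcases o2 with o2 | o2 <;> rcases o3 with o3 | o3 <;> rcases o4 with o4 | o4 
  all_goals simp only [o1, o2, o3, o4, true_or, or_true, true_and, and_true, true_imp_iff, imp_false, not_true_eq_false] at a1 a2 a3 a4 a5 a6 b1 b2 b3 b4 b5 b6

theorem k5_case (hG : Good G) (hK : ¬ IsMinor K33 G) (h5 : IsMinor K5 G) : Nonempty (G ≃g doubleWheel 3) := by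
  classical
  obtain ⟨B, hne, hc, hd, ha⟩ := h5
  let f : V → ℕ := fun v => if h : ∃ i, v ∈ B i then (Classical.choose h).val else 5
  have hf : ∀ (i : Fin 5) v, f v = i.val ↔ v ∈ B i := by
    intro i v
    by_cases h : ∃ i, v ∈ B i
    · have e : f v = (Classical.choose h).val := dif_pos h
      have hs := Classical.choose_spec h
      rw [e]
      constructor
      · intro h'; rwa [Fin.ext h'] at hs
      · intro h'
        by_contra hcon
        exact Set.disjoint_left.1 (hd (fun hh => hcon (congrArg Fin.val hh))) hs h'
    · have e : f v = 5 := dif_neg h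
      rw [e]
      constructor
      · intro h'; omega
      · intro h'; exact absurd ⟨i, h'⟩ h
  have hcn : ∀ i : Fin 5, cn G f {i.val} := by
    intro i
    have e : {v | f v ∈ ({i.val} : Finset ℕ)} = B i := by ext v; simp [hf]
    unfold cn
    rw [e]; exact hc i
  have hct : ∀ i j : Fin 5, i ≠ j → cts G f {i.val} {j.val} := by
    intro i j hij
    obtain ⟨v, hv, w, hw, h⟩ := ha (show K5.Adj i j from hij)
    exact ⟨v, w, by simp [hf, hv], by simp [hf, hw], h⟩
  have hm : K5m G f (fun i => {i.val}) := ⟨hcn, by intro i j hij; simp; omega, hct⟩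
  have K : ∀ k l m n : Fin 5, [k, l, m, n].Nodup → K4c G f k l m n := by
    intro k l m n nd
    simp only [List.nodup_cons, List.mem_cons, List.not_mem_nil, or_false, not_or, not_false_eq_true, and_true, List.nodup_nil] at nd
    obtain ⟨⟨n1, n2, n3⟩, ⟨n6, n7⟩, n8⟩ := nd
    exact ⟨hcn _, hcn _, hcn _, hcn _, hct _ _ n1, hct _ _ n2, hct _ _ n3, hct _ _ n6, hct _ _ n7, hct _ _ n8⟩
  have uq : ∀ (i : Fin 5) u v, f u = i → f v = i → u = v := by
    intro i u v hu hv
    have go : ∀ k l m n : Fin 5, [i, k, l, m, n].Nodup → u = v := by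
      intro k l m n nd
      have nd' : [i.val, k.val, l.val, m.val, n.val].Nodup := nd.map Fin.val_injective
      have nd2 := (List.nodup_cons.1 nd).2
      simp only [List.nodup_cons, List.mem_cons, List.not_mem_nil, or_false, not_or, not_false_eq_true, and_true, List.nodup_nil] at nd
      obtain ⟨⟨n1, n2, n3, n4⟩, -⟩ := nd
      exact k5_split hG hK (K k l m n nd2) nd' (hcn i) (hct _ _ n1) (hct _ _ n2) (hct _ _ n3) (hct _ _ n4) hu hv
    fin_cases i
    · exact go 1 2 3 4 (by decide)
    · exact go 0 2 3 4 (by decide)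
    · exact go 0 1 3 4 (by decide)
    · exact go 0 1 2 4 (by decide)
    · exact go 0 1 2 3 (by decide)
  have hsp : ∀ t, ∃ i : Fin 5, f t = i := by
    intro t
    obtain ⟨i, hi⟩ := hm.span hG t
    exact ⟨i, by simpa using hi⟩
  choose g hg using hsp
  have gi : Function.Injective g := fun u v h => uq (g u) u v (hg u) (by rw [h]; exact hg v)
  have gs : Function.Surjective g := by
    intro i
    obtain ⟨v, hv⟩ := hne i
    exact ⟨v, Fin.ext (by rw [← hg, (hf i v).2 hv])⟩
  have htop : ∀ u v, G.Adj u v ↔ u ≠ v := by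
    intro u v
    refine ⟨fun h => h.ne, fun h => ?_⟩
    obtain ⟨a, b, h1, h2, h3⟩ := hct (g u) (g v) (fun hh => h (gi hh))
    simp only [Finset.mem_singleton] at h1 h2
    rw [uq (g u) u a (hg u) h1, uq (g v) v b (hg v) h2]; exact h3
  have hdw : ∀ u v, (doubleWheel 3).Adj u v ↔ u ≠ v := by
    intro u v
    unfold doubleWheel
    simp only [fromRel_adj]
    rcases u with u | u <;> rcases v with v | v <;> fin_cases u <;> fin_cases v <;> simp
  let E : V ≃ Fin 3 ⊕ Fin 2 := (Equiv.ofBijective g ⟨gi, gs⟩).trans (finSumFinEquiv (m := 3) (n := 2)).symm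
  refine ⟨⟨E, ?_⟩⟩
  intro a b
  rw [hdw, htop]
  simp

end K5Case3

section HamSec
set_option linter.all false
variable {V : Type*} [DecidableEq V] {G : SimpleGraph V}

structure Ham (G : SimpleGraph V) (N : ℕ) (H : ℤ → V) : Prop where
  inj : ∀ i j, H i = H j ↔ (N : ℤ) ∣ i - j
  adj : ∀ i, G.Adj (H i) (H (i + 1))
  surj : ∀ v, ∃ i, H i = v

def arc (H : ℤ → V) (i j : ℤ) : List V := (List.range (j - i - 1).toNat).map fun k : ℕ => H (i + 1 + (k : ℤ))

theorem mem_arc {H : ℤ → V} {i j : ℤ} {v : V} : v ∈ arc H i j ↔ ∃ k, i < k ∧ k < j ∧ H k = v := by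
  unfold arc
  simp only [List.mem_map, List.mem_range]
  constructor
  · rintro ⟨k, hk, rfl⟩; exact ⟨i + 1 + k, by omega, by omega, rfl⟩
  · rintro ⟨k, h1, h2, rfl⟩
    refine ⟨(k - i - 1).toNat, by omega, ?_⟩
    congr 1; omega

theorem arc_split {H : ℤ → V} {i k j : ℤ} (h1 : i < k) (h2 : k < j) :
    arc H i j = arc H i k ++ H k :: arc H k j := by
  unfold arc
  have e : (j - i - 1).toNat = (k - i - 1).toNat + ((j - k - 1).toNat + 1) := by omega
  rw [e, List.range_add, List.map_append, List.range_succ_eq_map]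
  congr 1
  simp only [List.map_cons, List.map_map]
  congr 1
  · congr 1; push_cast; omega
  · apply List.map_congr_left
    intro a _
    simp only [Function.comp]
    congr 1; push_cast; omega

theorem arc_nil {H : ℤ → V} {i j : ℤ} (h : i < j) (h' : arc H i j = []) : j = i + 1 := by
  unfold arc at h'
  simp at h'
  omega

theorem arc_succ {H : ℤ → V} {i : ℤ} : arc H i (i + 1) = [] := by
  unfold arc; simp

variable {N : ℕ} {H : ℤ → V}

theorem Ham.lk (h : Ham G N H) {i j : ℤ} (hij : i < j) : Lk G (H i) (arc H i j) (H j) := by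
  obtain ⟨n, rfl⟩ : ∃ n : ℕ, j = i + 1 + n := ⟨(j - i - 1).toNat, by omega⟩
  clear hij
  induction n generalizing i with
  | zero => simp [arc_succ, h.adj]
  | succ n ih =>
    rw [arc_split (k := i + 1) (by omega) (by push_cast; omega), arc_succ]
    refine ⟨h.adj i, ?_⟩
    have := ih (i := i + 1)
    have e : i + 1 + 1 + (n : ℤ) = i + 1 + ((n + 1 : ℕ) : ℤ) := by push_cast; ring
    rwa [e] at this

theorem Ham.per (h : Ham G N H) (i : ℤ) : H (i + N) = H i := (h.inj _ _).2 (by simp)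
theorem Ham.per' (h : Ham G N H) (i : ℤ) : H (i - N) = H i := (h.inj _ _).2 (by simp)

theorem Ham.ne (h : Ham G N H) {i j : ℤ} (h1 : i < j) (h2 : j < i + N) : H i ≠ H j := by
  rw [Ne, h.inj]
  intro hd
  rw [← dvd_neg] at hd
  have := Int.le_of_dvd (by omega) hd
  omega

theorem Ham.nodup (h : Ham G N H) (i : ℤ) : (arc H i (i + N)).Nodup := by
  unfold arc
  refine List.Nodup.map_on ?_ List.nodup_range
  intro x hx y hy hxy
  simp only [List.mem_range] at hx hy
  by_contra hne
  rcases Nat.lt_or_gt_of_ne hne with hl | hl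
  · exact h.ne (by omega) (by omega) hxy
  · exact h.ne (by omega) (by omega) hxy.symm

theorem Ham.count (h : Ham G N H) (i : ℤ) (hN : 0 < N) (v : V) : (arc H i (i + N)).count v + dl v (H i) ≤ 1 := by
  rw [← count_cons_dl]
  apply List.nodup_iff_count_le_one.1
  rw [List.nodup_cons]
  refine ⟨?_, h.nodup i⟩
  rw [mem_arc]
  rintro ⟨k, h1, h2, h3⟩
  exact h.ne h1 h2 h3.symm

theorem Ham.refl (h : Ham G N H) : Ham G N (fun i => H (-i)) where
  inj i j := by rw [h.inj]; rw [← dvd_neg]; congr! 1; ring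
  adj i := by have := (h.adj (-(i+1))).symm; rwa [show -(i+1)+1 = -i by ring] at this
  surj v := by obtain ⟨i, rfl⟩ := h.surj v; exact ⟨-i, by simp⟩

def Ham.hex (h : Ham G N H) {r0 r1 r2 r3 r4 r5 : ℤ} (h01 : r0 < r1) (h12 : r1 < r2) (h23 : r2 < r3)
    (h34 : r3 < r4) (h45 : r4 < r5) (h50 : r5 < r0 + N) (c0 : G.Adj (H r0) (H r3))
    (c1 : G.Adj (H r1) (H r4)) (c2 : G.Adj (H r2) (H r5)) : KS G :=
  mk9 (H r0) (H r2) (H r4) (H r1) (H r3) (H r5)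
    (arc H r0 r1) [] (arc H r5 (r0 + N)).reverse (arc H r1 r2).reverse (arc H r2 r3) []
    [] (arc H r3 r4).reverse (arc H r4 r5) (h.lk h01) c0
    (Lk_reverse.2 (by rw [← h.per r0]; exact h.lk h50)) (Lk_reverse.2 (h.lk h12)) (h.lk h23) c2 c1.symm
    (Lk_reverse.2 (h.lk h34)) (h.lk h45) (by
      intro v
      have := h.count r0 (by omega) v
      rw [arc_split (k := r1) (by omega) (by omega), arc_split (i := r1) (k := r2) (by omega) (by omega),
        arc_split (i := r2) (k := r3) (by omega) (by omega), arc_split (i := r3) (k := r4) (by omega) (by omega),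
        arc_split (i := r4) (k := r5) (by omega) (by omega)] at this
      simp only [List.count_append, List.count_reverse, count_cons_dl, List.count_nil] at *
      omega)

section Hex
variable (h : Ham G N H) (hG : Good G) {r0 r1 r2 r3 r4 r5 : ℤ} (h01 : r0 < r1) (h12 : r1 < r2) (h23 : r2 < r3)
    (h34 : r3 < r4) (h45 : r4 < r5) (h50 : r5 < r0 + N) (c0 : G.Adj (H r0) (H r3))
    (c1 : G.Adj (H r1) (H r4)) (c2 : G.Adj (H r2) (H r5)) {s t : ℤ} (hst : G.Adj (H s) (H t))

include h hG h01 h12 h23 h34 h45 h50 c0 c1 c2 hst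

theorem Ham.H1 (h1 : r0 ≤ s) (h2 : s < t) (h3 : t ≤ r1) : t = s + 1 := by
  let S := h.hex h01 h12 h23 h34 h45 h50 c0 c1 c2
  have e : S.P 0 0 = arc H r0 r1 := rfl
  have ea : S.a 0 = H r0 := rfl
  have eb : S.b 0 = H r1 := rfl
  apply arc_nil h2 (H := H)
  rcases h1.eq_or_lt with rfl | h1 <;> rcases h3.eq_or_lt with rfl | h3
  · have := S.F1ab hG 0 0 hst
    rwa [e] at this
  · exact S.F1a hG 0 0 (e.trans (arc_split h2 h3)) hst
  · exact S.F1b hG 0 0 (e.trans (arc_split h1 h2)) hst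
  · refine S.F1m hG 0 0 (A := arc H r0 s) (p := H s) (q := H t) (B := arc H t r1) ?_ hst
    rw [e, arc_split h1 (h2.trans h3), arc_split (i := s) h2 h3]

theorem Ham.H2 (h1 : r0 < s) (h2 : s < r1) (h3 : r1 < t) (h4 : t < r2) : False := by
  let S := h.hex h01 h12 h23 h34 h45 h50 c0 c1 c2
  exact S.F2' hG (i := 0) (i' := 1) (j := 0) (by decide) (p := H s) (q := H t)
    (mem_arc.2 ⟨s, h1, h2, rfl⟩) (List.mem_reverse.2 (mem_arc.2 ⟨t, h3, h4, rfl⟩)) hst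

theorem Ham.H3 (h1 : r0 < s) (h2 : s < r1) (h3 : t = r2) : r2 = r1 + 1 := by
  let S := h.hex h01 h12 h23 h34 h45 h50 c0 c1 c2
  subst h3
  have : (arc H r1 t).reverse = [] := S.F3 hG (i := 0) (i' := 1) (j := 0) (by decide) (p := H s)
    (mem_arc.2 ⟨s, h1, h2, rfl⟩) hst
  exact arc_nil h12 (List.reverse_eq_nil_iff.1 this)

theorem Ham.H3' (h1 : r0 < s) (h2 : s < r1) (h3 : t = r5) : r0 + N = r5 + 1 := by
  let S := h.hex h01 h12 h23 h34 h45 h50 c0 c1 c2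
  subst h3
  have : (arc H t (r0 + N)).reverse = [] := S.F3' hG (i := 0) (j := 0) (j' := 2) (by decide) (p := H s)
    (mem_arc.2 ⟨s, h1, h2, rfl⟩) hst
  exact arc_nil h50 (List.reverse_eq_nil_iff.1 this)

theorem Ham.H4 (h1 : r0 < s) (h2 : s < r1) (h3 : r2 < t) (h4 : t < r3) : r2 = r1 + 1 := by
  let S := h.hex h01 h12 h23 h34 h45 h50 c0 c1 c2
  have : (arc H r1 r2).reverse = [] := (S.F4 hG (i := 0) (i' := 1) (j := 0) (j' := 1) (by decide) (by decide) (p := H s) (q := H t)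
    (mem_arc.2 ⟨s, h1, h2, rfl⟩) (mem_arc.2 ⟨t, h3, h4, rfl⟩) hst).1
  exact arc_nil h12 (List.reverse_eq_nil_iff.1 this)

end Hex

structure X4 (G : SimpleGraph V) (N : ℕ) (H : ℤ → V) (x1 x2 x3 x4 y1 y2 y3 y4 : ℤ) : Prop where
  l1 : x1 < x2
  l2 : x2 < x3
  l3 : x3 < x4
  l4 : x4 < y1
  l5 : y1 < y2
  l6 : y2 < y3
  l7 : y3 < y4
  l8 : y4 < x1 + N
  c1 : G.Adj (H x1) (H y1)
  c2 : G.Adj (H x2) (H y2)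
  c3 : G.Adj (H x3) (H y3)
  c4 : G.Adj (H x4) (H y4)

variable {x1 x2 x3 x4 y1 y2 y3 y4 : ℤ}

theorem X4.shift (X : X4 G N H x1 x2 x3 x4 y1 y2 y3 y4) (h : Ham G N H) :
    X4 G N H x2 x3 x4 y1 y2 y3 y4 (x1 + N) :=
  ⟨X.l2, X.l3, X.l4, X.l5, X.l6, X.l7, X.l8, by have := X.l1; omega, X.c2, X.c3, X.c4, by rw [h.per]; exact X.c1.symm⟩

theorem X4.back (X : X4 G N H x1 x2 x3 x4 y1 y2 y3 y4) (h : Ham G N H) :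
    X4 G N H (y4 - N) x1 x2 x3 x4 y1 y2 y3 :=
  ⟨by have := X.l8; omega, X.l1, X.l2, X.l3, X.l4, X.l5, X.l6, by have := X.l7; omega, by rw [h.per']; exact X.c4.symm, X.c1, X.c2, X.c3⟩

theorem X4.refl (X : X4 G N H x1 x2 x3 x4 y1 y2 y3 y4) :
    X4 G N (fun i => H (-i)) (-y4) (-y3) (-y2) (-y1) (-x4) (-x3) (-x2) (-x1) := by
  obtain ⟨l1, l2, l3, l4, l5, l6, l7, l8, c1, c2, c3, c4⟩ := X
  exact ⟨by omega, by omega, by omega, by omega, by omega, by omega, by omega, by omega,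
    by simpa using c4.symm, by simpa using c3.symm, by simpa using c2.symm, by simpa using c1.symm⟩

theorem Ham.per_mul (h : Ham G N H) (i k : ℤ) : H (i + N * k) = H i := (h.inj _ _).2 (by simp)

theorem X4.trans (X : X4 G N H x1 x2 x3 x4 y1 y2 y3 y4) (h : Ham G N H) (k : ℤ) :
    X4 G N H (x1 + N * k) (x2 + N * k) (x3 + N * k) (x4 + N * k) (y1 + N * k) (y2 + N * k) (y3 + N * k) (y4 + N * k) := by
  obtain ⟨l1, l2, l3, l4, l5, l6, l7, l8, c1, c2, c3, c4⟩ := X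
  exact ⟨by omega, by omega, by omega, by omega, by omega, by omega, by omega, by omega,
    by simpa [h.per_mul] using c1, by simpa [h.per_mul] using c2, by simpa [h.per_mul] using c3, by simpa [h.per_mul] using c4⟩

theorem X4.at (X : X4 G N H x1 x2 x3 x4 y1 y2 y3 y4) (h : Ham G N H) (u : ℤ) :
    ∃ x1 x2 x3 x4 y1 y2 y3 y4, X4 G N H x1 x2 x3 x4 y1 y2 y3 y4 ∧ u ≤ x1 ∧ y4 < u + N := by
  have hN : (0 : ℤ) < N := by obtain ⟨l1, l2, l3, l4, l5, l6, l7, l8, c1, c2, c3, c4⟩ := X; omega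
  have X' := X.trans h ((u - x1) / N)
  have hd := Int.emod_add_mul_ediv (u - x1) N
  have hm := Int.emod_nonneg (u - x1) hN.ne'
  have hl := Int.emod_lt_of_pos (u - x1) hN
  generalize (N : ℤ) * ((u - x1) / N) = K at *
  have A1 : x1 + K ≤ u := by omega
  have A2 : u < x1 + K + N := by omega
  generalize x1 + K = z1 at *
  generalize x2 + K = z2 at *
  generalize x3 + K = z3 at *
  generalize x4 + K = z4 at *
  generalize y1 + K = z5 at *
  generalize y2 + K = z6 at *
  generalize y3 + K = z7 at *
  generalize y4 + K = z8 at *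
  clear hd hm hl X
  have X2 := X'.shift h
  have X3 := X2.shift h
  have X4 := X3.shift h
  have X5 := X4.shift h
  have X6 := X5.shift h
  have X7 := X6.shift h
  have X8 := X7.shift h
  have X9 := X8.shift h
  by_cases g1 : u ≤ z1
  · exact ⟨_, _, _, _, _, _, _, _, X', by omega, by have := X'.l8; omega⟩
  by_cases g2 : u ≤ z2
  · exact ⟨_, _, _, _, _, _, _, _, X2, by omega, by omega⟩
  by_cases g3 : u ≤ z3
  · exact ⟨_, _, _, _, _, _, _, _, X3, by omega, by omega⟩
  by_cases g4 : u ≤ z4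
  · exact ⟨_, _, _, _, _, _, _, _, X4, by omega, by omega⟩
  by_cases g5 : u ≤ z5
  · exact ⟨_, _, _, _, _, _, _, _, X5, by omega, by omega⟩
  by_cases g6 : u ≤ z6
  · exact ⟨_, _, _, _, _, _, _, _, X6, by omega, by omega⟩
  by_cases g7 : u ≤ z7
  · exact ⟨_, _, _, _, _, _, _, _, X7, by omega, by omega⟩
  by_cases g8 : u ≤ z8
  · exact ⟨_, _, _, _, _, _, _, _, X8, by omega, by omega⟩
  exact ⟨_, _, _, _, _, _, _, _, X9, by omega, by omega⟩

end HamSec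

section HamSec2
set_option linter.all false
variable {V : Type*} [DecidableEq V] {G : SimpleGraph V} {N : ℕ} {H : ℤ → V}
variable {x1 x2 x3 x4 y1 y2 y3 y4 : ℤ}

theorem X4.lo (X : X4 G N H x1 x2 x3 x4 y1 y2 y3 y4) (h : Ham G N H) (hG : Good G) {u v : ℤ}
    (hu : u ≤ x1) (hy : y4 < u + N) (huv : G.Adj (H u) (H v)) (h1 : u + 1 < v) : x4 ≤ v := by
  obtain ⟨l1, l2, l3, l4, l5, l6, l7, l8, c1, c2, c3, c4⟩ := X
  by_contra hlt
  have c1' : G.Adj (H (y4 - N)) (H x4) := by rw [h.per']; exact c4.symm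
  have c2' : G.Adj (H y1) (H (x1 + N)) := by rw [h.per]; exact c1.symm
  rcases hu.lt_or_eq with hu | rfl
  · by_cases g : v ≤ x2
    · have := h.H1 hG (r0 := y4 - N) (r1 := x2) (r2 := x3) (r3 := x4) (r4 := y2) (r5 := y3) (by omega) (by omega)
        (by omega) (by omega) (by omega) (by omega) c1' c2 c3 huv (by omega) (by omega) (by omega)
      omega
    rcases lt_trichotomy v x3 with g3 | g3 | g3
    · exact h.H2 hG (r0 := y4 - N) (r1 := x1) (r2 := x3) (r3 := x4) (r4 := y1) (r5 := y3) (by omega) (by omega)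
        (by omega) (by omega) (by omega) (by omega) c1' c1 c3 huv (by omega) (by omega) (by omega) (by omega)
    · have := h.H3 hG (r0 := y4 - N) (r1 := x1) (r2 := x3) (r3 := x4) (r4 := y1) (r5 := y3) (by omega) (by omega)
        (by omega) (by omega) (by omega) (by omega) c1' c1 c3 huv (by omega) (by omega) (by omega)
      omega
    · have := h.H4 hG (r0 := y4 - N) (r1 := x1) (r2 := x3) (r3 := x4) (r4 := y1) (r5 := y3) (by omega) (by omega)
        (by omega) (by omega) (by omega) (by omega) c1' c1 c3 huv (by omega) (by omega) (by omega) (by omega)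
      omega
  · by_cases g : v ≤ x3
    · have := h.H1 hG (r0 := u) (r1 := x3) (r2 := x4) (r3 := y1) (r4 := y3) (r5 := y4) (by omega) (by omega)
        (by omega) (by omega) (by omega) (by omega) c1 c3 c4 huv (by omega) (by omega) (by omega)
      omega
    · have := h.H3' hG (r0 := x3) (r1 := x4) (r2 := y1) (r3 := y3) (r4 := y4) (r5 := u + N) (by omega) (by omega)
        (by omega) (by omega) (by omega) (by omega) c3 c4 c2' (s := v) (t := u + N) (by rw [h.per]; exact huv.symm) 
        (by omega) (by omega) (by omega)
      omega

theorem X4.hi (X : X4 G N H x1 x2 x3 x4 y1 y2 y3 y4) (h : Ham G N H) (hG : Good G) {u v : ℤ}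
    (hu : u < x1) (hy : y4 < u + N) (huv : G.Adj (H u) (H v)) (h1 : v + 1 < u + N) : v ≤ y1 := by
  have := X.refl.lo h.refl hG (u := -u - N) (v := -v) (by omega) (by omega)
    (by simp only [neg_neg, neg_sub, sub_neg_eq_add]; rw [add_comm, h.per]; exact huv) (by omega)
  omega

theorem X4.hi' (X : X4 G N H x1 x2 x3 x4 y1 y2 y3 y4) (h : Ham G N H) (hG : Good G) {u v : ℤ}
    (hu : u = x1) (huv : G.Adj (H u) (H v)) (h1 : v + 1 < u + N) : v ≤ y2 := by
  have X' := (X.shift h).refl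
  have := X'.lo h.refl hG (u := -u - N) (v := -v) (by omega) (by have := X.l1; omega)
    (by simp only [neg_neg, neg_sub, sub_neg_eq_add]; rw [add_comm, h.per]; exact huv) (by omega)
  omega

theorem X4.k5h (X : X4 G N H x1 x2 x3 x4 y1 y2 y3 y4) (h : Ham G N H) (hG : Good G)
    (e1 : G.Adj (H x1) (H y2)) (e2 : G.Adj (H x2) (H y1)) : False := by
  obtain ⟨l1, l2, l3, l4, l5, l6, l7, l8, c1, c2, c3, c4⟩ := X
  apply hG.nK5h
  have k1 := h.lk l1
  have k2 := h.lk l2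
  have k3 := h.lk l3
  have k4 := h.lk l4
  have k5 := h.lk l5
  have k6 := h.lk l6
  have k7 := h.lk l7
  have k8 := h.lk l8
  rw [h.per] at k8
  unfold K5h
  refine minor_fromRel (fun w => match w with
    | .inl 0 => (H y3 :: arc H y3 y4) ++ (H y4 :: arc H y4 (x1 + N))
    | .inl 1 => H x2 :: arc H x2 x3
    | .inl 2 => H y1 :: arc H y1 y2
    | .inl 3 => H y2 :: arc H y2 y3
    | .inl 4 => H x1 :: arc H x1 x2
    | .inr 0 => H x3 :: arc H x3 x4
    | .inr 1 => H x4 :: arc H x4 y1) ?_ ?_ ?_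
  · rintro (w | w) <;> fin_cases w
    · exact k7.conn.append k8.conn (k7.contact.mono (by simp) (by simp))
    · exact k2.conn
    · exact k5.conn
    · exact k6.conn
    · exact k1.conn
    · exact k3.conn
    · exact k4.conn
  · intro v
    have := h.count x1 (by omega) v
    rw [arc_split (k := x2) (by omega) (by omega), arc_split (i := x2) (k := x3) (by omega) (by omega),
        arc_split (i := x3) (k := x4) (by omega) (by omega), arc_split (i := x4) (k := y1) (by omega) (by omega),
        arc_split (i := y1) (k := y2) (by omega) (by omega), arc_split (i := y2) (k := y3) (by omega) (by omega),
        arc_split (i := y3) (k := y4) (by omega) (by omega)] at this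
    simp only [Fintype.sum_sum_type, Fin.sum_univ_five, Fin.sum_univ_two]
    simp only [List.count_append, List.count_reverse, count_cons_dl, List.count_nil] at *
    omega
  · have E : ∀ {a b : V} {l m : List V}, G.Adj a b → a ∈ l → b ∈ m → Contact G l m :=
      fun h1 h2 h3 => ⟨_, h2, _, h3, h1⟩
    have hd : ∀ {a : V} {l : List V}, a ∈ a :: l := by simp
    have m1 : H y4 ∈ (H y3 :: arc H y3 y4) ++ (H y4 :: arc H y4 (x1 + N)) := by simp
    have m2 : H y3 ∈ (H y3 :: arc H y3 y4) ++ (H y4 :: arc H y4 (x1 + N)) := by simp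
    have q01 := E c3 hd m2 (l := H x3 :: arc H x3 x4)
    have q02 := E c4 hd m1 (l := H x4 :: arc H x4 y1)
    have q03 : Contact G (H y2 :: arc H y2 y3) ((H y3 :: arc H y3 y4) ++ (H y4 :: arc H y4 (x1 + N))) :=
      k6.contact.mono (by simp) (by simp)
    have q04 : Contact G ((H y3 :: arc H y3 y4) ++ (H y4 :: arc H y4 (x1 + N))) (H x1 :: arc H x1 x2) :=
      k8.contact.mono (by simp) (by simp)
    have q12 := E e2 hd hd (l := H x2 :: arc H x2 x3) (m := H y1 :: arc H y1 y2)
    have q13 := E c2 hd hd (l := H x2 :: arc H x2 x3) (m := H y2 :: arc H y2 y3)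
    have q14 : Contact G (H x1 :: arc H x1 x2) (H x2 :: arc H x2 x3) := k1.contact.mono (by simp) (by simp)
    have q23 : Contact G (H y1 :: arc H y1 y2) (H y2 :: arc H y2 y3) := k5.contact.mono (by simp) (by simp)
    have q24 := E c1 hd hd (l := H x1 :: arc H x1 x2) (m := H y1 :: arc H y1 y2)
    have q34 := E e1 hd hd (l := H x1 :: arc H x1 x2) (m := H y2 :: arc H y2 y3)
    have q1s : Contact G (H x2 :: arc H x2 x3) (H x3 :: arc H x3 x4) := k2.contact.mono (by simp) (by simp)
    have q2s : Contact G (H x4 :: arc H x4 y1) (H y1 :: arc H y1 y2) := k4.contact.mono (by simp) (by simp)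
    have qss : Contact G (H x3 :: arc H x3 x4) (H x4 :: arc H x4 y1) := k3.contact.mono (by simp) (by simp)
    rintro (w | w) (w' | w') <;> fin_cases w <;> fin_cases w' <;> intro hne hr <;>
      first
      | exact absurd rfl hne
      | (exfalso; simp at hr; done)
      | assumption
      | (apply Contact.symm; assumption)

/-- no two parallel chords -/
theorem X4.par (X : X4 G N H x1 x2 x3 x4 y1 y2 y3 y4) (h : Ham G N H) (hG : Good G) {u v u' v' : ℤ}
    (huv : G.Adj (H u) (H v)) (huv' : G.Adj (H u') (H v')) 
    (h1 : v + 1 < u + N) (h2 : u < u') (h3 : u' + 1 < v') (h4 : v' < v) : False := by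
  obtain ⟨x1, x2, x3, x4, y1, y2, y3, y4, X, hu, hy⟩ := X.at h u
  have X2 := X.shift h
  have X3 := X2.shift h
  have X4 := X3.shift h
  have X5 := X4.shift h
  have lo := X.lo h hG hu hy huv (by omega)
  have XX := X
  obtain ⟨l1, l2, l3, l4, l5, l6, l7, l8, c1, c2, c3, c4⟩ := XX
  have lo2 : x1 < u' → u' < y1 → y1 ≤ v' := by
    intro g1 g2
    by_cases g3 : u' ≤ x2
    · exact X2.lo h hG g3 (by omega) huv' h3
    by_cases g4 : u' ≤ x3
    · have := X3.lo h hG g4 (by omega) huv' h3; omega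
    by_cases g5 : u' ≤ x4
    · have := X4.lo h hG g5 (by omega) huv' h3; omega
    · have := X5.lo h hG g2.le (by omega) huv' h3; omega
  rcases hu.lt_or_eq with hu | rfl
  · have hi := X.hi h hG hu hy huv h1
    have g : u' ≤ x1 := by
      by_contra g
      have := lo2 (by omega) (by omega)
      omega
    have lo' := X.lo h hG g (by omega) huv' h3
    rcases lo'.lt_or_eq with g1 | g1
    · have := h.H4 hG (r0 := u) (r1 := x2) (r2 := x4) (r3 := v) (r4 := y2) (r5 := y4) (by omega) (by omega)
        (by omega) (by omega) (by omega) (by omega) huv c2 c4 huv' (by omega) (by omega) (by omega) (by omega)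
      omega
    · have := h.H3 hG (r0 := u) (r1 := x2) (r2 := x4) (r3 := v) (r4 := y2) (r5 := y4) (by omega) (by omega)
        (by omega) (by omega) (by omega) (by omega) huv c2 c4 huv' (by omega) (by omega) (by omega)
      omega
  · have hi := X.hi' h hG rfl huv h1
    have g : u' ≤ x2 := by
      by_contra g
      by_cases g4 : u' ≤ x3
      · have := X3.lo h hG g4 (by omega) huv' h3; omega
      by_cases g5 : u' ≤ x4
      · have := X4.lo h hG g5 (by omega) huv' h3; omega
      by_cases g6 : u' ≤ y1
      · have := X5.lo h hG g6 (by omega) huv' h3; omega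
      · have := (X5.shift h).lo h hG (u := u') (by omega) (by omega) huv' h3; omega
    have lo' := lo2 h2 (by omega)
    rcases hi.lt_or_eq with k | rfl
    · rcases g.lt_or_eq with g | rfl
      · have := h.H4 hG (r0 := u) (r1 := x2) (r2 := x4) (r3 := v) (r4 := y2) (r5 := y4) (by omega) (by omega)
          (by omega) (by omega) (by omega) (by omega) huv c2 c4 huv' (by omega) (by omega) (by omega) (by omega)
        omega
      · have := h.H3' hG (r0 := x4) (r1 := v) (r2 := y2) (r3 := y4) (r4 := u + N) (r5 := u' + N) (by omega) (by omega)
          (by omega) (by omega) (by omega) (by omega) c4 (by rw [h.per]; exact huv.symm) (by rw [h.per]; exact c2.symm)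
          (s := v') (t := u' + N) (by rw [h.per]; exact huv'.symm) (by omega) (by omega) (by omega)
        omega
    · rcases g.lt_or_eq with g | rfl
      · have := h.H3' hG (r0 := y4 - N) (r1 := u') (r2 := x2) (r3 := x4) (r4 := v') (r5 := v) (by omega) (by omega)
          (by omega) (by omega) (by omega) (by omega) (by rw [h.per']; exact c4.symm) huv' c2
          (s := u) (t := v) huv (by omega) (by omega) (by omega)
        omega
      · rcases lo'.lt_or_eq with k | rfl
        · have := h.H3 hG (r0 := v') (r1 := y3) (r2 := u + N) (r3 := u' + N) (r4 := x3 + N) (r5 := y1 + N) (by omega) (by omega)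
            (by omega) (by omega) (by omega) (by omega) (by rw [h.per]; exact huv'.symm) (by rw [h.per]; exact c3.symm)
            (by rw [h.per, h.per]; exact c1)
            (s := v) (t := u + N) (by rw [h.per]; exact huv.symm) (by omega) (by omega) (by omega)
          omega
        · exact X.k5h h hG huv huv'

end HamSec2

section HamSec3
set_option linter.all false
variable {V : Type*} [DecidableEq V] {G : SimpleGraph V} {N : ℕ} {H : ℤ → V}

def ChA (G : SimpleGraph V) (N : ℕ) (H : ℤ → V) (u v : ℤ) : Prop :=
  u + 1 < v ∧ v + 1 < u + N ∧ G.Adj (H u) (H v)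

theorem ChA.sym {u v : ℤ} (h : Ham G N H) (c : ChA G N H u v) : ChA G N H v (u + N) :=
  ⟨by have := c.2.1; omega, by have := c.1; omega, by rw [h.per]; exact c.2.2.symm⟩

theorem ChA.dn {u v : ℤ} (h : Ham G N H) (c : ChA G N H (u + N) (v + N)) : ChA G N H u v :=
  ⟨by have := c.1; omega, by have := c.2.1; omega, by have := c.2.2; rwa [h.per, h.per] at this⟩

theorem Ham.rep (h : Ham G N H) (hN : 0 < N) (u : ℤ) (w : V) : ∃ t, u ≤ t ∧ t < u + N ∧ H t = w := by
  obtain ⟨i, rfl⟩ := h.surj w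
  have h1 := Int.emod_add_mul_ediv (i - u) N
  have h2 := Int.emod_nonneg (i - u) (b := N) (by omega)
  have h3 := Int.emod_lt_of_pos (i - u) (b := N) (by omega)
  refine ⟨u + (i - u) % N, by omega, by omega, ?_⟩
  have : i = (u + (i - u) % N) + N * ((i - u) / N) := by omega
  conv_rhs => rw [this]
  exact (h.per_mul _ _).symm

theorem Ham.nbr (h : Ham G N H) (hN : 0 < N) (u : ℤ) {w : V} (hw : G.Adj (H u) w) (h1 : w ≠ H (u + 1))
    (h2 : w ≠ H (u - 1)) : ∃ t, ChA G N H u t ∧ H t = w := by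
  obtain ⟨t, h3, h4, rfl⟩ := h.rep hN u w
  refine ⟨t, ⟨?_, ?_, hw⟩, rfl⟩
  · by_contra hc
    have : t = u ∨ t = u + 1 := by omega
    rcases this with rfl | rfl
    · exact hw.ne rfl
    · exact h1 rfl
  · by_contra hc
    have : t = u - 1 + N := by omega
    subst this
    rw [h.per] at h2
    exact h2 rfl

def NoPar (G : SimpleGraph V) (N : ℕ) (H : ℤ → V) : Prop :=
  ∀ u v u' v', ChA G N H u v → ChA G N H u' v' → u < u' → v' < v → False

variable (h : Ham G N H) (hG : Good G) (hN : 0 < N) (np : NoPar G N H)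

include h hG hN in
theorem ChA.ex (u : ℤ) : ∃ v, ChA G N H u v := by
  obtain ⟨w, h1, h2, h3⟩ := hG.deg (H u) (H (u + 1)) (H (u - 1))
  obtain ⟨t, ht, -⟩ := h.nbr hN u h1 h2 h3
  exact ⟨t, ht⟩

include h hG hN in
theorem ChA.tri (u : ℤ) {x y : ℤ} (hx : ChA G N H u x) (hy : y = u + 1 ∨ y = u - 1) (hxy : G.Adj (H x) (H y)) :
    ∃ t, ChA G N H u t ∧ t ≠ x := by
  have e : G.Adj (H u) (H y) := by
    rcases hy with rfl | rfl
    · exact h.adj u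
    · have := (h.adj (u - 1)).symm; rwa [sub_add_cancel] at this
  obtain ⟨w, h1, h2, h3, h4⟩ := hG.tri (H u) (H x) (H y) (if y = u + 1 then H (u - 1) else H (u + 1)) hx.2.2 e hxy
  have : w ≠ H (u + 1) ∧ w ≠ H (u - 1) := by
    rcases hy with rfl | rfl
    · simp at h4; exact ⟨h3, h4⟩
    · rw [if_neg (by omega)] at h4; exact ⟨h4, h3⟩
  obtain ⟨t, ht, rfl⟩ := h.nbr hN u h1 this.1 this.2
  exact ⟨t, ht, fun hh => h2 (by rw [hh])⟩

include h hG hN np in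
theorem ChA.near {u v v' : ℤ} (h1 : ChA G N H u v) (h2 : ChA G N H u v') : v' ≤ v + 1 := by
  by_contra hc
  have key : ∀ t, ChA G N H (v' - 1) t → t = u + N := by
    intro t ht
    obtain ⟨a1, a2, -⟩ := id h1
    obtain ⟨b1, b2, -⟩ := id h2
    obtain ⟨d1, d2, -⟩ := id ht
    rcases lt_trichotomy t (u + N) with g | g | g
    · exact (np _ _ _ _ (h1.sym h) ht (by omega) g).elim
    · exact g
    · refine (np _ _ (t - N) (v' - 1) h2 ⟨by omega, by omega, ?_⟩ (by omega) (by omega)).elim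
      rw [h.per']; exact ht.2.2.symm
  obtain ⟨s, hs⟩ := ChA.ex h hG hN (v' - 1)
  obtain rfl := key s hs
  obtain ⟨t, ht, hne⟩ := ChA.tri h hG hN (v' - 1) (x := u + N) (y := v') hs (Or.inl (by ring)) (by rw [h.per]; exact h2.2.2)
  exact hne (key t ht)

include h hG hN np in
theorem ChA.P1 {u v : ℤ} (h1 : ChA G N H u v) (h2 : ChA G N H u (v + 1)) : ChA G N H v (u + N - 1) := by
  obtain ⟨t, ht, hne⟩ := ChA.tri h hG hN v (x := u + N) (y := v + 1) (h1.sym h) (Or.inl rfl) (by rw [h.per]; exact h2.2.2)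
  have n1 := ChA.near h hG hN np (h1.sym h) ht
  have n2 := ChA.near h hG hN np ht (h1.sym h)
  by_cases g : t = u + N - 1
  · rwa [g] at ht
  have : t = u + 1 + N := by omega
  subst this
  exfalso
  have d1 := ht.1
  have d2 := ht.2.1
  have a2 := h2.2.1
  refine np u (v + 1) (u + 1) v h2 ⟨by omega, by omega, ?_⟩ (by omega) (by omega)
  have := ht.2.2
  rw [h.per] at this
  exact this.symm

include h hG hN np in
theorem ChA.P2 {u v : ℤ} (h1 : ChA G N H u v) (h2 : ChA G N H u (v + 1)) : ChA G N H (v + 1) (u + N + 1) := by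
  obtain ⟨t, ht, hne⟩ := ChA.tri h hG hN (v + 1) (x := u + N) (y := v) (h2.sym h) (Or.inr (by ring)) (by rw [h.per]; exact h1.2.2)
  have n1 := ChA.near h hG hN np (h2.sym h) ht
  have n2 := ChA.near h hG hN np ht (h2.sym h)
  by_cases g : t = u + N + 1
  · rwa [g] at ht
  have : t = u + N - 1 := by omega
  subst this
  exfalso
  exact np _ _ _ _ (h1.sym h) ht (by omega) (by omega)

include h hG hN np in
theorem ChA.P3 {u v : ℤ} (h1 : ChA G N H u v) (h2 : ChA G N H u (v + 1)) :
    ChA G N H (u + 1) (v + 1) ∧ ChA G N H (u + 1) (v + 1 + 1) := by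
  have q1 := ChA.P2 h hG hN np h1 h2
  have q2 := h2.sym h
  have q3 := ChA.P2 h hG hN np q2 q1
  have q4 := q1.sym h
  constructor
  · apply ChA.dn h
    convert q4 using 1; ring
  · apply ChA.dn h
    convert q3 using 1 <;> ring

theorem Ham.all {Q : ℤ → Prop} (hN : 0 < N) (u : ℤ) (h0 : Q u) (hs : ∀ w, Q w → Q (w + 1)) (hd : ∀ w, Q (w + N) → Q w) (w : ℤ) : Q w := by
  have up : ∀ n : ℕ, Q (u + n) := by
    intro n
    induction n with
    | zero => simpa using h0
    | succ n ih => have := hs _ ih; push_cast; rwa [← add_assoc]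
  have dn : ∀ (k : ℕ) w, Q (w + N * k) → Q w := by
    intro k
    induction k with
    | zero => intro w hw; simpa using hw
    | succ k ih => intro w hw; apply ih; apply hd; convert hw using 1; push_cast; ring
  apply dn (u - w).toNat
  have : 0 ≤ w + N * ((u - w).toNat : ℤ) - u := by
    have h1 : u - w ≤ ((u - w).toNat : ℤ) := by omega
    have h2 : (1 : ℤ) * ((u - w).toNat : ℤ) ≤ N * ((u - w).toNat : ℤ) := 
      mul_le_mul_of_nonneg_right (by omega) (by omega)
    omega
  have := up (w + N * ((u - w).toNat : ℤ) - u).toNat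
  convert this using 1
  omega

include h hG hN np in
/-- The two possible shapes. -/
theorem ham_shape : ∃ c : ℕ, (N = 2 * c ∨ N = 2 * c + 1) ∧ ∀ i j, G.Adj (H i) (H j) ↔
    ((N : ℤ) ∣ j - i - 1 ∨ (N : ℤ) ∣ i - j - 1 ∨ (N : ℤ) ∣ j - i - c ∨ (N : ℤ) ∣ i - j - c) := by
  have fin : ∀ c : ℕ, (N = 2 * c ∨ N = 2 * c + 1) → (∀ w, ChA G N H w (w + c)) →
      (∀ w t, ChA G N H w t → t = w + c ∨ t + w + c = w + w + N) → ∃ c : ℕ, (N = 2 * c ∨ N = 2 * c + 1) ∧ ∀ i j, G.Adj (H i) (H j) ↔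
    ((N : ℤ) ∣ j - i - 1 ∨ (N : ℤ) ∣ i - j - 1 ∨ (N : ℤ) ∣ j - i - c ∨ (N : ℤ) ∣ i - j - c) := by
    intro c hc h1 h2
    refine ⟨c, hc, ?_⟩
    have E : ∀ i j, (N : ℤ) ∣ i - j → H i = H j := fun i j => (h.inj i j).2
    intro i j
    constructor
    · intro hij
      by_cases g1 : H j = H (i + 1)
      · left
        have := (h.inj _ _).1 g1
        rwa [← sub_sub] at this
      by_cases g2 : H j = H (i - 1)
      · right; left
        have := (h.inj _ _).1 g2
        obtain ⟨k, hk⟩ := this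
        exact ⟨-k, by rw [mul_neg, ← hk]; ring⟩
      obtain ⟨t, ht, e⟩ := h.nbr hN i hij g1 g2
      have e := (h.inj _ _).1 e
      rcases h2 i t ht with g | g
      · right; right; left
        obtain ⟨k, hk⟩ := e
        exact ⟨-k, by rw [mul_neg, ← hk, g]; ring⟩
      · right; right; right
        obtain ⟨k, hk⟩ := e
        exact ⟨k - 1, by rw [mul_sub, ← hk]; omega⟩
    · rintro (g | g | g | g)
      · rw [E j (i + 1) (by convert g using 1; ring)]; exact h.adj i
      · rw [E i (j + 1) (by convert g using 1; ring)]; exact (h.adj j).symm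
      · rw [E j (i + c) (by convert g using 1; ring)]; exact (h1 i).2.2
      · rw [E i (j + c) (by convert g using 1; ring)]; exact (h1 j).2.2.symm
  by_cases hP : ∃ u v, ChA G N H u v ∧ ChA G N H u (v + 1)
  · obtain ⟨u, v, h1, h2⟩ := hP
    have l := h1.1
    have all := Ham.all (Q := fun w => ChA G N H w (w + (v - u)) ∧ ChA G N H w (w + (v - u) + 1)) hN u
      (by rw [show u + (v - u) = v by ring]; exact ⟨h1, h2⟩)
      (by
        intro w hw
        have := ChA.P3 h hG hN np hw.1 hw.2
        rw [show w + 1 + (v - u) = w + (v - u) + 1 by ring]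
        exact this)
      (by
        intro w hw
        refine ⟨ChA.dn h ?_, ChA.dn h ?_⟩
        · convert hw.1 using 1; ring
        · convert hw.2 using 1; ring)
    have q1 := ChA.P1 h hG hN np h1 h2
    have q2 := h1.sym h
    have q3 := (all v).1
    have q4 := (all v).2
    have n1 := ChA.near h hG hN np q1 q4
    have n2 := ChA.near h hG hN np q3 q2
    refine fin (v - u).toNat (by omega) ?_ ?_
    · intro w
      have := (all w).1
      rwa [show ((v - u).toNat : ℤ) = v - u by omega]
    · intro w t ht
      have m1 := ChA.near h hG hN np ht (all w).2
      have m2 := ChA.near h hG hN np (all w).1 ht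
      omega
  · have uq : ∀ u v v', ChA G N H u v → ChA G N H u v' → v = v' := by
      intro u v v' h1 h2
      have m1 := ChA.near h hG hN np h1 h2
      have m2 := ChA.near h hG hN np h2 h1
      by_contra hne
      apply hP
      rcases lt_or_gt_of_ne hne with g | g
      · exact ⟨u, v, h1, by convert h2 using 1; omega⟩
      · exact ⟨u, v', h2, by convert h1 using 1; omega⟩
    have step : ∀ u v, ChA G N H u v → ChA G N H (u + 1) (v + 1) := by
      intro u v huv
      obtain ⟨t, ht⟩ := ChA.ex h hG hN (u + 1)
      obtain ⟨s, hs⟩ := ChA.ex h hG hN (v + 1)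
      obtain ⟨a1, a2, -⟩ := id huv
      obtain ⟨b1, b2, -⟩ := id ht
      obtain ⟨d1, d2, -⟩ := id hs
      by_cases g1 : t < v
      · exact (np _ _ _ _ huv ht (by omega) g1).elim
      by_cases g2 : t = v
      · subst g2
        have := uq _ _ _ (huv.sym h) (ht.sym h)
        omega
      by_cases g3 : t = v + 1
      · rwa [g3] at ht
      exfalso
      by_cases k1 : s < u + N
      · exact (np _ _ _ _ (huv.sym h) hs (by omega) k1).elim
      by_cases k2 : u + N + 1 < s
      · refine (np (u + 1) t (s - N) (v + 1) ht ⟨by omega, by omega, ?_⟩ (by omega) (by omega)).elim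
        rw [h.per']; exact hs.2.2.symm
      by_cases k3 : s = u + N
      · subst k3
        have := uq _ _ _ huv (ChA.dn h (hs.sym h))
        omega
      · have : s = u + 1 + N := by omega
        subst this
        have := uq _ _ _ ht (ChA.dn h (hs.sym h))
        omega
    obtain ⟨v, h1⟩ := ChA.ex h hG hN 0
    have l := h1.1
    have all := Ham.all (Q := fun w => ChA G N H w (w + v)) hN 0 (by simpa using h1)
      (by intro w hw
          have := step _ _ hw
          convert this using 1; ring)
      (by intro w hw
          apply ChA.dn h
          convert hw using 1; ring)
    have := uq _ _ _ (h1.sym h) (all v)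
    refine fin v.toNat (by omega) ?_ ?_
    · intro w
      have := all w
      rwa [show (v.toNat : ℤ) = v by omega]
    · intro w t ht
      have := uq _ _ _ ht (all w)
      omega

end HamSec3

section CaseA
set_option linter.all false
variable {V : Type*} [DecidableEq V] {G : SimpleGraph V}

theorem iso_of_bij {W : Type*} {K : SimpleGraph W} (f : W → V) (hf : Function.Bijective f)
    (h : ∀ a b, a ≠ b → (G.Adj (f a) (f b) ↔ K.Adj a b)) : Nonempty (G ≃g K) := by
  refine ⟨RelIso.symm ⟨Equiv.ofBijective f hf, ?_⟩⟩
  intro a b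
  by_cases e : a = b
  · subst e; simp
  · exact h a b e

theorem mod_iff (m : ℕ) (i j s : ℕ) (hj : j < m) : j = (i + s) % m ↔ (m : ℤ) ∣ (j : ℤ) - i - s := by
  constructor
  · intro h
    have h1 := Nat.mod_add_div (i + s) m
    rw [← h] at h1
    refine ⟨-(((i + s) / m : ℕ) : ℤ), ?_⟩
    have : ((j : ℤ) + m * ((i + s) / m : ℕ)) = i + s := by exact_mod_cast h1
    rw [mul_neg]; linarith
  · intro h
    have : (i + s) ≡ j [MOD m] := by
      rw [Nat.modEq_iff_dvd]; push_cast; rwa [← sub_sub]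
    rw [Nat.ModEq, Nat.mod_eq_of_lt hj] at this
    exact this.symm

theorem Ham.bij {N : ℕ} {H : ℤ → V} (h : Ham G N H) (hN : 0 < N) : Function.Bijective (fun k : Fin N => H (k.val : ℤ)) := by
  constructor
  · intro i j e
    have := (h.inj _ _).1 e
    have h1 := (mod_iff N j.val i.val 0 i.2).2 (by simpa using this)
    rw [add_zero, Nat.mod_eq_of_lt j.2] at h1
    exact Fin.ext h1
  · intro v
    obtain ⟨t, h1, h2, h3⟩ := h.rep hN 0 v
    refine ⟨⟨t.toNat, by omega⟩, ?_⟩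
    show H ((t.toNat : ℕ) : ℤ) = v
    rw [Int.toNat_of_nonneg h1, h3]

theorem dvd_two {N : ℕ} {c : ℕ} (hN : N = 2 * c + 1) (a : ℤ) : (N : ℤ) ∣ a ↔ (N : ℤ) ∣ 2 * a := by
  constructor
  · exact fun h => h.mul_left 2
  · rintro ⟨k, hk⟩
    have : (N : ℤ) = 2 * c + 1 := by exact_mod_cast hN
    refine ⟨a - c * k, ?_⟩
    have e : a = N * a - c * (2 * a) := by rw [this]; ring
    rw [hk] at e
    nlinarith

theorem caseA_end {N : ℕ} {H : ℤ → V} (h : Ham G N H) (hG : Good G) {x1 x2 x3 x4 y1 y2 y3 y4 : ℤ}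
    (X : X4 G N H x1 x2 x3 x4 y1 y2 y3 y4) : ∃ n, 3 ≤ n ∧
      (Nonempty (G ≃g mobiusLadder n) ∨ Nonempty (G ≃g squareCycle (2 * n + 1))) := by
  have hN : 8 ≤ N := by
    have := X.l1; have := X.l2; have := X.l3; have := X.l4
    have := X.l5; have := X.l6; have := X.l7; have := X.l8
    omega
  have np : NoPar G N H := fun u v u' v' h1 h2 h3 h4 =>
    X.par h hG h1.2.2 h2.2.2 h1.2.1 h3 h2.1 h4
  obtain ⟨c, hc, key⟩ := ham_shape h hG (by omega) np
  refine ⟨c, by omega, ?_⟩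
  rcases hc with hc | hc
  · left
    subst hc
    refine iso_of_bij _ (h.bij (by omega)) ?_
    intro i j hij
    rw [key]
    unfold mobiusLadder
    rw [fromRel_adj]
    rw [mod_iff _ _ _ _ j.2, mod_iff _ _ _ _ j.2, mod_iff _ _ _ _ i.2, mod_iff _ _ _ _ i.2]
    simp only [ne_eq, hij, not_false_eq_true, true_and, Nat.cast_one]
    tauto
  · right
    have hc' : (N : ℤ) = 2 * c + 1 := by exact_mod_cast hc
    rw [← hc]
    have hb : Function.Bijective (fun k : Fin N => H ((k.val : ℤ) * (c + 1))) := by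
      have hi : Function.Injective (fun k : Fin N => H ((k.val : ℤ) * (c + 1))) := by
        intro i j e
        have := (h.inj _ _).1 e
        rw [dvd_two hc] at this
        have h1 := (mod_iff N j.val i.val 0 i.2).2 (by
          obtain ⟨k, hk⟩ := this
          refine ⟨k - (i.val - j.val), ?_⟩
          rw [mul_sub, ← hk, hc']; push_cast; ring)
        rw [add_zero, Nat.mod_eq_of_lt j.2] at h1
        exact Fin.ext h1
      haveI : Finite V := Finite.of_surjective _ (h.bij (by omega)).2
      have e := Equiv.ofBijective _ (h.bij (by omega))
      haveI := Fintype.ofFinite V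
      rw [Fintype.bijective_iff_injective_and_card]
      exact ⟨hi, Fintype.card_congr e⟩
    refine iso_of_bij _ hb ?_
    intro i j hij
    rw [key]
    unfold squareCycle
    rw [fromRel_adj]
    rw [mod_iff _ _ _ _ j.2, mod_iff _ _ _ _ j.2, mod_iff _ _ _ _ i.2, mod_iff _ _ _ _ i.2]
    have e1 : ∀ a b : ℤ, (N : ℤ) ∣ a * (c + 1) - b * (c + 1) - 1 ↔ (N : ℤ) ∣ a - b - 2 := by
      intro a b
      rw [dvd_two hc, show 2 * (a * ((c : ℤ) + 1) - b * (c + 1) - 1) = (a - b - 2) + N * (a - b) by rw [hc']; ring]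
      exact dvd_add_left (dvd_mul_right _ _)
    have e2 : ∀ a b : ℤ, (N : ℤ) ∣ a * (c + 1) - b * (c + 1) - c ↔ (N : ℤ) ∣ b - a - 1 := by
      intro a b
      rw [dvd_two hc, show 2 * (a * ((c : ℤ) + 1) - b * (c + 1) - c) = -(b - a - 1) + N * (a - b - 1) by rw [hc']; ring]
      rw [dvd_add_left (dvd_mul_right _ _), dvd_neg]
    simp only [e1, e2, ne_eq, hij, not_false_eq_true, true_and, Nat.cast_one, Nat.cast_ofNat]
    tauto
end CaseA

section FChord
set_option linter.all false
variable {V : Type*} [DecidableEq V] {G : SimpleGraph V}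

theorem Lk_getD {d : V} : ∀ {l : List V} {x y : V} (h : Lk G x l y) (k : ℕ) (hk : k ≤ l.length),
    G.Adj ((x :: l).getD k d) ((x :: (l ++ [y])).getD (k + 1) d)
  | [], x, y, h, k, hk => by
    have : k = 0 := by simpa using hk
    subst this
    simpa using h
  | m :: r, x, y, h, 0, hk => by simpa using h.1
  | m :: r, x, y, h, k + 1, hk => by
    have := Lk_getD (d := d) h.2 k (by simpa using hk)
    simpa using this

theorem cyc_of_list (x : V) (l : List V) (hc : ∀ v, (x :: l).count v ≤ 1) (h : Lk G x l x) :
    ∃ H : ℤ → V, (∀ i j, H i = H j ↔ ((l.length + 1 : ℕ) : ℤ) ∣ i - j) ∧ (∀ i, G.Adj (H i) (H (i + 1))) ∧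
      (∀ v, (∃ i, H i = v) ↔ v ∈ x :: l) ∧ (∀ A v B, x :: l = A ++ v :: B → H A.length = v) := by
  have nd : (x :: l).Nodup := List.nodup_iff_count_le_one.2 hc
  set N : ℕ := l.length + 1 with hN
  have hlen : (x :: l).length = N := rfl
  set H : ℤ → V := fun i => (x :: l).getD (i % N).toNat x with hH
  have b1 : ∀ i : ℤ, 0 ≤ i % N := fun i => Int.emod_nonneg i (by omega)
  have b2 : ∀ i : ℤ, i % N < N := fun i => Int.emod_lt_of_pos i (by omega)
  have gd : ∀ k (hk : k < N), (x :: l).getD k x = (x :: l)[k]'(by rw [hlen]; exact hk) := fun k hk => by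
    rw [List.getD_eq_getElem]
  refine ⟨H, ?_, ?_, ?_, ?_⟩
  · intro i j
    have := b1 i; have := b2 i; have := b1 j; have := b2 j
    show (x :: l).getD _ x = (x :: l).getD _ x ↔ _
    rw [gd _ (by omega), gd _ (by omega), nd.getElem_inj_iff]
    have e := Int.emod_emod_of_dvd
    have : (N : ℤ) ∣ i - j ↔ i % N = j % N := by
      rw [Int.emod_eq_emod_iff_emod_sub_eq_zero, Int.dvd_iff_emod_eq_zero]
    rw [this]
    omega
  · intro i
    have := b1 i; have := b2 i
    have key := Lk_getD (d := x) h (i % N).toNat (by omega)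
    have e : H (i + 1) = (x :: (l ++ [x])).getD ((i % N).toNat + 1) x := by
      show (x :: l).getD ((i + 1) % N).toNat x = _
      by_cases g : (i % N).toNat + 1 < N
      · have : ((i + 1) % N).toNat = (i % N).toNat + 1 := by
          rw [Int.add_emod, Int.emod_eq_of_lt (a := i % N + 1 % N)]
          · rw [Int.emod_eq_of_lt (a := 1)] <;> omega
          · rw [Int.emod_eq_of_lt (a := 1)] <;> omega
          · rw [Int.emod_eq_of_lt (a := 1)] <;> omega
        rw [this, ← List.cons_append, List.getD_append]
        exact g
      · have : ((i + 1) % N).toNat = 0 := by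
          have e1 : i + 1 = (i % N + 1) + N * (i / N) := by have := Int.emod_add_mul_ediv i N; omega
          have e2 : i % N + 1 = N := by omega
          rw [e1, e2, Int.add_mul_emod_self_left, Int.emod_self]; rfl
        rw [this, ← List.cons_append, List.getD_append_right _ _ _ _ (by rw [hlen]; omega)]
        have : (i % N).toNat + 1 - (x :: l).length = 0 := by rw [hlen]; omega
        rw [this]; rfl
    rw [e]; exact key
  · intro v
    constructor
    · rintro ⟨i, rfl⟩
      have := b1 i; have := b2 i
      show (x :: l).getD _ x ∈ _
      rw [gd _ (by omega)]
      exact List.getElem_mem _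
    · intro hv
      obtain ⟨k, hk, rfl⟩ := List.mem_iff_getElem.1 hv
      rw [hlen] at hk
      refine ⟨k, ?_⟩
      show (x :: l).getD _ x = _
      have : ((k : ℤ) % N).toNat = k := by
        rw [Int.emod_eq_of_lt] <;> omega
      rw [this, gd _ hk]
  · intro A v B hAB
    have hk : A.length < N := by rw [← hlen, hAB]; simp
    show (x :: l).getD _ x = v
    have : ((A.length : ℤ) % N).toNat = A.length := by
      rw [Int.emod_eq_of_lt] <;> omega
    rw [this, hAB]
    simp

theorem fchord_end (S : KS G) (hG : Good G) {i i' j j' : Fin 3} (hi : i ≠ i') (hj : j ≠ j') {p q : V}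
    (hp : p ∈ S.P i j) (hq : q ∈ S.P i' j') (h : G.Adj p q) : ∃ n, 3 ≤ n ∧
      (Nonempty (G ≃g mobiusLadder n) ∨ Nonempty (G ≃g squareCycle (2 * n + 1))) := by
  obtain ⟨σ, s1, s2⟩ := exists_perm2 hi
  obtain ⟨τ, t1, t2⟩ := exists_perm2 hj
  have hp' : p ∈ (S.perm σ τ).P 0 0 := by simpa [KS.perm, s1, t1] using hp
  have hq' : q ∈ (S.perm σ τ).P 1 1 := by simpa [KS.perm, s2, t2] using hq
  generalize S.perm σ τ = T at hp' hq'
  clear hp hq S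
  obtain ⟨e1, e2, e3⟩ := T.F4 hG (by decide) (by decide) hp' hq' h
  have e3 := e3 2 2 (by decide) (by decide) (by decide) (by decide)
  obtain ⟨A, B, hP⟩ := List.append_of_mem hp'
  obtain ⟨C, D, hQ⟩ := List.append_of_mem hq'
  have c00 := T.chain 0 0
  have c11 := T.chain 1 1
  have c10 := T.chain 1 0
  have c01 := T.chain 0 1
  have c22 := T.chain 2 2
  have c20 := T.chain 2 0
  have c21 := T.chain 2 1
  have c12 := T.chain 1 2
  have c02 := T.chain 0 2
  have sp := T.span9 hG
  rw [hP, Lk_append] at c00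
  rw [hQ, Lk_append] at c11
  rw [e1, Lk_nil] at c10
  rw [e2, Lk_nil] at c01
  rw [e3, Lk_nil] at c22
  simp only [e1, e2, e3, hP, hQ, List.count_append, count_cons_dl, List.count_nil] at sp
  generalize T.a 0 = a0 at *
  generalize T.a 1 = a1 at *
  generalize T.a 2 = a2 at *
  generalize T.b 0 = b0 at *
  generalize T.b 1 = b1 at *
  generalize T.b 2 = b2 at *
  generalize T.P 0 2 = X at *
  generalize T.P 1 2 = Y at *
  generalize T.P 2 0 = Z at *
  generalize T.P 2 1 = W at *
  clear e1 e2 e3 hP hQ hp' hq'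
  obtain ⟨H, h1, h2, h3, h4⟩ := cyc_of_list (G := G) a0 (A ++ p :: (B ++ b0 :: (Z.reverse ++ a2 :: (W ++ b1 :: (D.reverse ++ q :: (C.reverse ++ a1 :: (Y ++ b2 :: X.reverse)))))))
    (by
      intro v
      have := sp v
      simp only [List.count_append, List.count_reverse, count_cons_dl, List.count_nil] at *
      omega)
    (by
      simp only [Lk_append, Lk_reverse]
      exact ⟨c00.1, c00.2, c20, c21, c11.2, c11.1, c12, c02⟩)
  have ham : Ham G _ H := ⟨h1, h2, fun v => (h3 v).2 (by
    rw [← List.count_pos_iff]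
    have := sp v
    simp only [List.count_append, List.count_reverse, count_cons_dl, List.count_nil] at *
    omega)⟩
  have g0 := h4 [] a0 _ rfl
  have g1 := h4 (a0 :: A) p _ rfl
  have g2 := h4 (a0 :: (A ++ p :: B)) b0 _ (by simp only [List.cons_append, List.append_assoc]; rfl)
  have g3 := h4 (a0 :: (A ++ p :: (B ++ b0 :: Z.reverse))) a2 _ (by simp only [List.cons_append, List.append_assoc]; rfl)
  have g4 := h4 (a0 :: (A ++ p :: (B ++ b0 :: (Z.reverse ++ a2 :: W)))) b1 _ (by simp only [List.cons_append, List.append_assoc]; rfl)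
  have g5 := h4 (a0 :: (A ++ p :: (B ++ b0 :: (Z.reverse ++ a2 :: (W ++ b1 :: D.reverse))))) q _ (by simp only [List.cons_append, List.append_assoc]; rfl)
  have g6 := h4 (a0 :: (A ++ p :: (B ++ b0 :: (Z.reverse ++ a2 :: (W ++ b1 :: (D.reverse ++ q :: C.reverse)))))) a1 _ (by simp only [List.cons_append, List.append_assoc]; rfl)
  have g7 := h4 (a0 :: (A ++ p :: (B ++ b0 :: (Z.reverse ++ a2 :: (W ++ b1 :: (D.reverse ++ q :: (C.reverse ++ a1 :: Y))))))) b2 _ (by simp only [List.cons_append, List.append_assoc]; rfl)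
  refine caseA_end ham hG (X4.mk ?_ ?_ ?_ ?_ ?_ ?_ ?_ ?_ (g0 ▸ g4 ▸ c01) (g1 ▸ g5 ▸ h) (g2 ▸ g6 ▸ c10.symm) (g3 ▸ g7 ▸ c22)) <;>
    simp only [List.length_cons, List.length_append, List.length_nil, List.length_reverse] <;> push_cast <;> omega
end FChord

section CaseB
set_option linter.all false
variable {V : Type*} [DecidableEq V] {G : SimpleGraph V}

def NoF (G : SimpleGraph V) : Prop := ∀ S : KS G, ∀ i i' j j' : Fin 3, i ≠ i' → j ≠ j' →
  ∀ p ∈ S.P i j, ∀ q ∈ S.P i' j', ¬ G.Adj p q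

theorem dl_pos {v x : V} (h : dl v x ≠ 0) : v = x := by
  by_contra hc
  exact h (dl_ne (fun e => hc e.symm))

theorem KS.mem (S : KS G) (hG : Good G) (v : V) :
    (∃ i, v = S.a i) ∨ (∃ j, v = S.b j) ∨ ∃ i j, v ∈ S.P i j := by
  by_contra hc
  push Not at hc
  obtain ⟨h1, h2, h3⟩ := hc
  have h := S.span hG v
  have e1 : ∀ i, dl v (S.a i) = 0 := fun i => dl_ne (fun e => h1 i e.symm)
  have e2 : ∀ i, dl v (S.b i) = 0 := fun i => dl_ne (fun e => h2 i e.symm)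
  have e3 : ∀ i j, (S.P i j).count v = 0 := fun i j => List.count_eq_zero.2 (h3 i j)
  simp [e1, e2, e3] at h

theorem KS.nbr (S : KS G) (hG : Good G) (nf : NoF G) {i j : Fin 3} {A B : List V} {p w : V}
    (hP : S.P i j = A ++ p :: B) (h : G.Adj p w) :
    (∃ i', i ≠ i' ∧ w = S.a i') ∨ (∃ j', j ≠ j' ∧ w = S.b j') ∨ w = A.getLastD (S.a i) ∨
      w = B.headD (S.b j) := by
  have hp : p ∈ S.P i j := by rw [hP]; simp
  rcases S.mem hG w with ⟨i', rfl⟩ | ⟨j', rfl⟩ | ⟨i', j', hw⟩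
  · by_cases e : i = i'
    · subst e
      have := S.F1a hG i j hP h.symm
      subst this
      right; right; left; rfl
    · exact Or.inl ⟨i', e, rfl⟩
  · by_cases e : j = j'
    · subst e
      have := S.F1b hG i j hP h
      subst this
      right; right; right; rfl
    · exact Or.inr (Or.inl ⟨j', e, rfl⟩)
  · by_cases e : i = i'
    · subst e
      by_cases e' : j = j'
      · subst e'
        rw [hP] at hw
        simp only [List.mem_append, List.mem_cons] at hw
        rcases hw with hw | rfl | hw
        · obtain ⟨A1, A2, rfl⟩ := List.append_of_mem hw
          have := S.F1m hG i j (A := A1) (p := w) (M := A2) (q := p) (B := B) (by rw [hP]; simp) h.symm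
          subst this
          right; right; left; simp
        · exact absurd h (G.loopless.irrefl w)
        · obtain ⟨B1, B2, rfl⟩ := List.append_of_mem hw
          have := S.F1m hG i j (A := A) (p := p) (M := B1) (q := w) (B := B2) hP h
          subst this
          right; right; right; simp
      · exact absurd h (S.F2 hG e' hp hw)
    · by_cases e' : j = j'
      · subst e'
        exact absurd h (S.F2' hG e hp hw)
      · exact absurd h (nf S _ _ _ _ e e' p hp w hw)

theorem KS.T (S : KS G) (hG : Good G) (nf : NoF G) {i j : Fin 3} {B : List V} {p : V}
    (hP : S.P i j = p :: B) : ∃ i', i ≠ i' ∧ G.Adj p (S.a i') := by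
  by_contra hc
  push Not at hc
  have hp : p ∈ S.P i j := by rw [hP]; simp
  have hpa : G.Adj p (S.a i) := by have := S.chain i j; rw [hP] at this; exact this.1.symm
  have N := fun w => S.nbr hG nf (A := []) (w := w) hP
  obtain ⟨z, h1, h2, h3⟩ := hG.deg p (S.a i) (B.headD (S.b j))
  rcases N z h1 with ⟨i', e, rfl⟩ | ⟨j', e, rfl⟩ | g | g
  · exact hc i' e h1
  · have e0 := S.F3' hG e hp h1
    have hab := S.chain i j'
    rw [e0, Lk_nil] at hab
    obtain ⟨w, k1, k2, k3, k4⟩ := hG.tri p (S.a i) (S.b j') (B.headD (S.b j)) hpa h1 hab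
    rcases N w k1 with ⟨i', e, rfl⟩ | ⟨j'', e', rfl⟩ | g | g
    · exact hc i' e k1
    · exact S.F5' hG e e' (by rintro rfl; exact k3 rfl) hp hp h1 k1
    · exact k2 g
    · exact k4 g
  · exact h2 g
  · exact h3 g

theorem KS.T' (S : KS G) (hG : Good G) (nf : NoF G) {i j : Fin 3} {B : List V} {p : V}
    (hP : S.P i j = B ++ [p]) : ∃ j', j ≠ j' ∧ G.Adj p (S.b j') :=
  S.tr.T hG nf (i := j) (j := i) (B := B.reverse) (p := p) (by simp [KS.tr, hP])

theorem KS.shift_ex (S : KS G) {i i' i'' j : Fin 3} (h12 : i ≠ i') (h13 : i ≠ i'') (h23 : i' ≠ i'')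
    {A B : List V} {p : V} (hP : S.P i j = A ++ p :: B) (h : G.Adj p (S.a i')) :
    ∃ T : KS G, T.P i'' j = S.P i'' j ++ S.b j :: B.reverse ∧ ∀ k l, l ≠ j → T.P k l = S.P k l := by
  obtain ⟨σ, e1, e2, e3⟩ := exists_perm h12 h13 h23
  set R := S.perm σ (Equiv.swap 0 j) with hR
  have hP' : R.P 0 0 = A ++ p :: B := by simpa [hR, KS.perm, e1] using hP
  have h' : G.Adj p (R.a 1) := by simpa [hR, KS.perm, e2] using h
  have key : ∀ m n : Fin 3, n ≠ 0 → (R.shift0 hP' h').P m n = R.P m n := by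
    intro m n hn
    fin_cases m <;> fin_cases n <;> first | exact absurd rfl hn | rfl
  refine ⟨(R.shift0 hP' h').perm σ⁻¹ (Equiv.swap 0 j), ?_, ?_⟩
  · show (R.shift0 hP' h').P (σ⁻¹ i'') (Equiv.swap 0 j j) = _
    have : σ⁻¹ i'' = 2 := by rw [← e3]; simp
    rw [this, Equiv.swap_apply_right]
    show R.P 2 0 ++ R.b 0 :: B.reverse = _
    simp [hR, KS.perm, e3]
  · intro k l hl
    show (R.shift0 hP' h').P (σ⁻¹ k) (Equiv.swap 0 j l) = _
    rw [key]
    · simp [hR, KS.perm]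
    · intro e
      apply hl
      have := congrArg (Equiv.swap 0 j) e
      simpa using this

def KS.IsMax (S : KS G) : Prop := ∀ (T : KS G) i j, (T.P i j).length ≤ (S.P 0 0).length

theorem KS.IsMax.tr {S : KS G} (h : S.IsMax) : S.tr.IsMax := by
  intro T i j
  have := h T i j
  simpa [KS.tr] using this

theorem exists_max [Fintype V] (S0 : KS G) : ∃ S : KS G, S.IsMax := by
  have bd : ∀ (T : KS G) i j, (T.P i j).length ≤ Fintype.card V := by
    intro T i j
    refine List.Nodup.length_le_card (List.nodup_iff_count_le_one.2 fun v => ?_)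
    have := T.cnt v
    have h1 : (T.P i j).count v ≤ ∑ j, (T.P i j).count v :=
      Finset.single_le_sum (f := fun j => (T.P i j).count v) (fun _ _ => Nat.zero_le _) (Finset.mem_univ j)
    have h2 : ∑ j, (T.P i j).count v ≤ ∑ i, ∑ j, (T.P i j).count v :=
      Finset.single_le_sum (f := fun i => ∑ j, (T.P i j).count v) (fun _ _ => Nat.zero_le _) (Finset.mem_univ i)
    omega
  by_contra hc
  push Not at hc
  have : ∀ n : ℕ, ∃ T : KS G, n ≤ (T.P 0 0).length := by
    intro n
    induction n with
    | zero => exact ⟨S0, Nat.zero_le _⟩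
    | succ n ih =>
      obtain ⟨T, hT⟩ := ih
      have := hc T
      unfold KS.IsMax at this
      push Not at this
      obtain ⟨R, i, j, h⟩ := this
      refine ⟨R.perm (Equiv.swap 0 i) (Equiv.swap 0 j), ?_⟩
      simp only [KS.perm, Equiv.swap_apply_left]
      omega
  obtain ⟨T, hT⟩ := this (Fintype.card V + 1)
  have := bd T 0 0
  omega

theorem KS.IsMax.col {S : KS G} (h : S.IsMax) (hG : Good G) (nf : NoF G) {i : Fin 3} (hi : i ≠ 0) :
    S.P i 0 = [] := by
  rcases hP : S.P i 0 with _ | ⟨p, B⟩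
  · rfl
  exfalso
  obtain ⟨i', h1, h2⟩ := S.T hG nf hP
  by_cases e : i' = 0
  · subst e
    have e0 := S.F3 hG h1 (j := 0) (by rw [hP]; simp) h2
    have := h S i 0
    rw [hP, e0] at this
    simp at this
  · obtain ⟨T, t1, -⟩ := S.shift_ex h1 hi e (A := []) hP h2
    have := h T 0 0
    rw [t1] at this
    simp at this

theorem KS.IsMax.row {S : KS G} (h : S.IsMax) (hG : Good G) (nf : NoF G) {j : Fin 3} (hj : j ≠ 0) :
    S.P 0 j = [] := by
  have := h.tr.col hG nf hj
  simpa [KS.tr] using this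

theorem KS.IsMax.other {S : KS G} (h : S.IsMax) (hG : Good G) (nf : NoF G) {i j : Fin 3} (hi : i ≠ 0)
    (hj : j ≠ 0) : S.P i j = [] := by
  rcases List.eq_nil_or_concat (S.P i j) with hP | ⟨B, q, hP⟩
  · exact hP
  exfalso
  rw [List.concat_eq_append] at hP
  obtain ⟨j', h1, h2⟩ := S.T' hG nf hP
  have hq : q ∈ S.P i j := by rw [hP]; simp
  by_cases e : j' = 0
  · subst e
    rcases hP0 : S.P 0 0 with _ | ⟨p, B'⟩
    · have := h S i j
      rw [hP, hP0] at this
      simp at this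
    obtain ⟨x, x1, x2⟩ := S.T hG nf hP0
    obtain ⟨y, y1, y2⟩ := third 0 x
    obtain ⟨T, t1, t2⟩ := S.shift_ex x1 y1 y2 (A := []) hP0 x2
    have hb : S.b 0 ∈ T.P y 0 := by rw [t1]; simp
    have hq' : q ∈ T.P i j := by rw [t2 _ _ hj]; exact hq
    by_cases e : i = y
    · subst e
      exact T.F2 hG hj hq' hb h2
    · exact nf T _ _ _ _ e hj q hq' _ hb h2
  · obtain ⟨T, t1, t2⟩ := S.tr.shift_ex (i := j) (i' := j') (i'' := 0) (j := i) h1 hj e (A := []) (B := B.reverse) (p := q)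
      (by simp [KS.tr, hP]) h2
    have hT : T.tr.IsMax := by
      intro R k l
      have := h R k l
      simp only [KS.tr, t2 0 0 hi.symm]
      simpa using this
    have := hT.col hG nf hi
    simp [KS.tr, t1] at this

end CaseB

section Hub
set_option linter.all false
variable {V : Type*} [DecidableEq V] {G : SimpleGraph V}

structure Hub (G : SimpleGraph V) (N : ℕ) (H : ℤ → V) (u w : V) : Prop where
  inj : ∀ i j, H i = H j ↔ (N : ℤ) ∣ i - j
  adj : ∀ i, G.Adj (H i) (H (i + 1))
  chd : ∀ i j, G.Adj (H i) (H j) → H j = H (i + 1) ∨ H j = H (i - 1)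
  uw : G.Adj u w
  nu : ∀ i, H i ≠ u
  nw : ∀ i, H i ≠ w
  span : ∀ v, v = u ∨ v = w ∨ ∃ i, H i = v
  four : 4 ≤ N

variable {N : ℕ} {H : ℤ → V} {u w : V}

theorem Hub.symm (h : Hub G N H u w) : Hub G N H w u :=
  ⟨h.inj, h.adj, h.chd, h.uw.symm, h.nw, h.nu, fun v => by rcases h.span v with g | g | g; exacts [Or.inr (Or.inl g), Or.inl g, Or.inr (Or.inr g)], h.four⟩

theorem Hub.deg (h : Hub G N H u w) (hG : Good G) (i : ℤ) : G.Adj (H i) u ∨ G.Adj (H i) w := by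
  obtain ⟨z, h1, h2, h3⟩ := hG.deg (H i) (H (i + 1)) (H (i - 1))
  rcases h.span z with rfl | rfl | ⟨j, rfl⟩
  · exact Or.inl h1
  · exact Or.inr h1
  · rcases h.chd _ _ h1 with g | g
    · exact absurd g h2
    · exact absurd g h3

theorem Hub.up (h : Hub G N H u w) (hG : Good G) (i : ℤ) (h1 : G.Adj (H i) u) (h2 : G.Adj (H (i + 1)) u) :
    G.Adj (H i) w ∧ G.Adj (H (i + 1)) w := by
  constructor
  · obtain ⟨z, k1, k2, k3, k4⟩ := hG.tri (H i) (H (i + 1)) u (H (i - 1)) (h.adj i) h1 h2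
    rcases h.span z with rfl | rfl | ⟨j, rfl⟩
    · exact absurd rfl k3
    · exact k1
    · rcases h.chd _ _ k1 with g | g
      · exact absurd g k2
      · exact absurd g k4
  · obtain ⟨z, k1, k2, k3, k4⟩ := hG.tri (H (i + 1)) (H i) u (H (i + 1 + 1)) (h.adj i).symm h2 h1
    rcases h.span z with rfl | rfl | ⟨j, rfl⟩
    · exact absurd rfl k3
    · exact k1
    · rcases h.chd _ _ k1 with g | g
      · exact absurd g k4
      · rw [add_sub_cancel_right] at g
        exact absurd g k2

theorem Hub.per (h : Hub G N H u w) (i : ℤ) : H (i + N) = H i := (h.inj _ _).2 (by simp)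

def hubMap (N : ℕ) (H : ℤ → V) (u w : V) : Fin N ⊕ Fin 2 → V
  | .inl i => H (i.val : ℤ)
  | .inr k => if k = 0 then u else w

theorem Hub.bij (h : Hub G N H u w) : Function.Bijective (hubMap N H u w) := by
  have h4 := h.four
  constructor
  · rintro (i | i) (j | j) e
    · have := (h.inj _ _).1 e
      have h1 := (mod_iff N j.val i.val 0 i.2).2 (by simpa using this)
      rw [add_zero, Nat.mod_eq_of_lt j.2] at h1
      rw [Fin.ext h1]
    · exfalso
      have n1 := h.nu i.val; have n2 := h.nw i.val
      simp only [hubMap] at e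
      split_ifs at e
      exacts [n1 e, n2 e]
    · exfalso
      have n1 := h.nu j.val; have n2 := h.nw j.val
      simp only [hubMap] at e
      split_ifs at e
      exacts [n1 e.symm, n2 e.symm]
    · have := h.uw.ne
      have := h.uw.ne.symm
      fin_cases i <;> fin_cases j <;> simp_all [hubMap]
  · intro v
    rcases h.span v with rfl | rfl | ⟨i, rfl⟩
    · exact ⟨.inr 0, rfl⟩
    · exact ⟨.inr 1, rfl⟩
    · have h2 := Int.emod_nonneg i (b := N) (by omega)
      have h3 := Int.emod_lt_of_pos i (b := N) (by omega)
      refine ⟨.inl ⟨(i % N).toNat, by omega⟩, ?_⟩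
      show H (((i % N).toNat : ℕ) : ℤ) = H i
      rw [Int.toNat_of_nonneg h2, h.inj]
      exact Int.dvd_emod_sub_self

theorem Hub.rim (h : Hub G N H u w) (i j : ℤ) : G.Adj (H i) (H j) ↔ ((N : ℤ) ∣ j - i - 1 ∨ (N : ℤ) ∣ i - j - 1) := by
  constructor
  · intro g
    rcases h.chd _ _ g with g | g
    · left; have := (h.inj _ _).1 g; rwa [← sub_sub] at this
    · right
      obtain ⟨k, hk⟩ := (h.inj _ _).1 g
      exact ⟨-k, by rw [mul_neg, ← hk]; ring⟩
  · rintro (g | g)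
    · have : H j = H (i + 1) := (h.inj _ _).2 (by rwa [← sub_sub])
      rw [this]; exact h.adj i
    · have : H i = H (j + 1) := (h.inj _ _).2 (by rwa [← sub_sub])
      rw [this]; exact (h.adj j).symm

theorem Hub.fin (h : Hub G N H u w) (hG : Good G) : ∃ n, 3 ≤ n ∧
      (Nonempty (G ≃g mobiusLadder n) ∨
       Nonempty (G ≃g doubleWheel n) ∨ Nonempty (G ≃g altDoubleWheel n)) := by
  have h4 := h.four
  by_cases hb : ∃ i, G.Adj (H i) u ∧ G.Adj (H i) w
  · obtain ⟨i0, hi0⟩ := hb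
    have all : ∀ i, G.Adj (H i) u ∧ G.Adj (H i) w := by
      refine Ham.all (N := N) (Q := fun i => G.Adj (H i) u ∧ G.Adj (H i) w) (by omega) i0 hi0 ?_ ?_
      · intro i hi
        rcases h.deg hG (i + 1) with g | g
        · exact ⟨g, (h.up hG i hi.1 g).2⟩
        · exact ⟨(h.symm.up hG i hi.2 g).2, g⟩
      · intro i; rw [h.per]; exact id
    refine ⟨N, by omega, Or.inr (Or.inl (iso_of_bij _ h.bij ?_))⟩
    have a1 := fun i => (all i).1
    have a2 := fun i => (all i).2
    have a3 := fun i => (all i).1.symm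
    have a4 := fun i => (all i).2.symm
    have a5 := h.uw
    have a6 := h.uw.symm
    rintro (i | i) (j | j) hij
    · unfold doubleWheel
      rw [fromRel_adj]
      simp only [hubMap, h.rim]
      rw [mod_iff _ _ _ _ j.2, mod_iff _ _ _ _ i.2]
      simp only [ne_eq, hij, not_false_eq_true, true_and, Nat.cast_one]
    · unfold doubleWheel
      rw [fromRel_adj]
      fin_cases j <;> simp [hubMap, a1, a2]
    · unfold doubleWheel
      rw [fromRel_adj]
      fin_cases i <;> simp [hubMap, a3, a4]
    · unfold doubleWheel
      rw [fromRel_adj]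
      fin_cases i <;> fin_cases j <;> simp_all [hubMap]
  · push Not at hb
    have key : ∀ u w, Hub G N H u w → (∀ i, G.Adj (H i) u → ¬ G.Adj (H i) w) → G.Adj (H 0) u → ∃ n, 3 ≤ n ∧
      (Nonempty (G ≃g mobiusLadder n) ∨
       Nonempty (G ≃g doubleWheel n) ∨ Nonempty (G ≃g altDoubleWheel n)) := by
      clear hb h
      intro u w h hb h0
      have alt : ∀ k : ℕ, (G.Adj (H (k : ℤ)) u ↔ k % 2 = 0) ∧ (G.Adj (H (k : ℤ)) w ↔ k % 2 = 1) := by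
        have st : ∀ k : ℕ, (G.Adj (H (k : ℤ)) u ↔ k % 2 = 0) := by
          intro k
          induction k with
          | zero => simpa using h0
          | succ k ih =>
            push_cast
            have : G.Adj (H ((k : ℤ) + 1)) u ↔ ¬ G.Adj (H k) u := by
              constructor
              · intro g1 g2
                exact hb _ g2 (h.up hG _ g2 g1).1
              · intro g1
                have g2 := (h.deg hG k).resolve_left g1
                refine (h.deg hG _).resolve_right fun g3 => ?_
                exact g1 (h.symm.up hG _ g2 g3).1
            rw [this, ih]; omega
        intro k
        refine ⟨st k, ?_⟩
        have : G.Adj (H k) w ↔ ¬ G.Adj (H k) u :=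
          ⟨fun g1 g2 => hb _ g2 g1, fun g => (h.deg hG _).resolve_left g⟩
        rw [this, st]; omega
      have hev : N % 2 = 0 := by
        rw [← (alt N).1]
        have := h.per 0
        rw [zero_add] at this
        rwa [this]
      obtain ⟨n, rfl⟩ : ∃ n, N = 2 * n := ⟨N / 2, by omega⟩
      by_cases hn : n = 2
      · subst hn
        refine ⟨3, le_rfl, Or.inl ?_⟩
        have bj := h.bij
        let g : Fin (2 * 3) → Fin (2 * 2) ⊕ Fin 2 := ![.inl 0, .inl 1, .inl 2, .inl 3, .inr 1, .inr 0]
        have hg : Function.Bijective g := by decide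
        refine iso_of_bij _ (bj.comp hg) ?_
        have u0 := (alt 0).1; have u1 := (alt 1).1; have u2 := (alt 2).1; have u3 := (alt 3).1
        have w0 := (alt 0).2; have w1 := (alt 1).2; have w2 := (alt 2).2; have w3 := (alt 3).2
        have r01 := h.rim 0 1; have r02 := h.rim 0 2; have r03 := h.rim 0 3
        have r12 := h.rim 1 2; have r13 := h.rim 1 3; have r23 := h.rim 2 3
        have huw := h.uw
        norm_num at u0 u1 u2 u3 w0 w1 w2 w3 r01 r02 r03 r12 r13 r23
        have sy : ∀ x y, G.Adj x y ↔ G.Adj y x := fun x y => G.adj_comm x y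
        intro i j hij
        unfold mobiusLadder
        rw [fromRel_adj]
        fin_cases i <;> fin_cases j <;> first | exact absurd rfl hij | (simp [g, hubMap]; first | assumption | (rw [sy]; assumption))
      · refine ⟨n, by omega, Or.inr (Or.inr (iso_of_bij _ h.bij ?_))⟩
        have a5 := h.uw
        have a6 := h.uw.symm
        have alt' : ∀ k : ℕ, (G.Adj u (H (k : ℤ)) ↔ k % 2 = 0) ∧ (G.Adj w (H (k : ℤ)) ↔ k % 2 = 1) := by
          intro k; rw [G.adj_comm, G.adj_comm w]; exact alt k
        rintro (i | i) (j | j) hij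
        · unfold altDoubleWheel
          rw [fromRel_adj]
          simp only [hubMap, h.rim]
          rw [mod_iff _ _ _ _ j.2, mod_iff _ _ _ _ i.2]
          simp only [ne_eq, hij, not_false_eq_true, true_and, Nat.cast_one]
        · unfold altDoubleWheel
          rw [fromRel_adj]
          fin_cases j <;> simp [hubMap, alt]
        · unfold altDoubleWheel
          rw [fromRel_adj]
          fin_cases i <;> simp [hubMap, alt']
        · unfold altDoubleWheel
          rw [fromRel_adj]
          fin_cases i <;> fin_cases j <;> simp_all [hubMap]
    rcases h.deg hG 0 with g | g
    · exact key u w h hb g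
    · exact key w u h.symm (fun i h1 h2 => hb i h2 h1) g
end Hub

section CaseB2
set_option linter.all false
variable {V : Type*} [DecidableEq V] {G : SimpleGraph V}

theorem split_len : ∀ {l : List V} {k : ℕ} (h : k < l.length), ∃ A v B, l = A ++ v :: B ∧ A.length = k
  | v :: l, 0, h => ⟨[], v, l, rfl, rfl⟩
  | v :: l, k + 1, h => by
    obtain ⟨A, x, B, e, e'⟩ := split_len (l := l) (k := k) (by simpa using h)
    exact ⟨v :: A, x, B, by rw [e]; rfl, by simp [e']⟩

theorem chd_of_list {x : V} {l : List V} {H : ℤ → V}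
    (h1 : ∀ i j, H i = H j ↔ ((l.length + 1 : ℕ) : ℤ) ∣ i - j)
    (h4 : ∀ A v B, x :: l = A ++ v :: B → H A.length = v)
    (hl : ∀ A v M v' B, x :: l = A ++ v :: (M ++ v' :: B) → G.Adj v v' → M = [] ∨ (A = [] ∧ B = [])) :
    ∀ i j, G.Adj (H i) (H j) → H j = H (i + 1) ∨ H j = H (i - 1) := by
  set N : ℕ := l.length + 1 with hN
  have key : ∀ s t : ℕ, s < t → t < N → G.Adj (H s) (H t) → t = s + 1 ∨ (s = 0 ∧ t + 1 = N) := by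
    intro s t hst htN hadj
    obtain ⟨A, v, C, e, rfl⟩ := split_len (l := x :: l) (k := s) (by simp; omega)
    have hlen := congrArg List.length e
    simp at hlen
    obtain ⟨M, v', B, rfl, e'⟩ := split_len (l := C) (k := t - A.length - 1) (by omega)
    have g1 := h4 _ _ _ e
    have g2 := h4 (A ++ v :: M) v' B (by rw [e]; simp)
    have e2 : (A ++ v :: M).length = t := by simp; omega
    rw [e2] at g2
    rw [g1, g2] at hadj
    simp at hlen
    rcases hl _ _ _ _ _ e hadj with rfl | ⟨rfl, rfl⟩
    · left; simp at e'; omega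
    · right; simp at *; omega
  intro i j hadj
  have b1 := Int.emod_nonneg i (b := N) (by omega)
  have b2 := Int.emod_lt_of_pos i (b := N) (by omega)
  have b3 := Int.emod_nonneg j (b := N) (by omega)
  have b4 := Int.emod_lt_of_pos j (b := N) (by omega)
  have d1 := Int.emod_add_mul_ediv i N
  have d2 := Int.emod_add_mul_ediv j N
  have e1 : H i = H (((i % N).toNat : ℕ) : ℤ) := by
    rw [Int.toNat_of_nonneg b1, h1]; exact Int.dvd_self_sub_emod
  have e2 : H j = H (((j % N).toNat : ℕ) : ℤ) := by
    rw [Int.toNat_of_nonneg b3, h1]; exact Int.dvd_self_sub_emod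
  rw [e1, e2] at hadj
  rcases lt_trichotomy (i % N).toNat (j % N).toNat with g | g | g
  · rcases key _ _ g (by omega) hadj with g | g
    · left; rw [h1]
      refine ⟨j / N - i / N, ?_⟩
      rw [mul_sub]; omega
    · right; rw [h1]
      refine ⟨j / N - i / N + 1, ?_⟩
      rw [mul_add, mul_sub, mul_one]; omega
  · rw [g] at hadj; exact absurd hadj (G.loopless.irrefl _)
  · rcases key _ _ g (by omega) hadj.symm with g | g
    · right; rw [h1]
      refine ⟨j / N - i / N, ?_⟩
      rw [mul_sub]; omega
    · left; rw [h1]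
      refine ⟨j / N - i / N - 1, ?_⟩
      rw [mul_sub, mul_sub, mul_one]; omega

def KS.Only (S : KS G) : Prop := ∀ i j : Fin 3, (i ≠ 0 ∨ j ≠ 0) → S.P i j = []

theorem KS.path_ind (S : KS G) (hG : Good G) {A M B : List V} {x y : V}
    (e : S.a 0 :: (S.P 0 0 ++ [S.b 0]) = A ++ x :: (M ++ y :: B)) (h : G.Adj x y) : M = [] := by
  rcases A with _ | ⟨z, A⟩
  · simp only [List.nil_append, List.cons.injEq] at e
    obtain ⟨rfl, e⟩ := e
    rcases List.eq_nil_or_concat B with rfl | ⟨B', z, rfl⟩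
    · obtain ⟨e1, e2⟩ := List.append_inj' e rfl
      simp only [List.cons.injEq, and_true] at e2
      subst e2
      rw [← e1]; exact S.F1ab hG 0 0 h
    · have e' : S.P 0 0 ++ [S.b 0] = (M ++ y :: B') ++ [z] := by rw [e]; simp
      obtain ⟨e1, e2⟩ := List.append_inj' e' rfl
      exact S.F1a hG 0 0 e1 h
  · simp only [List.cons_append, List.cons.injEq] at e
    obtain ⟨rfl, e⟩ := e
    rcases List.eq_nil_or_concat B with rfl | ⟨B', z, rfl⟩
    · have e' : S.P 0 0 ++ [S.b 0] = (A ++ x :: M) ++ [y] := by rw [e]; simp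
      obtain ⟨e1, e2⟩ := List.append_inj' e' rfl
      simp only [List.cons.injEq, and_true] at e2
      subst e2
      exact S.F1b hG 0 0 e1 h
    · have e' : S.P 0 0 ++ [S.b 0] = (A ++ x :: (M ++ y :: B')) ++ [z] := by rw [e]; simp
      obtain ⟨e1, e2⟩ := List.append_inj' e' rfl
      exact S.F1m hG 0 0 e1 h

theorem KS.hub (S : KS G) (hG : Good G) (h0 : S.Only) (ha : ¬ G.Adj (S.a 0) (S.a 2))
    (hb : ¬ G.Adj (S.b 0) (S.b 2)) (hp : ∀ p ∈ S.P 0 0, ¬ G.Adj p (S.a 2) ∧ ¬ G.Adj p (S.b 2)) :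
    ∃ n, 3 ≤ n ∧ (Nonempty (G ≃g mobiusLadder n) ∨
       Nonempty (G ≃g doubleWheel n) ∨ Nonempty (G ≃g altDoubleWheel n)) := by
  have c := S.chain
  have sp := S.span9 hG
  have L : ∀ i j : Fin 3, (i ≠ 0 ∨ j ≠ 0) → G.Adj (S.a i) (S.b j) := by
    intro i j hij
    have := c i j; rwa [h0 i j hij, Lk_nil] at this
  simp only [h0 0 1 (by decide), h0 0 2 (by decide), h0 1 0 (by decide), h0 1 1 (by decide), h0 1 2 (by decide),
    h0 2 0 (by decide), h0 2 1 (by decide), h0 2 2 (by decide), List.count_nil] at sp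
  obtain ⟨H, h1, h2, h3, h4⟩ := cyc_of_list (G := G) (S.a 0) (S.P 0 0 ++ S.b 0 :: [S.a 2, S.b 2])
    (by
      intro v
      have := sp v
      simp only [List.count_append, count_cons_dl, List.count_nil] at *
      omega)
    (by
      simp only [Lk_append, Lk_cons, Lk_nil]
      exact ⟨c 0 0, (L 2 0 (by decide)).symm, L 2 2 (by decide), (L 0 2 (by decide)).symm⟩)
  have chd := chd_of_list (G := G) h1 h4 (by
    intro A x M y B e hadj
    rcases List.eq_nil_or_concat B with rfl | ⟨B, z, rfl⟩
    · rcases List.eq_nil_or_concat M with rfl | ⟨M, z, rfl⟩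
      · exact Or.inl rfl
      have e' : (S.a 0 :: (S.P 0 0 ++ [S.b 0])) ++ [S.a 2, S.b 2] = (A ++ x :: M) ++ [z, y] := by
        simp only [List.cons_append, List.append_assoc, List.nil_append, List.concat_eq_append] at *; exact e
      obtain ⟨e1, e2⟩ := List.append_inj' e' rfl
      simp only [List.cons.injEq, and_true] at e2
      obtain ⟨rfl, rfl⟩ := e2
      rcases A with _ | ⟨_, A⟩
      · exact Or.inr ⟨rfl, rfl⟩
      simp only [List.cons_append, List.cons.injEq] at e1
      obtain ⟨-, e1⟩ := e1
      exfalso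
      rcases List.eq_nil_or_concat M with rfl | ⟨M, z, rfl⟩
      · obtain ⟨-, e2⟩ := List.append_inj' e1 rfl
        simp only [List.cons.injEq, and_true] at e2
        subst e2
        exact hb hadj
      · have e1' : S.P 0 0 ++ [S.b 0] = (A ++ x :: M) ++ [z] := by rw [e1]; simp
        obtain ⟨e2, -⟩ := List.append_inj' e1' rfl
        exact (hp x (by rw [e2]; simp)).2 hadj
    · left
      rcases List.eq_nil_or_concat B with rfl | ⟨B, z', rfl⟩
      · rcases List.eq_nil_or_concat M with rfl | ⟨M, z', rfl⟩
        · rfl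
        exfalso
        have e' : (S.a 0 :: S.P 0 0) ++ [S.b 0, S.a 2, S.b 2] = (A ++ x :: M) ++ [z', y, z] := by
          simp only [List.cons_append, List.append_assoc, List.nil_append, List.concat_eq_append] at *; exact e
        obtain ⟨e1, e2⟩ := List.append_inj' e' rfl
        simp only [List.cons.injEq, and_true] at e2
        obtain ⟨-, rfl, -⟩ := e2
        rcases A with _ | ⟨_, A⟩
        · simp only [List.nil_append, List.cons.injEq] at e1
          rw [← e1.1] at hadj
          exact ha hadj
        · simp only [List.cons_append, List.cons.injEq] at e1
          exact (hp x (by rw [e1.2]; simp)).1 hadj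
      · have e' : (S.a 0 :: (S.P 0 0 ++ [S.b 0])) ++ [S.a 2, S.b 2] = (A ++ x :: (M ++ y :: B)) ++ [z', z] := by
          simp only [List.cons_append, List.append_assoc, List.nil_append, List.concat_eq_append] at *; exact e
        obtain ⟨e1, -⟩ := List.append_inj' e' rfl
        exact S.path_ind hG e1 hadj)
  refine Hub.fin (N := _) (H := H) (u := S.a 1) (w := S.b 1) ⟨h1, h2, chd, L 1 1 (by decide), ?_, ?_, ?_, ?_⟩ hG
  · intro i e
    have := (h3 _).1 ⟨i, e⟩
    rw [← List.count_pos_iff] at this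
    have := sp (S.a 1)
    simp only [List.count_append, count_cons_dl, List.count_nil, dl_self] at *
    omega
  · intro i e
    have := (h3 _).1 ⟨i, e⟩
    rw [← List.count_pos_iff] at this
    have := sp (S.b 1)
    simp only [List.count_append, count_cons_dl, List.count_nil, dl_self] at *
    omega
  · intro v
    by_cases g1 : v = S.a 1
    · exact Or.inl g1
    by_cases g2 : v = S.b 1
    · exact Or.inr (Or.inl g2)
    right; right
    rw [h3, ← List.count_pos_iff]
    have := sp v
    rw [dl_ne (fun e => g1 e.symm), dl_ne (fun e => g2 e.symm)] at this
    simp only [List.count_append, count_cons_dl, List.count_nil] at *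
    omega
  · simp
end CaseB2

section CaseB3
set_option linter.all false
variable {V : Type*} [DecidableEq V] {G : SimpleGraph V}

theorem minor_sub {W : Type*} [Fintype W] {r : W → W → Prop} (f : W → V) (hcnt : ∀ v, ∑ w, dl v (f w) ≤ 1)
    (hadj : ∀ w w', w ≠ w' → r w w' → G.Adj (f w) (f w')) : IsMinor (SimpleGraph.fromRel r) G := by
  refine minor_fromRel (fun w => [f w]) (fun w => connL_singleton _) ?_ ?_
  · intro v
    simpa [count_cons_dl] using hcnt v
  · intro w w' h1 h2
    exact ⟨f w, by simp, f w', by simp, hadj w w' h1 h2⟩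

theorem KS.no_tri (S : KS G) (hG : Good G) (h0 : ∀ i j, S.P i j = []) (h : ∀ i j, i ≠ j → G.Adj (S.a i) (S.a j)) : False := by
  have L : ∀ i j, G.Adj (S.a i) (S.b j) := by
    intro i j
    have := S.chain i j; rwa [h0, Lk_nil] at this
  obtain ⟨w, k1, k2, k3, k4⟩ := hG.tri (S.b 0) (S.a 0) (S.a 1) (S.a 2) (L _ _).symm (L _ _).symm (h _ _ (by decide))
  have : ∃ j, 0 ≠ j ∧ w = S.b j := by
    rcases S.mem hG w with ⟨i, rfl⟩ | ⟨j, rfl⟩ | ⟨i, j, hw⟩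
    · fin_cases i
      · exact absurd rfl k2
      · exact absurd rfl k3
      · exact absurd rfl k4
    · exact ⟨j, by rintro rfl; exact G.loopless.irrefl _ k1, rfl⟩
    · rw [h0] at hw; simp at hw
  obtain ⟨j, hj, rfl⟩ := this
  obtain ⟨k, hk1, hk2⟩ := third 0 j
  obtain ⟨τ, t0, t1, t2⟩ := exists_perm hj hk1 hk2
  apply hG.nK5p
  unfold K5plus
  have sp := (S.perm 1 τ).cnt9
  simp only [KS.perm, t0, t1, t2, h0, List.count_nil, Equiv.Perm.coe_one, id] at sp
  let f : Option (Fin 5) → V := fun w => match w with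
    | some i => ![S.a 0, S.a 1, S.a 2, S.b 0, S.b j] i
    | none => S.b k
  refine minor_sub f ?_ ?_
  · intro v
    have := sp v
    simp [f, Fin.sum_univ_five] 
    omega
  · have a01 := h 0 1 (by decide)
    have a02 := h 0 2 (by decide)
    have a12 := h 1 2 (by decide)
    have a01' := a01.symm
    have a02' := a02.symm
    have a12' := a12.symm
    have k1' := k1.symm
    have L' := fun i j => (L i j).symm
    rintro (_ | i) (_ | i') hne hr
    · exact absurd rfl hne
    · simp only at hr
      subst hr
      exact L' 0 k
    · exact absurd hr (by simp)
    · clear sp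
      fin_cases i <;> fin_cases i' <;> first | exact absurd rfl hr | (simp only [f]; first | assumption | exact L _ _ | exact L' _ _)

theorem KS.empty_case (S : KS G) (hG : Good G) (h0 : ∀ i j, S.P i j = []) :
    ∃ n, 3 ≤ n ∧ (Nonempty (G ≃g mobiusLadder n) ∨
       Nonempty (G ≃g doubleWheel n) ∨ Nonempty (G ≃g altDoubleWheel n)) := by
  by_cases ha : ∀ i j, i ≠ j → G.Adj (S.a i) (S.a j)
  · exact (S.no_tri hG h0 ha).elim
  by_cases hb : ∀ i j, i ≠ j → G.Adj (S.b i) (S.b j)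
  · exact (S.tr.no_tri hG (by simp [KS.tr, h0]) hb).elim
  push Not at ha hb
  obtain ⟨i, i', hi, ha⟩ := ha
  obtain ⟨j, j', hj, hb⟩ := hb
  obtain ⟨k, k1, k2⟩ := third i i'
  obtain ⟨l, l1, l2⟩ := third j j'
  obtain ⟨σ, s0, s1, s2⟩ := exists_perm k1 hi k2.symm
  obtain ⟨τ, t0, t1, t2⟩ := exists_perm l1 hj l2.symm
  refine (S.perm σ τ).hub hG (fun _ _ _ => h0 _ _) ?_ ?_ ?_
  · simpa [KS.perm, s0, s2] using ha
  · simpa [KS.perm, t0, t2] using hb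
  · intro p hp
    simp [KS.perm, h0] at hp

structure KS.Q (S : KS G) : Prop where
  only : S.Only
  ne : S.P 0 0 ≠ []
  hp : ∀ p ∈ S.P 0 0, ¬ G.Adj p (S.a 2) ∧ ¬ G.Adj p (S.b 2)
  hf : ∀ p B, S.P 0 0 = p :: B → G.Adj p (S.a 1)
  hl : ∀ B p, S.P 0 0 = B ++ [p] → G.Adj p (S.b 1)

theorem KS.Q.tr {S : KS G} (q : S.Q) : S.tr.Q := by
  refine ⟨?_, ?_, ?_, ?_, ?_⟩
  · intro i j h
    simp [KS.tr, q.only j i h.symm]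
  · simpa [KS.tr] using q.ne
  · intro p hp
    have := q.hp p (by simpa [KS.tr] using hp)
    exact this.symm
  · intro p B h
    refine q.hl B.reverse p ?_
    have := congrArg List.reverse h
    simpa [KS.tr] using this
  · intro B p h
    refine q.hf p B.reverse ?_
    have := congrArg List.reverse h
    simpa [KS.tr] using this

theorem KS.Q.L {S : KS G} (q : S.Q) (i j : Fin 3) (hij : i ≠ 0 ∨ j ≠ 0) : G.Adj (S.a i) (S.b j) := by
  have := S.chain i j; rwa [q.only i j hij, Lk_nil] at this

theorem KS.Q.sp {S : KS G} (q : S.Q) (hG : Good G) (v : V) : dl v (S.a 0) + dl v (S.a 1) + dl v (S.a 2) +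
    (dl v (S.b 0) + dl v (S.b 1) + dl v (S.b 2)) + (S.P 0 0).count v = 1 := by
  have sp := S.span9 hG v
  have h0 := q.only
  simp only [h0 0 1 (by decide), h0 0 2 (by decide), h0 1 0 (by decide), h0 1 1 (by decide), h0 1 2 (by decide),
    h0 2 0 (by decide), h0 2 1 (by decide), h0 2 2 (by decide), List.count_nil] at sp
  omega

theorem KS.Q.len {S : KS G} (q : S.Q) (hG : Good G) (ha : G.Adj (S.a 0) (S.a 2)) : ∃ p, S.P 0 0 = [p] := by
  rcases hP : S.P 0 0 with _ | ⟨p, B⟩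
  · exact absurd hP q.ne
  rcases List.eq_nil_or_concat B with rfl | ⟨M, z, rfl⟩
  · exact ⟨p, rfl⟩
  exfalso
  rw [List.concat_eq_append] at hP
  have L := q.L
  have c := S.chain 0 0
  rw [hP, Lk_cons, Lk_append] at c
  have sp := q.sp hG
  simp only [hP, count_cons_dl, List.count_append, List.count_nil] at sp
  have := span_flat hG (a0 := S.a 0) (a1 := S.a 1) (a2 := z) (b0 := S.b 0) (b1 := S.b 1) (b2 := p)
    (p00 := [S.a 2]) (p01 := []) (p02 := []) (p10 := []) (p11 := []) (p12 := []) (p20 := []) (p21 := []) (p22 := M.reverse)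
    ⟨ha, L 2 0 (by decide)⟩ (L 0 1 (by decide)) c.1 (L 1 0 (by decide)) (L 1 1 (by decide)) (q.hf _ _ hP).symm
    c.2.2 (q.hl (p :: M) z (by rw [hP]; rfl)) (Lk_reverse.2 c.2.1) (by
      intro v
      have := sp v
      simp only [List.count_reverse, count_cons_dl, List.count_nil]
      omega) (S.b 2)
  have := sp (S.b 2)
  simp only [List.count_reverse, count_cons_dl, List.count_nil, dl_self] at *
  omega

theorem KS.Q.mem {S : KS G} (q : S.Q) (hG : Good G) {p : V} (hP : S.P 0 0 = [p]) (w : V) :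
    w = S.a 0 ∨ w = S.a 1 ∨ w = S.a 2 ∨ w = S.b 0 ∨ w = S.b 1 ∨ w = S.b 2 ∨ w = p := by
  by_contra hc
  push Not at hc
  obtain ⟨h1, h2, h3, h4, h5, h6, h7⟩ := hc
  have := q.sp hG w
  rw [hP, count_cons_dl, dl_ne h1.symm, dl_ne h2.symm, dl_ne h3.symm, dl_ne h4.symm, dl_ne h5.symm, dl_ne h6.symm, dl_ne h7.symm] at this
  simp at this

theorem KS.Q.b {S : KS G} (q : S.Q) (hG : Good G) (ha : G.Adj (S.a 0) (S.a 2)) :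
    ¬ G.Adj (S.b 1) (S.b 2) ∧ G.Adj (S.b 0) (S.b 2) := by
  obtain ⟨p, hP⟩ := q.len hG ha
  have L := q.L
  have c := S.chain 0 0
  rw [hP, Lk_cons, Lk_nil] at c
  have sp := q.sp hG
  simp only [hP, count_cons_dl, List.count_nil] at sp
  have p1 := q.hf _ _ hP
  have p2 := q.hl [] p hP
  have p3 := q.hp p (by rw [hP]; simp)
  have no : ¬ G.Adj (S.b 1) (S.b 2) := by
    intro hbb
    apply hG.nK5h
    unfold K5h
    let f : Fin 5 ⊕ Fin 2 → V := fun w => match w with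
      | .inl i => ![p, S.a 2, S.b 2, S.a 0, S.b 1] i
      | .inr i => ![S.b 0, S.a 1] i
    have e1 := L 0 1 (by decide)
    have e2 := L 0 2 (by decide)
    have e3 := L 1 0 (by decide)
    have e4 := L 1 1 (by decide)
    have e5 := L 1 2 (by decide)
    have e6 := L 2 0 (by decide)
    have e7 := L 2 1 (by decide)
    have e8 := L 2 2 (by decide)
    have c1 := c.1
    have c2 := c.2
    refine minor_sub f ?_ ?_
    · intro v
      have := sp v
      simp [f, Fin.sum_univ_five, Fin.sum_univ_two]
      omega
    · clear sp c L
      rintro (i | i) (j | j) hne hr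
      · fin_cases i <;> fin_cases j <;> first | exact absurd hr (by decide) | (simp only [f]; first | assumption | (apply SimpleGraph.Adj.symm; assumption))
      · fin_cases i <;> fin_cases j <;> first | exact absurd hr (by decide) | (simp only [f]; first | assumption | (apply SimpleGraph.Adj.symm; assumption))
      · exact hr.elim
      · fin_cases i <;> fin_cases j <;> first | exact absurd rfl hne | (simp only [f]; first | assumption | (apply SimpleGraph.Adj.symm; assumption))
  refine ⟨no, ?_⟩
  obtain ⟨w, k1, k2, k3, k4⟩ := hG.tri (S.b 2) (S.a 0) (S.a 2) (S.a 1) (L _ _ (by decide)).symm (L _ _ (by decide)).symm ha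
  rcases q.mem hG hP w with rfl | rfl | rfl | rfl | rfl | rfl | rfl
  · exact absurd rfl k2
  · exact absurd rfl k4
  · exact absurd rfl k3
  · exact k1.symm
  · exact absurd k1.symm no
  · exact absurd k1 (G.loopless.irrefl _)
  · exact absurd k1.symm p3.2

theorem KS.Q.c {S : KS G} (q : S.Q) (hG : Good G) (ha : G.Adj (S.a 0) (S.a 2)) : ¬ G.Adj (S.a 0) (S.a 1) := by
  intro h
  obtain ⟨p, hP⟩ := q.len hG ha
  have L := q.L
  have c := S.chain 0 0
  rw [hP, Lk_cons, Lk_nil] at c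
  have sp := q.sp hG
  simp only [hP, count_cons_dl, List.count_nil] at sp
  have p1 := q.hf _ _ hP
  have p2 := q.hl [] p hP
  have := span_flat hG (a0 := S.a 0) (a1 := S.b 0) (a2 := S.b 1) (b0 := S.a 1) (b1 := S.a 2) (b2 := p)
    (p00 := []) (p01 := []) (p02 := []) (p10 := []) (p11 := []) (p12 := []) (p20 := []) (p21 := []) (p22 := [])
    h ha c.1 (L 1 0 (by decide)).symm (L 2 0 (by decide)).symm c.2.symm
    (L 1 1 (by decide)).symm (L 2 1 (by decide)).symm p2.symm (by
      intro v
      have := sp v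
      simp only [List.count_reverse, count_cons_dl, List.count_nil]
      omega) (S.b 2)
  have := sp (S.b 2)
  simp only [List.count_reverse, count_cons_dl, List.count_nil, dl_self] at *
  omega

theorem KS.Q.seven {S : KS G} (q : S.Q) (hG : Good G) (ha : G.Adj (S.a 0) (S.a 2)) :
    Nonempty (G ≃g squareCycle (2 * 3 + 1)) := by
  obtain ⟨p, hP⟩ := q.len hG ha
  have n1 := (q.b hG ha).1
  have hb := (q.b hG ha).2
  have n2 : ¬ G.Adj (S.a 1) (S.a 2) := (q.tr.b hG hb).1
  have n3 := q.c hG ha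
  have n4 : ¬ G.Adj (S.b 0) (S.b 1) := q.tr.c hG hb
  have n5 : ¬ G.Adj (S.a 0) (S.b 0) := fun h => q.ne (S.F1ab hG 0 0 h)
  have n6 := (q.hp p (by rw [hP]; simp)).1
  have n7 := (q.hp p (by rw [hP]; simp)).2
  have e1 := q.L 0 1 (by decide)
  have e2 := q.L 0 2 (by decide)
  have e3 := q.L 1 0 (by decide)
  have e4 := q.L 1 1 (by decide)
  have e5 := q.L 1 2 (by decide)
  have e6 := q.L 2 0 (by decide)
  have e7 := q.L 2 1 (by decide)
  have e8 := q.L 2 2 (by decide)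
  have c := S.chain 0 0
  rw [hP, Lk_cons, Lk_nil] at c
  obtain ⟨c1, c2⟩ := c
  have p1 := q.hf _ _ hP
  have p2 := q.hl [] p hP
  have sp := q.sp hG
  simp only [hP, count_cons_dl, List.count_nil] at sp
  have mem := q.mem hG hP
  have sy : ∀ x y, G.Adj x y ↔ G.Adj y x := fun x y => G.adj_comm x y
  let f : Fin (2 * 3 + 1) → V := ![S.a 0, S.a 2, S.b 2, S.b 0, S.a 1, p, S.b 1]
  refine iso_of_bij f ⟨?_, ?_⟩ ?_
  · intro i j e
    by_contra hne
    have s : ∀ v, ∑ k, dl v (f k) = 1 := by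
      intro v
      have := sp v
      simp [Fin.sum_univ_succ, f]
      omega
    have s := s (f i)
    have : ∑ k ∈ {i, j}, dl (f i) (f k) ≤ ∑ k, dl (f i) (f k) :=
      Finset.sum_le_sum_of_subset (Finset.subset_univ _)
    rw [Finset.sum_pair hne, ← e, dl_self] at this
    omega
  · intro w
    rcases mem w with h | h | h | h | h | h | h
    exacts [⟨0, h.symm⟩, ⟨4, h.symm⟩, ⟨1, h.symm⟩, ⟨3, h.symm⟩, ⟨6, h.symm⟩, ⟨2, h.symm⟩, ⟨5, h.symm⟩]
  · clear sp mem hP q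
    intro i j hij
    unfold squareCycle
    rw [fromRel_adj]
    fin_cases i <;> fin_cases j <;> first | exact absurd rfl hij | (simp [f]; first | assumption | (rw [sy]; assumption))

theorem caseB [Fintype V] (hG : Good G) (nf : NoF G) (S0 : KS G) : ∃ n, 3 ≤ n ∧
      (Nonempty (G ≃g mobiusLadder n) ∨ Nonempty (G ≃g squareCycle (2 * n + 1)) ∨
       Nonempty (G ≃g doubleWheel n) ∨ Nonempty (G ≃g altDoubleWheel n)) := by
  obtain ⟨S, hS⟩ := exists_max S0
  have h0 : S.Only := by
    intro i j h
    by_cases hi : i = 0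
    · subst hi
      exact hS.row hG nf (by rcases h with h | h; exact absurd rfl h; exact h)
    · by_cases hj : j = 0
      · subst hj
        exact hS.col hG nf hi
      · exact hS.other hG nf hi hj
  have fin : (∃ n, 3 ≤ n ∧ (Nonempty (G ≃g mobiusLadder n) ∨
       Nonempty (G ≃g doubleWheel n) ∨ Nonempty (G ≃g altDoubleWheel n))) → ∃ n, 3 ≤ n ∧
      (Nonempty (G ≃g mobiusLadder n) ∨ Nonempty (G ≃g squareCycle (2 * n + 1)) ∨
       Nonempty (G ≃g doubleWheel n) ∨ Nonempty (G ≃g altDoubleWheel n)) := by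
    rintro ⟨n, hn, h | h⟩
    · exact ⟨n, hn, Or.inl h⟩
    · exact ⟨n, hn, Or.inr (Or.inr h)⟩
  rcases hP : S.P 0 0 with _ | ⟨p, B⟩
  · apply fin
    refine S.empty_case hG fun i j => ?_
    by_cases h : i ≠ 0 ∨ j ≠ 0
    · exact h0 i j h
    · push Not at h
      rw [h.1, h.2, hP]
  · obtain ⟨x, x1, x2⟩ := S.T hG nf hP
    obtain ⟨y, y1, y2⟩ := third 0 x
    obtain ⟨σ, s0, s1, s2⟩ := exists_perm x1 y1 y2
    obtain ⟨C, z, hP'⟩ := (List.eq_nil_or_concat (S.P 0 0)).resolve_left (by rw [hP]; simp)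
    rw [List.concat_eq_append] at hP'
    obtain ⟨k, k1, k2⟩ := S.T' hG nf hP'
    obtain ⟨l, l1, l2⟩ := third 0 k
    obtain ⟨τ, t0, t1, t2⟩ := exists_perm k1 l1 l2
    have hp : p ∈ S.P 0 0 := by rw [hP]; simp
    have hz : z ∈ S.P 0 0 := by rw [hP']; simp
    have q : (S.perm σ τ).Q := by
      refine ⟨?_, ?_, ?_, ?_, ?_⟩
      · intro i j h
        refine h0 _ _ ?_
        rcases h with h | h
        · left; intro e; exact h (σ.injective (e.trans s0.symm))
        · right; intro e; exact h (τ.injective (e.trans t0.symm))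
      · simp [KS.perm, s0, t0, hP]
      · intro v hv
        simp only [KS.perm, s0, t0, s2, t2] at hv ⊢
        exact ⟨fun h => S.F5 hG x1 y1 y2 hp hv x2 h, fun h => S.F5' hG k1 l1 l2 hz hv k2 h⟩
      · intro v D h
        simp only [KS.perm, s0, t0, s1, hP, List.cons.injEq] at h ⊢
        rw [← h.1]; exact x2
      · intro D v h
        simp only [KS.perm, s0, t0, t1, hP'] at h ⊢
        have := (List.append_inj' h rfl).2
        simp only [List.cons.injEq, and_true] at this
        rw [← this]; exact k2
    by_cases ha : G.Adj ((S.perm σ τ).a 0) ((S.perm σ τ).a 2)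
    · exact ⟨3, le_rfl, Or.inr (Or.inl (q.seven hG ha))⟩
    by_cases hb : G.Adj ((S.perm σ τ).b 0) ((S.perm σ τ).b 2)
    · exact ⟨3, le_rfl, Or.inr (Or.inl (q.tr.seven hG hb))⟩
    exact fin ((S.perm σ τ).hub hG q.only ha hb q.hp)

end CaseB3

/-- An internally 4-connected nonplanar {K5+, K33+, K5h, K33h}-free graph is
`M_n`, `C²_{2n+1}`, `DW_n`, or `AW_{2n}` for some `n ≥ 3`. -/
theorem stmt10 {V : Type} [Fintype V] (G : SimpleGraph V)
    (h4 : InternallyFourConnected G) (hnp : ¬ Planar G)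
    (hfree : ¬ IsMinor K5plus G ∧ ¬ IsMinor K33plus G ∧ ¬ IsMinor K5h G ∧ ¬ IsMinor K33h G) :
    ∃ n, 3 ≤ n ∧
      (Nonempty (G ≃g mobiusLadder n) ∨ Nonempty (G ≃g squareCycle (2 * n + 1)) ∨
       Nonempty (G ≃g doubleWheel n) ∨ Nonempty (G ≃g altDoubleWheel n)) := by
  classical
  have hG : Good G := good_of_i4c G h4 hfree
  by_cases hK : IsMinor K33 G
  · obtain ⟨S0⟩ := exists_KS hK
    by_cases nf : NoF G
    · exact caseB hG nf S0
    · unfold NoF at nf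
      push Not at nf
      obtain ⟨S, i, i', j, j', hi, hj, p, hp, q, hq, h⟩ := nf
      obtain ⟨n, hn, g | g⟩ := fchord_end S hG hi hj hp hq h
      · exact ⟨n, hn, Or.inl g⟩
      · exact ⟨n, hn, Or.inr (Or.inl g)⟩
  · have h5 : IsMinor K5 G := by
      by_contra h
      exact hnp ⟨h, hK⟩
    exact ⟨3, le_rfl, Or.inr (Or.inr (Or.inl (k5_case hG hK h5)))⟩
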